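/- arXiv:1702.00092 — 4 statements merged into one kernel-verified Lean document; each statement's English description precedes it below -/
import Mathlib

section
/- Let K be a number field of degree n with r₁ real places (r₁ > 0), and let E_{K,4}⁺ denote the group of totally positive units ε ∈ E_K whose image in O_{K,2}ˣ lies in (1 + 4O_{K,2})·O_{K,2}ˣ² (i.e., ε is congruent to a square modulo 4 at every prime above 2). Then dim_{F₂}(E_{K,4}⁺/E_K²) ≥ dim_{F₂}(E_K⁺/E_K²) − ⌊n/2⌋, where E_K⁺ is the group of totally positive units of K. -/
open NumberField
open scoped TensorProduct

variable (K : Type*) [Field K] [NumberField K]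

/-- `O_{K,2} = O_K ⊗_ℤ ℤ₂`. -/
def OK2 : Type _ := 𝓞 K ⊗[ℤ] ℤ_[2]

noncomputable instance : CommRing (OK2 K) := inferInstanceAs (CommRing (𝓞 K ⊗[ℤ] ℤ_[2]))

/-- The canonical ring homomorphism `O_K → O_{K,2} = O_K ⊗_ℤ ℤ₂`. -/
noncomputable def iota : 𝓞 K →+* OK2 K := Algebra.TensorProduct.includeLeftRingHom

attribute [irreducible] OK2

/-- The subgroup `(1 + 4·O_{K,2})·O_{K,2}ˣ²` of `O_{K,2}ˣ`: units congruent to a square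
modulo `4`. -/
def modFourSquares : Subgroup (OK2 K)ˣ where
  carrier := {w : (OK2 K)ˣ | ∃ (a : OK2 K) (y : (OK2 K)ˣ),
    (w : OK2 K) = (1 + 4 * a) * (y : OK2 K) ^ 2}
  one_mem' := ⟨0, 1, by rw [Units.val_one]; ring⟩
  mul_mem' := by
    rintro w₁ w₂ ⟨a₁, y₁, h₁⟩ ⟨a₂, y₂, h₂⟩
    refine ⟨a₁ + a₂ + 4 * (a₁ * a₂), y₁ * y₂, ?_⟩
    rw [Units.val_mul, Units.val_mul, h₁, h₂]
    ring
  inv_mem' := by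
    rintro w ⟨a, y, h⟩
    have hww : (w : OK2 K) * ((w⁻¹ : (OK2 K)ˣ) : OK2 K) = 1 := w.mul_inv
    have hyy : (y : OK2 K) * ((y⁻¹ : (OK2 K)ˣ) : OK2 K) = 1 := y.mul_inv
    set e : OK2 K := ((w⁻¹ : (OK2 K)ˣ) : OK2 K) * (y : OK2 K) ^ 2 with he
    have h1 : (1 + 4 * a) * e = 1 := by
      calc (1 + 4 * a) * e
          = ((1 + 4 * a) * (y : OK2 K) ^ 2) * ((w⁻¹ : (OK2 K)ˣ) : OK2 K) := by
            rw [he]; ring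
        _ = (w : OK2 K) * ((w⁻¹ : (OK2 K)ˣ) : OK2 K) := by rw [← h]
        _ = 1 := hww
    have h2 : (1 : OK2 K) + 4 * (-(a * e)) = e := by linear_combination -h1
    refine ⟨-(a * e), y⁻¹, ?_⟩
    rw [h2, he]
    calc ((w⁻¹ : (OK2 K)ˣ) : OK2 K)
        = ((w⁻¹ : (OK2 K)ˣ) : OK2 K) *
            ((y : OK2 K) * ((y⁻¹ : (OK2 K)ˣ) : OK2 K)) ^ 2 := by rw [hyy]; ring
      _ = ((w⁻¹ : (OK2 K)ˣ) : OK2 K) * (y : OK2 K) ^ 2 *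
            ((y⁻¹ : (OK2 K)ˣ) : OK2 K) ^ 2 := by ring

/-- The group `E_K⁺` of totally positive units of `K`. -/
def totPosUnits : Subgroup (𝓞 K)ˣ where
  carrier := {ε : (𝓞 K)ˣ | ∀ φ : K →+* ℝ, 0 < φ (algebraMap (𝓞 K) K ε)}
  one_mem' := fun φ => by simp
  mul_mem' := by
    intro x y hx hy φ
    rw [Units.val_mul, _root_.map_mul, _root_.map_mul]
    exact mul_pos (hx φ) (hy φ)
  inv_mem' := by
    intro x hx φ
    have h : φ (algebraMap (𝓞 K) K ↑x) * φ (algebraMap (𝓞 K) K ↑x⁻¹) = 1 := by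
      rw [← _root_.map_mul, ← _root_.map_mul, Units.mul_inv, _root_.map_one, _root_.map_one]
    nlinarith [hx φ]

/-- The group `E_{K,4}⁺` of totally positive units of `K` that are congruent to a square
modulo `4` in `O_{K,2}`. -/
noncomputable def unitsFourPlus : Subgroup (𝓞 K)ˣ :=
  totPosUnits K ⊓ (modFourSquares K).comap (Units.map (iota K).toMonoidHom)

section GaussOne
open Complex Real Filter Topology

/-- The common phase of the one dimensional Gauss sums. -/
noncomputable def gaussOmega : ℂ := 1 / (-I : ℂ) ^ (1 / 2 : ℂ)

lemma cpow_pos_mul (r : ℝ) (hr : 0 < r) (z : ℂ) (hz : z ≠ 0) (s : ℂ) :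
    ((r : ℂ) * z) ^ s = (r : ℂ) ^ s * z ^ s := by
  have hr' : (r : ℂ) ≠ 0 := by exact_mod_cast hr.ne'
  rw [Complex.cpow_def_of_ne_zero (mul_ne_zero hr' hz), Complex.cpow_def_of_ne_zero hr',
    Complex.cpow_def_of_ne_zero hz, Complex.log_ofReal_mul hr hz, ← Complex.exp_add,
    Complex.ofReal_log hr.le]
  ring_nf

lemma cpow_half_pos (r : ℝ) (hr : 0 < r) : (r : ℂ) ^ (1 / 2 : ℂ) = ((Real.sqrt r : ℝ) : ℂ) := by
  rw [Real.sqrt_eq_rpow, Complex.ofReal_cpow hr.le]; norm_num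

lemma gauss_exp_period (N : ℕ) (hN : 0 < N) (he : Even N) (k m : ℤ) :
    cexp (π * I * ((m * N + k : ℤ) : ℂ) ^ 2 / N) = cexp (π * I * (k : ℂ) ^ 2 / N) := by
  obtain ⟨a, ha⟩ := he
  have hN' : (N : ℂ) ≠ 0 := by exact_mod_cast hN.ne'
  rw [Complex.exp_eq_exp_iff_exists_int]
  refine ⟨m * k + m ^ 2 * a, ?_⟩
  have : (N : ℂ) = 2 * a := by rw [ha]; push_cast; ring
  have h2 : (a : ℂ) ≠ 0 := by intro h; apply hN'; rw [this, h]; ring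
  push_cast
  rw [this]
  field_simp
  ring

lemma theta_split (N : ℕ) (hN : 0 < N) (he : Even N) (t : ℝ) (ht : 0 < t) :
    (Real.sqrt t : ℂ) * jacobiTheta (1 / N + I * t) =
      ∑ k : Fin N, cexp (π * I * ((k : ℕ) : ℂ) ^ 2 / N) * (1 / N) *
        (HurwitzZeta.cosKernel (((k : ℕ) / (N : ℝ) : ℝ) : UnitAddCircle) (1 / (N ^ 2 * t)) : ℂ) := by
  haveI : NeZero N := ⟨hN.ne'⟩
  have hN' : (N : ℂ) ≠ 0 := by exact_mod_cast hN.ne'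
  have hNr : (0 : ℝ) < N := by exact_mod_cast hN
  have him : 0 < (1 / N + I * t : ℂ).im := by
    have : ((1 : ℂ) / N).im = 0 := by
      rw [show ((1 : ℂ) / N) = ((1 / N : ℝ) : ℂ) by push_cast; rfl]; exact Complex.ofReal_im _
    rw [Complex.add_im, this]; simp [ht]
  have hs : HasSum (fun n : ℤ => cexp (π * I * (n : ℂ) ^ 2 * (1 / N + I * t)))
      (jacobiTheta (1 / N + I * t)) := by
    have := hasSum_jacobiTheta₂_term 0 him
    rw [← jacobiTheta_eq_jacobiTheta₂] at this
    simpa [jacobiTheta₂_term] using this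
  have hs2 := ((Int.divModEquiv N).symm.hasSum_iff).mpr hs
  have hfib : ∀ k : Fin N, HasSum (fun m : ℤ =>
      cexp (π * I * (((Int.divModEquiv N).symm (m, k) : ℤ) : ℂ) ^ 2 * (1 / N + I * t)))
      (cexp (π * I * ((k : ℕ) : ℂ) ^ 2 / N) *
        (HurwitzZeta.evenKernel (((k : ℕ) / (N : ℝ) : ℝ) : UnitAddCircle) (N ^ 2 * t) : ℂ)) := by
    intro k
    have h1 := HurwitzZeta.hasSum_int_evenKernel ((k : ℕ) / (N : ℝ)) (t := N ^ 2 * t) (by positivity)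
    have h2 := (Complex.hasSum_ofReal.mpr h1).mul_left (cexp (π * I * ((k : ℕ) : ℂ) ^ 2 / N))
    have he2 : (fun m : ℤ =>
      cexp (π * I * (((Int.divModEquiv N).symm (m, k) : ℤ) : ℂ) ^ 2 * (1 / N + I * t))) =
      fun m : ℤ => cexp (π * I * ((k : ℕ) : ℂ) ^ 2 / N) *
        ((rexp (-π * (m + (k : ℕ) / (N : ℝ)) ^ 2 * (N ^ 2 * t)) : ℝ) : ℂ) := by
      funext m
      have h3 := gauss_exp_period N hN he ((k : ℕ) : ℤ) m
      have h4 : (Int.divModEquiv N).symm (m, k) = m * N + ((k : ℕ) : ℤ) := rfl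
      rw [h4, mul_add, Complex.exp_add]
      congr 1
      · rw [mul_one_div, h3]; norm_cast
      · rw [Complex.ofReal_exp]
        congr 1
        push_cast
        field_simp
        ring_nf
        rw [Complex.I_sq]
        ring
    rw [he2]
    exact h2
  have hs3 := ((Equiv.prodComm (Fin N) ℤ).hasSum_iff).mpr hs2
  have hs4 := HasSum.prod_fiberwise hs3 hfib
  rw [← hs4.unique (hasSum_fintype _) |>.symm, Finset.mul_sum]
  refine Finset.sum_congr rfl fun k _ => ?_
  rw [HurwitzZeta.evenKernel_functional_equation]
  have h5 : ((N : ℝ) ^ 2 * t) ^ (1 / 2 : ℝ) = N * Real.sqrt t := by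
    rw [← Real.sqrt_eq_rpow, Real.sqrt_mul (by positivity), Real.sqrt_sq hNr.le]
  rw [h5]
  have h6 : (Real.sqrt t : ℂ) ≠ 0 := by
    exact_mod_cast (Real.sqrt_pos.mpr ht).ne'
  push_cast
  field_simp

lemma cosKernel_tendsto (a : UnitAddCircle) :
    Tendsto (HurwitzZeta.cosKernel a) atTop (𝓝 1) := by
  obtain ⟨p, hp, h⟩ := HurwitzZeta.isBigO_atTop_cosKernel_sub a
  have h2 : Tendsto (fun x : ℝ => Real.exp (-p * x)) atTop (𝓝 0) := by
    refine Real.tendsto_exp_atBot.comp ?_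
    exact tendsto_id.const_mul_atTop_of_neg (by linarith)
  have := (h.trans_tendsto h2).add_const 1
  simpa using this

lemma theta_lim_left (N : ℕ) (hN : 0 < N) (he : Even N) :
    Tendsto (fun t : ℝ => (Real.sqrt t : ℂ) * jacobiTheta (1 / N + I * t)) (𝓝[>] 0)
      (𝓝 (∑ k : Fin N, cexp (π * I * ((k : ℕ) : ℂ) ^ 2 / N) * (1 / N))) := by
  have hNr : (0 : ℝ) < N := by exact_mod_cast hN
  have h1 : Tendsto (fun t : ℝ => 1 / ((N : ℝ) ^ 2 * t)) (𝓝[>] 0) atTop := by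
    have := (tendsto_inv_nhdsGT_zero (𝕜 := ℝ)).const_mul_atTop (r := ((N : ℝ) ^ 2)⁻¹) (by positivity)
    refine this.congr fun t => ?_
    rw [one_div, mul_inv]
  have h2 : Tendsto (fun t : ℝ => ∑ k : Fin N, cexp (π * I * ((k : ℕ) : ℂ) ^ 2 / N) * (1 / N) *
        (HurwitzZeta.cosKernel (((k : ℕ) / (N : ℝ) : ℝ) : UnitAddCircle) (1 / (N ^ 2 * t)) : ℂ))
      (𝓝[>] 0) (𝓝 (∑ k : Fin N, cexp (π * I * ((k : ℕ) : ℂ) ^ 2 / N) * (1 / N) * ((1 : ℝ) : ℂ))) := by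
    refine tendsto_finsetSum _ fun k _ => ?_
    refine Tendsto.const_mul _ ?_
    exact (Complex.continuous_ofReal.tendsto _).comp ((cosKernel_tendsto _).comp h1)
  simp only [Complex.ofReal_one, mul_one] at h2
  refine h2.congr' ?_
  filter_upwards [self_mem_nhdsWithin] with t ht
  exact (theta_split N hN he t ht).symm

lemma jacobiTheta_fe (τ : ℂ) : jacobiTheta τ = 1 / (-I * τ) ^ (1 / 2 : ℂ) * jacobiTheta (-1 / τ) := by
  have := jacobiTheta₂_functional_equation 0 τ
  simpa [jacobiTheta_eq_jacobiTheta₂] using this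

lemma jacobiTheta_add_even (τ : ℂ) (a : ℕ) : jacobiTheta (τ + 2 * a) = jacobiTheta τ := by
  induction a with
  | zero => simp
  | succ a ih =>
    rw [← ih, ← jacobiTheta_two_add (τ + 2 * a)]
    congr 1; push_cast; ring

lemma theta_lim_right (N : ℕ) (hN : 0 < N) (he : Even N) :
    Tendsto (fun t : ℝ => (Real.sqrt t : ℂ) * jacobiTheta (1 / N + I * t)) (𝓝[>] 0)
      (𝓝 (1 / (-I * (1 / N : ℂ)) ^ (1 / 2 : ℂ) * (1 / ((N : ℂ) * N) ^ (1 / 2 : ℂ)))) := by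
  have hNr : (0 : ℝ) < N := by exact_mod_cast hN
  have hN' : (N : ℂ) ≠ 0 := by exact_mod_cast hN.ne'
  have hτ : Tendsto (fun t : ℝ => (1 / N + I * t : ℂ)) (𝓝[>] 0) (𝓝 (1 / N : ℂ)) := by
    have : Continuous (fun t : ℝ => (1 / N + I * t : ℂ)) := by fun_prop
    have := (this.tendsto 0).mono_left (nhdsWithin_le_nhds (s := Set.Ioi 0))
    simpa using this
  have h1 : Tendsto (fun t : ℝ => 1 / (-I * (1 / N + I * t : ℂ)) ^ (1 / 2 : ℂ)) (𝓝[>] 0)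
      (𝓝 (1 / (-I * (1 / N : ℂ)) ^ (1 / 2 : ℂ))) := by
    refine Tendsto.div tendsto_const_nhds ?_ ?_
    · refine Tendsto.cpow (hτ.const_mul _) tendsto_const_nhds ?_
      right
      have : (-I * (1 / N : ℂ)) = ((1 / N : ℝ) : ℂ) * (-I) := by push_cast; ring
      rw [this, Complex.im_ofReal_mul]
      simp [hN.ne']
    · rw [Ne, Complex.cpow_eq_zero_iff]
      simp [hN.ne']
  have h2 : Tendsto (fun t : ℝ => 1 / ((N : ℂ) / (1 / N + I * t : ℂ)) ^ (1 / 2 : ℂ)) (𝓝[>] 0)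
      (𝓝 (1 / ((N : ℂ) * N) ^ (1 / 2 : ℂ))) := by
    refine Tendsto.div tendsto_const_nhds ?_ ?_
    · have h3 : Tendsto (fun t : ℝ => ((N : ℂ) / (1 / N + I * t : ℂ))) (𝓝[>] 0) (𝓝 ((N : ℂ) * N)) := by
        have := (tendsto_const_nhds (x := (N : ℂ))).div hτ (by simpa using hN.ne')
        refine (this.congr fun t => rfl).trans ?_
        simp
      refine Tendsto.cpow h3 tendsto_const_nhds ?_
      left
      have : ((N : ℂ) * N) = ((N * N : ℝ) : ℂ) := by push_cast; rfl
      rw [this, Complex.ofReal_re]; positivity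
    · rw [Ne, Complex.cpow_eq_zero_iff]
      simp [hN.ne']
  have h3 : Tendsto (fun t : ℝ => jacobiTheta (I * (1 / N + I * t : ℂ) / (N * t))) (𝓝[>] 0) (𝓝 1) := by
    have himt : ∀ t : ℝ, 0 < t → (I * (1 / N + I * t : ℂ) / (N * t)).im = 1 / ((N : ℝ) ^ 2 * t) := by
      intro t ht
      have ht' : (t : ℂ) ≠ 0 := by exact_mod_cast ht.ne'
      have : (I * (1 / N + I * t : ℂ) / (N * t)) =
          ((- (1 / N) : ℝ) : ℂ) + ((1 / ((N : ℝ) ^ 2 * t) : ℝ) : ℂ) * I := by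
        push_cast
        field_simp
        ring_nf
        rw [Complex.I_sq]
        ring
      rw [this, Complex.add_im, Complex.ofReal_im, Complex.im_ofReal_mul]
      simp
    have h4 : Tendsto (fun t : ℝ => (I * (1 / N + I * t : ℂ) / (N * t))) (𝓝[>] 0) (comap im atTop) := by
      rw [tendsto_comap_iff]
      have h1 : Tendsto (fun t : ℝ => 1 / ((N : ℝ) ^ 2 * t)) (𝓝[>] 0) atTop := by
        have := (tendsto_inv_nhdsGT_zero (𝕜 := ℝ)).const_mul_atTop (r := ((N : ℝ) ^ 2)⁻¹)
          (by positivity)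
        refine this.congr fun t => ?_
        rw [one_div, mul_inv]
      refine h1.congr' ?_
      filter_upwards [self_mem_nhdsWithin] with t ht
      exact (himt t ht).symm
    have h5 : Tendsto (fun τ : ℂ => rexp (-π * τ.im)) (comap im atTop) (𝓝 0) := by
      refine Real.tendsto_exp_atBot.comp ?_
      exact (tendsto_comap (f := im)).const_mul_atTop_of_neg (by linarith [Real.pi_pos])
    have h6 := (isBigO_at_im_infty_jacobiTheta_sub_one.trans_tendsto h5).add_const 1
    simp only [sub_add_cancel, zero_add] at h6
    exact h6.comp h4
  have h7 := (h1.mul h2).mul h3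
  rw [mul_one] at h7
  refine h7.congr' ?_
  filter_upwards [self_mem_nhdsWithin] with t ht
  have ht0 : (0 : ℝ) < t := ht
  have ht' : (t : ℂ) ≠ 0 := by exact_mod_cast ht0.ne'
  have hst : (Real.sqrt t : ℂ) ≠ 0 := by
    exact_mod_cast (Real.sqrt_pos.mpr ht0).ne'
  set τ : ℂ := 1 / N + I * t with hτd
  have hτ0 : τ ≠ 0 := by
    intro h
    have := congrArg Complex.im h
    have h8 : ((1 : ℂ) / N).im = 0 := by
      rw [show ((1 : ℂ) / N) = ((1 / N : ℝ) : ℂ) by push_cast; rfl]; exact Complex.ofReal_im _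
    rw [hτd, Complex.add_im, h8] at this
    simp at this
    exact ht0.ne' this
  obtain ⟨a, ha⟩ := he
  have hN2 : (N : ℂ) = 2 * a := by rw [ha]; push_cast; ring
  have e1 : jacobiTheta (-1 / τ) = jacobiTheta (I * N * t / τ) := by
    rw [← jacobiTheta_add_even _ a, ← hN2]
    congr 1
    field_simp
    rw [hτd]
    field_simp
    ring
  have e2 : jacobiTheta (I * N * t / τ) = 1 / ((t : ℂ) * (N / τ)) ^ (1 / 2 : ℂ) *
      jacobiTheta (I * τ / (N * t)) := by
    have f1 : -I * (I * N * t / τ) = (t : ℂ) * (N / τ) := by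
      have := Complex.I_mul_I
      linear_combination (-(N * t / τ : ℂ)) * this
    have f2 : -1 / (I * N * t / τ) = I * τ / (N * t) := by
      field_simp
      rw [Complex.I_sq]
    rw [jacobiTheta_fe, f1, f2]
  rw [jacobiTheta_fe τ, e1, e2, cpow_pos_mul t ht0 _ (div_ne_zero hN' hτ0), cpow_half_pos t ht0]
  field_simp

/-- The quadratic Gauss sum for an even modulus has the phase `gaussOmega`. -/
theorem gauss_one_pos (N : ℕ) (hN : 0 < N) (he : Even N) :
    ∃ r : ℝ, 0 < r ∧ ∑ k : Fin N, cexp (π * I * ((k : ℕ) : ℂ) ^ 2 / N) = r * gaussOmega := by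
  have hNr : (0 : ℝ) < N := by exact_mod_cast hN
  have hN' : (N : ℂ) ≠ 0 := by exact_mod_cast hN.ne'
  have h := tendsto_nhds_unique (theta_lim_left N hN he) (theta_lim_right N hN he)
  have e1 : (-I * (1 / N : ℂ)) ^ (1 / 2 : ℂ) = ((Real.sqrt (1 / N) : ℝ) : ℂ) * (-I) ^ (1 / 2 : ℂ) := by
    rw [← cpow_half_pos _ (by positivity), ← cpow_pos_mul _ (by positivity) _ (by simp)]
    congr 1
    push_cast; ring
  have e2 : ((N : ℂ) * N) ^ (1 / 2 : ℂ) = ((N : ℝ) : ℂ) := by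
    rw [show (N : ℂ) * N = ((N * N : ℝ) : ℂ) by push_cast; rfl, cpow_half_pos _ (by positivity),
      Real.sqrt_mul_self hNr.le]
  rw [← Finset.sum_mul, e1, e2] at h
  refine ⟨1 / Real.sqrt (1 / N), by positivity, ?_⟩
  rw [gaussOmega]
  have h6 : ((Real.sqrt (1 / N) : ℝ) : ℂ) ≠ 0 := by
    exact_mod_cast (Real.sqrt_pos.mpr (by positivity : (0 : ℝ) < 1 / N)).ne'
  have h7 : (-I : ℂ) ^ (1 / 2 : ℂ) ≠ 0 := by
    rw [Ne, Complex.cpow_eq_zero_iff]; simp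
  rw [one_div ((-I : ℂ) ^ (1 / 2 : ℂ))] 
  have h8 : (∑ k : Fin N, cexp (π * I * ((k : ℕ) : ℂ) ^ 2 / N)) = 
     (∑ k : Fin N, cexp (π * I * ((k : ℕ) : ℂ) ^ 2 / N)) * (1 / N) * N := by field_simp
  rw [h8, h]
  push_cast
  field_simp

lemma gaussOmega_ne_zero : gaussOmega ≠ 0 := by
  rw [gaussOmega]
  refine div_ne_zero one_ne_zero ?_
  rw [Ne, Complex.cpow_eq_zero_iff]; simp

end GaussOne

section FiniteRings
open Finset

/-- The quadratic Gauss sum attached to an additive character. -/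
noncomputable def gsum {R : Type*} [CommRing R] [Fintype R] (ψ : AddChar R ℂ) (u : R) : ℂ :=
  ∑ x : R, ψ (u * x ^ 2)

/-- Primitivity of an additive character, elementwise. -/
def IsPrim {R : Type*} [CommRing R] (ψ : AddChar R ℂ) : Prop :=
  ∀ s : R, (∀ t : R, ψ (t * s) = 1) → s = 0

lemma addChar_norm_one {A : Type*} [AddCommGroup A] [Finite A] (ψ : AddChar A ℂ) (a : A) :
    (starRingEnd ℂ) (ψ a) = ψ (-a) := by
  rw [AddChar.map_neg_eq_conj]

lemma gsum_mul_sq {R : Type*} [CommRing R] [Fintype R] (ψ : AddChar R ℂ) (u : R) (g : Rˣ) :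
    gsum ψ (u * (g : R) ^ 2) = gsum ψ u := by
  unfold gsum
  rw [← Equiv.sum_comp (Units.mulLeft g) (fun x => ψ (u * x ^ 2))]
  refine Finset.sum_congr rfl fun x _ => ?_
  congr 1
  simp only [Units.mulLeft_apply]
  ring

lemma sum_mul_left_char {R : Type*} [CommRing R] [Fintype R] (ψ : AddChar R ℂ) (hψ : IsPrim ψ)
    (s : R) : (s ≠ 0 → ∑ t : R, ψ (t * s) = 0) := by
  intro hs
  have h1 : ∃ t : R, ψ (t * s) ≠ 1 := by
    by_contra h
    push Not at h
    exact hs (hψ s h)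
  obtain ⟨t, ht⟩ := h1
  have h2 : ∑ x : R, ψ (x * s) = ψ (t * s) * ∑ x : R, ψ (x * s) := by
    rw [Finset.mul_sum]
    rw [← Equiv.sum_comp (Equiv.addLeft t)]
    refine Finset.sum_congr rfl fun x _ => ?_
    rw [Equiv.coe_addLeft, add_mul, AddChar.map_add_eq_mul]
  have h3 : (1 - ψ (t * s)) * ∑ x : R, ψ (x * s) = 0 := by linear_combination h2
  rcases mul_eq_zero.mp h3 with h | h
  · exact absurd (by linear_combination -h) ht
  · exact h

/-- The absolute value of the Gauss sum of a ring in which `Ann 2 = (2)`. -/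
lemma gsum_norm {R : Type*} [CommRing R] [Fintype R] [DecidableEq R] (ψ : AddChar R ℂ)
    (hψ : IsPrim ψ)
    (h4 : (4 : R) = 0) (h2 : ∀ z : R, 2 * z = 0 → ∃ y, z = 2 * y) (u : Rˣ) :
    gsum ψ (u : R) * (starRingEnd ℂ) (gsum ψ (u : R)) =
      (Fintype.card R : ℂ) * (#{z : R | 2 * z = 0} : ℂ) := by
  have h1 : gsum ψ (u : R) * (starRingEnd ℂ) (gsum ψ (u : R)) =
      ∑ z : R, ψ (u * z ^ 2) * ∑ x : R, ψ (x * (2 * u * z)) := by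
    unfold gsum
    rw [map_sum, Finset.sum_mul_sum, Finset.sum_comm]
    simp_rw [Finset.mul_sum]
    rw [Finset.sum_comm (s := univ) (t := univ) (f := fun z x => ψ (u * z ^ 2) * ψ (x * (2 * u * z)))]
    refine Finset.sum_congr rfl fun x _ => ?_
    rw [← Equiv.sum_comp (Equiv.addLeft x)]
    refine Finset.sum_congr rfl fun z _ => ?_
    rw [addChar_norm_one, ← AddChar.map_add_eq_mul, ← AddChar.map_add_eq_mul]
    congr 1
    simp only [Equiv.coe_addLeft]
    ring
  rw [h1, Finset.card_eq_sum_ones, Finset.sum_filter]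
  push_cast
  rw [Finset.mul_sum]
  refine Finset.sum_congr rfl fun z _ => ?_
  split_ifs with hz
  · obtain ⟨y, rfl⟩ := h2 z hz
    have e1 : (u : R) * (2 * y) ^ 2 = 0 := by linear_combination (u * y ^ 2) * h4
    have e2 : ∀ x : R, x * (2 * u * (2 * y)) = 0 := fun x => by linear_combination (x * u * y) * h4
    simp [e1, e2]
  · rw [sum_mul_left_char ψ hψ, mul_zero, mul_zero]
    intro h
    apply hz
    have : (u : R) * (2 * z) = 0 := by linear_combination h
    exact (Units.mul_right_eq_zero u).mp this

/-- Bilinear correlation sum. -/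
noncomputable def csum {R : Type*} [CommRing R] [Fintype R] [Fintype Rˣ] (ψ : AddChar R ℂ) (u : R) : ℂ :=
  ∑ v : Rˣ, ∑ x : R, ∑ y : R, ψ (v * (x ^ 2 - u * y ^ 2))

lemma csum_eq {R : Type*} [CommRing R] [Fintype R] [Fintype Rˣ] (ψ : AddChar R ℂ) (u : R) :
    csum ψ u = ∑ v : Rˣ, gsum ψ (v : R) * (starRingEnd ℂ) (gsum ψ (v * u)) := by
  unfold csum gsum
  refine Finset.sum_congr rfl fun v _ => ?_
  rw [map_sum, Finset.sum_mul_sum]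
  refine Finset.sum_congr rfl fun x _ => ?_
  refine Finset.sum_congr rfl fun y _ => ?_
  rw [addChar_norm_one, ← AddChar.map_add_eq_mul]
  congr 1
  ring

end FiniteRings

section LocalVanish
open Finset

/-- Data of a finite chain ring of residue characteristic two in which `2` has valuation `e`
and the nilpotency index of the uniformizer is `2 e`. -/
structure ChainData (S : Type*) [CommRing S] where
  p : S
  e : ℕ
  he : 0 < e
  hp0 : p ^ (2 * e) = 0
  hp1 : p ^ (2 * e - 1) ≠ 0
  h2 : ∃ b : S, (2 : S) = b * p ^ e
  hun : ∀ x : S, IsUnit x ∨ ∃ y, x = p * y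
  hsq : ∀ x : S, ∃ s y : S, x = s ^ 2 + p * y

namespace ChainData
variable {S : Type*} [CommRing S] (C : ChainData S)

lemma isNilpotent_p : IsNilpotent C.p := ⟨_, C.hp0⟩

lemma pow_ne {i : ℕ} (hi : i < 2 * C.e) : C.p ^ i ≠ 0 := by
  intro h
  apply C.hp1
  rw [show 2 * C.e - 1 = i + (2 * C.e - 1 - i) by omega, pow_add, h, zero_mul]

lemma unit_mul_pow_ne {i : ℕ} (hi : i < 2 * C.e) {a : S} (ha : IsUnit a) : a * C.p ^ i ≠ 0 := by
  intro h
  obtain ⟨a, rfl⟩ := ha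
  exact C.pow_ne hi ((Units.mul_right_eq_zero a).mp h)

lemma unit_add {a y : S} (ha : IsUnit a) : IsUnit (a + C.p * y) := by
  have : IsNilpotent (C.p * y) := (Commute.all _ _).isNilpotent_mul_right C.isNilpotent_p
  rw [add_comm]
  exact this.isUnit_add_right_of_commute ha (Commute.all _ _)

lemma decomp (x : S) : ∀ k : ℕ, (∃ y, x = C.p ^ k * y) ∨ ∃ i < k, ∃ a, IsUnit a ∧ x = a * C.p ^ i := by
  intro k
  induction k with
  | zero => left; exact ⟨x, by simp⟩
  | succ k ih =>
    rcases ih with ⟨y, hy⟩ | ⟨i, hi, a, ha, h⟩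
    · rcases C.hun y with h | ⟨z, hz⟩
      · right; exact ⟨k, by omega, y, h, by rw [hy]; ring⟩
      · left; exact ⟨z, by rw [hy, hz]; ring⟩
    · right; exact ⟨i, by omega, a, ha, h⟩

lemma exists_defect (u : S) (hu : ¬ ∃ w, u = w ^ 2) :
    ∃ (w a : S) (j : ℕ), 2 * j + 1 < 2 * C.e ∧ IsUnit a ∧ u = w ^ 2 + a * C.p ^ (2 * j + 1) := by
  classical
  let P : ℕ → Prop := fun f => ∃ w y, u = w ^ 2 + C.p ^ f * y
  have hP0 : P 0 := ⟨0, u, by simp⟩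
  have hPb : ¬ P (2 * C.e) := by
    rintro ⟨w, y, h⟩
    rw [C.hp0] at h
    exact hu ⟨w, by rw [h]; ring⟩
  obtain ⟨f, hf, hPf, hPf1⟩ : ∃ f < 2 * C.e, P f ∧ ¬ P (f + 1) := by
    by_contra! h
    have : ∀ k ≤ 2 * C.e, P k := by
      intro k
      induction k with
      | zero => intro _; exact hP0
      | succ k ih => intro hk; exact h k (by omega) (ih (by omega))
    exact hPb (this _ le_rfl)
  obtain ⟨w, a, hwa⟩ := hPf
  have ha : IsUnit a := by
    rcases C.hun a with h | ⟨z, hz⟩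
    · exact h
    · exact absurd ⟨w, z, by rw [hwa, hz]; ring⟩ hPf1
  rcases Nat.even_or_odd' f with ⟨i, hi | hi⟩
  · exfalso
    apply hPf1
    obtain ⟨s, y, hs⟩ := C.hsq a
    obtain ⟨b, hb⟩ := C.h2
    refine ⟨w + s * C.p ^ i, y - b * w * s * C.p ^ (C.e - i - 1), ?_⟩
    have h1 : C.p ^ C.e * C.p ^ i = C.p ^ (f + 1) * C.p ^ (C.e - i - 1) := by
      rw [← pow_add, ← pow_add]; congr 1; omega
    have h3 : C.p ^ (f + 1) = C.p ^ i * C.p ^ i * C.p := by rw [hi, pow_succ]; ring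
    have h4 : C.p ^ f = C.p ^ i * C.p ^ i := by rw [hi]; ring
    rw [hwa, hs, h4]
    have h5 : (2 : S) * w * s * C.p ^ i = b * w * s * (C.p ^ (f + 1) * C.p ^ (C.e - i - 1)) := by
      rw [hb, ← h1]; ring
    rw [h3] at h5 ⊢
    linear_combination -h5
  · exact ⟨w, a, i, by omega, ha, by rw [hwa, hi]; ring⟩

lemma ramanujan [Fintype S] [Fintype Sˣ] (ψ : AddChar S ℂ) (hψ : IsPrim ψ) (s : S)
    (hs : C.p * s ≠ 0) : ∑ v : Sˣ, ψ (v * s) = 0 := by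
  have h1 : ∃ t : S, ψ (t * (C.p * s)) ≠ 1 := by
    by_contra h
    push Not at h
    exact hs (hψ _ h)
  obtain ⟨t, ht⟩ := h1
  have hu1 : ∀ (v : Sˣ) (t : S), IsUnit ((v : S) + C.p * t) := fun v t => C.unit_add v.isUnit
  let E : Sˣ ≃ Sˣ :=
    { toFun := fun v => (hu1 v t).unit
      invFun := fun v => (hu1 v (-t)).unit
      left_inv := fun v => by ext; simp
      right_inv := fun v => by ext; simp }
  have h2 : ∑ v : Sˣ, ψ (v * s) = ψ (t * (C.p * s)) * ∑ v : Sˣ, ψ (v * s) := by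
    rw [Finset.mul_sum, ← Equiv.sum_comp E]
    refine Finset.sum_congr rfl fun v _ => ?_
    rw [← AddChar.map_add_eq_mul]
    congr 1
    simp only [E, Equiv.coe_fn_mk, IsUnit.unit_spec]
    ring
  have h3 : (1 - ψ (t * (C.p * s))) * ∑ v : Sˣ, ψ (v * s) = 0 := by linear_combination h2
  rcases mul_eq_zero.mp h3 with h | h
  · exact absurd (by linear_combination -h) ht
  · exact h

/-- Step 2: localisation of the pairs that contribute. -/
lemma good_z (w a z y : S) (j : ℕ) (ha : IsUnit a)
    (h : C.p * (z ^ 2 + 2 * w * y * z - a * C.p ^ (2 * j + 1) * y ^ 2) = 0) :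
    ∃ z', z = C.p ^ C.e * z' := by
  rcases C.decomp z C.e with hz | ⟨i, hi, ζ, hζ, hz⟩
  · exact hz
  exfalso
  obtain ⟨b, hb⟩ := C.h2
  obtain ⟨d, hd⟩ : ∃ d, C.e = i + 1 + d := ⟨C.e - i - 1, by omega⟩
  rcases C.decomp y (i - j) with ⟨η, hy⟩ | ⟨l, hl, η, hη, hy⟩
  · -- valuation of the last term is bigger
    obtain ⟨m, hm⟩ : ∃ m, 2 * (i - j) + (2 * j + 1) = 2 * i + 1 + m :=
      ⟨2 * (i - j) + 2 * j - 2 * i, by omega⟩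
    have e1 : C.p ^ (2 * j + 1) * (C.p ^ (i - j)) ^ 2 = C.p ^ (2 * i + 1 + m) := by
      rw [← pow_mul, ← pow_add]; congr 1; omega
    refine C.unit_mul_pow_ne (i := 2 * i + 1) (by omega)
      (C.unit_add (y := b * w * y * ζ * C.p ^ d - a * C.p ^ m * η ^ 2) (hζ.pow 2)) ?_
    have e2 : C.p ^ (2 * i + 1 + m) = C.p ^ (2 * i + 1) * C.p ^ m := pow_add _ _ _
    have e3 : (2 : S) = b * (C.p ^ i * C.p * C.p ^ d) := by
      rw [hb, hd, pow_add, pow_succ]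
    have e4 : a * C.p ^ (2 * j + 1) * y ^ 2 = a * η ^ 2 * (C.p ^ (2 * i + 1) * C.p ^ m) := by
      rw [← e2, ← e1, hy]; ring
    rw [e4, e3, hz] at h
    have e5 : C.p ^ (2 * i + 1) = C.p ^ i * C.p ^ i * C.p := by rw [pow_succ]; ring
    rw [e5] at h ⊢
    linear_combination h
  · -- valuation of the last term is smaller
    obtain ⟨m, hm⟩ : ∃ m, i = j + l + 1 + m := ⟨i - j - l - 1, by omega⟩
    refine C.unit_mul_pow_ne (i := 2 * j + 2 * l + 2) (by omega)
      (C.unit_add (y := - (ζ ^ 2 * C.p ^ (2 * m)) - b * w * ζ * η * C.p ^ (d + 1 + 2 * m + l)) ((hη.pow 2).mul ha)) ?_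
    rw [hb, hz, hy, hd, hm] at h
    ring_nf at h ⊢
    linear_combination -h

lemma good_y (a y : S) (j : ℕ) (ha : IsUnit a) (hj : 2 * j + 1 < 2 * C.e)
    (h : C.p * (a * C.p ^ (2 * j + 1) * y ^ 2) = 0) :
    ∃ y', y = C.p ^ (C.e - 1 - j) * y' := by
  rcases C.decomp y (C.e - 1 - j) with hy | ⟨l, hl, η, hη, hy⟩
  · exact hy
  exfalso
  refine C.unit_mul_pow_ne (i := 2 * j + 2 + 2 * l) (by omega) (ha.mul (hη.pow 2)) ?_
  rw [hy] at h
  rw [← h]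
  ring

lemma inner_zero [Fintype S] [Fintype Sˣ] [DecidableEq S] (ψ : AddChar S ℂ) (hψ : IsPrim ψ)
    (a : S) (j : ℕ) (ha : IsUnit a) (hj : 2 * j + 1 < 2 * C.e) (v : Sˣ) :
    ∑ y : S, (open Classical in if ∃ y', y = C.p ^ (C.e - 1 - j) * y' then
      ψ (v * (- (a * C.p ^ (2 * j + 1) * y ^ 2))) else 0) = 0 := by
  classical
  obtain ⟨b, hb⟩ := C.h2
  -- an element on which the character is nontrivial
  obtain ⟨t, ht⟩ : ∃ t : S, ψ (t * C.p ^ (2 * C.e - 1)) ≠ 1 := by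
    by_contra h
    push Not at h
    exact C.hp1 (hψ _ h)
  have hva : IsUnit (- ((v : S) * a)) := (v.isUnit.mul ha).neg
  obtain ⟨va, hva'⟩ := hva
  obtain ⟨s, q, hs⟩ := C.hsq ((va⁻¹ : Sˣ) * t)
  have hodd : C.p * C.p ^ (2 * C.e - 1) = 0 := by
    rw [← pow_succ', show 2 * C.e - 1 + 1 = 2 * C.e from by have := C.he; omega, C.hp0]
  have hk : C.p ^ (2 * j + 1) * (C.p ^ (C.e - 1 - j)) ^ 2 = C.p ^ (2 * C.e - 1) := by
    rw [← pow_mul, ← pow_add]; congr 1; omega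
  have hs2 : ψ (v * (- (a * C.p ^ (2 * j + 1) * (C.p ^ (C.e - 1 - j) * s) ^ 2))) ≠ 1 := by
    have : (v : S) * (- (a * C.p ^ (2 * j + 1) * (C.p ^ (C.e - 1 - j) * s) ^ 2)) =
        t * C.p ^ (2 * C.e - 1) := by
      have h1 : (v : S) * (- (a * C.p ^ (2 * j + 1) * (C.p ^ (C.e - 1 - j) * s) ^ 2)) =
        (va * s ^ 2) * C.p ^ (2 * C.e - 1) := by
        rw [hva', ← hk]; ring
      have h2 : (va : S) * s ^ 2 = t - va * (C.p * q) := by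
        have h3 : (va : S) * (((va⁻¹ : Sˣ) : S) * t) = t := by
          rw [← mul_assoc, Units.mul_inv, one_mul]
        rw [hs] at h3
        linear_combination h3
      rw [h1, h2]
      linear_combination (-va * q) * hodd
    rw [this]; exact ht
  set y0 := C.p ^ (C.e - 1 - j) * s with hy0
  set F : S → ℂ := fun y => if ∃ y', y = C.p ^ (C.e - 1 - j) * y' then
      ψ (v * (- (a * C.p ^ (2 * j + 1) * y ^ 2))) else 0 with hF
  have h2 : ∑ y : S, F y = ψ (v * (- (a * C.p ^ (2 * j + 1) * y0 ^ 2))) * ∑ y : S, F y := by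
    rw [Finset.mul_sum, ← Equiv.sum_comp (Equiv.addRight y0)]
    refine Finset.sum_congr rfl fun y _ => ?_
    simp only [hF, Equiv.coe_addRight]
    by_cases hy : ∃ y', y = C.p ^ (C.e - 1 - j) * y'
    · obtain ⟨y', hy'⟩ := hy
      rw [if_pos ⟨y' + s, by rw [hy', hy0]; ring⟩, if_pos ⟨y', hy'⟩, ← AddChar.map_add_eq_mul]
      congr 1
      have : (2 : S) * C.p ^ (2 * j + 1) * y * y0 = 0 := by
        rw [hb, hy', hy0]
        have e1 : C.p ^ C.e * (C.p * C.p ^ (2 * C.e - 1)) = 0 := by rw [hodd, mul_zero]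
        rw [← hk] at e1
        have e3 : C.p ^ (2 * C.e - 1) * C.p ^ C.e = 0 := by
          rw [← pow_add, show 2 * C.e - 1 + C.e = 2 * C.e + (C.e - 1) from by have := C.he; omega,
            pow_add, C.hp0, zero_mul]
        rw [← hk] at e3
        linear_combination (b * y' * s) * e3
      linear_combination (-v * a) * this
    · rw [if_neg hy, if_neg, mul_zero]
      rintro ⟨y', h⟩
      exact hy ⟨y' - s, by rw [mul_sub, ← h, hy0]; ring⟩
  have h3 : (1 - ψ (v * (- (a * C.p ^ (2 * j + 1) * y0 ^ 2)))) * ∑ y : S, F y = 0 := by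
    linear_combination h2
  rcases mul_eq_zero.mp h3 with h | h
  · exact absurd (by linear_combination -h) hs2
  · exact h

/-- The local vanishing statement. -/
theorem csum_zero {S : Type*} [CommRing S] (C : ChainData S) [Fintype S] [Fintype Sˣ] (ψ : AddChar S ℂ) (hψ : IsPrim ψ)
    (u : S) (hu : ¬ ∃ w, u = w ^ 2) : csum ψ u = 0 := by
  classical
  obtain ⟨w, a, j, hj, ha, hwa⟩ := C.exists_defect u hu
  obtain ⟨b, hb⟩ := C.h2
  have h1 : csum ψ u = ∑ z : S, ∑ y : S, ∑ v : Sˣ,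
      ψ (v * (z ^ 2 + 2 * w * y * z - a * C.p ^ (2 * j + 1) * y ^ 2)) := by
    unfold csum
    have : ∀ v : Sˣ, ∑ x : S, ∑ y : S, ψ (v * (x ^ 2 - u * y ^ 2)) =
        ∑ z : S, ∑ y : S, ψ (v * (z ^ 2 + 2 * w * y * z - a * C.p ^ (2 * j + 1) * y ^ 2)) := by
      intro v
      rw [Finset.sum_comm, Finset.sum_comm (γ := S) (s := univ) (t := univ) (f := fun z y =>
        ψ (v * (z ^ 2 + 2 * w * y * z - a * C.p ^ (2 * j + 1) * y ^ 2)))]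
      refine Finset.sum_congr rfl fun y _ => ?_
      rw [← Equiv.sum_comp (Equiv.addRight (w * y))]
      refine Finset.sum_congr rfl fun z _ => ?_
      congr 1
      rw [Equiv.coe_addRight, hwa]
      ring
    simp_rw [this]
    rw [Finset.sum_comm]
    refine Finset.sum_congr rfl fun z _ => ?_
    rw [Finset.sum_comm]
  rw [h1]
  refine Finset.sum_eq_zero fun z _ => ?_
  by_cases hz : ∃ z', z = C.p ^ C.e * z'
  · obtain ⟨z', hz'⟩ := hz
    have e0 : C.p ^ C.e * C.p ^ C.e = 0 := by rw [← pow_add, ← two_mul, C.hp0]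
    have e1 : ∀ y, z ^ 2 + 2 * w * y * z - a * C.p ^ (2 * j + 1) * y ^ 2 =
        - (a * C.p ^ (2 * j + 1) * y ^ 2) := by
      intro y
      rw [hb, hz']
      linear_combination (z' ^ 2 + b * w * y * z') * e0
    have e2 : ∀ y, ∑ v : Sˣ, ψ (v * (z ^ 2 + 2 * w * y * z - a * C.p ^ (2 * j + 1) * y ^ 2)) =
        ∑ v : Sˣ, if ∃ y', y = C.p ^ (C.e - 1 - j) * y' then
          ψ (v * (- (a * C.p ^ (2 * j + 1) * y ^ 2))) else 0 := by
      intro y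
      rw [e1]
      by_cases hy : ∃ y', y = C.p ^ (C.e - 1 - j) * y'
      · simp only [if_pos hy]
      · simp only [if_neg hy, Finset.sum_const_zero]
        refine C.ramanujan ψ hψ _ ?_
        intro h
        apply hy
        exact C.good_y a y j ha hj (by linear_combination -h)
    simp_rw [e2]
    rw [Finset.sum_comm]
    exact Finset.sum_eq_zero fun v _ => C.inner_zero ψ hψ a j ha hj v
  · refine Finset.sum_eq_zero fun y _ => ?_
    refine C.ramanujan ψ hψ _ ?_
    intro h
    exact hz (C.good_z w a z y j ha h)

end ChainData
end LocalVanish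

section Products
open Finset

/-- Pull back of an additive character. -/
noncomputable def pullChar {A B : Type*} [AddCommGroup A] [AddCommGroup B] (ψ : AddChar B ℂ) (f : A →+ B) :
    AddChar A ℂ := ψ.compAddMonoidHom f

lemma csum_equiv {R S : Type*} [CommRing R] [CommRing S] [Fintype R] [Fintype S]
    [Fintype Rˣ] [Fintype Sˣ] (φ : R ≃+* S) (ψ : AddChar S ℂ) (u : R) :
    csum (pullChar ψ (φ : R →+ S)) u = csum ψ (φ u) := by
  unfold csum
  rw [← Equiv.sum_comp (Units.mapEquiv φ.toMulEquiv).toEquiv]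
  refine Finset.sum_congr rfl fun v _ => ?_
  rw [← Equiv.sum_comp φ.toEquiv]
  refine Finset.sum_congr rfl fun x _ => ?_
  rw [← Equiv.sum_comp φ.toEquiv]
  refine Finset.sum_congr rfl fun y _ => ?_
  simp [pullChar]

lemma csum_prod {S T : Type*} [CommRing S] [CommRing T] [Fintype S] [Fintype T]
    [Fintype Sˣ] [Fintype (S × T)ˣ]
    (ψ : AddChar (S × T) ℂ) (hψ : IsPrim ψ) (u : S × T)
    (h : ∀ ψ' : AddChar S ℂ, IsPrim ψ' → csum ψ' u.1 = 0) : csum ψ u = 0 := by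
  classical
  have : Fintype Tˣ := Fintype.ofFinite _
  unfold csum
  rw [← Equiv.sum_comp (MulEquiv.prodUnits (M := S) (N := T)).symm.toEquiv]
  have h1 : ∀ (s : S) (t : T), ψ (s, t) = ψ (s, 0) * ψ (0, t) := by
    intro s t
    rw [← AddChar.map_add_eq_mul]; simp
  have e : ∀ vw : Sˣ × Tˣ, ∑ x : S × T, ∑ y : S × T,
      ψ (((MulEquiv.prodUnits (M := S) (N := T)).symm.toEquiv vw : (S × T)ˣ) *
        (x ^ 2 - u * y ^ 2)) =
      ∑ x2 : T, ∑ y2 : T, ψ (0, vw.2 * (x2 ^ 2 - u.2 * y2 ^ 2)) * ∑ x1 : S, ∑ y1 : S,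
        ψ (vw.1 * (x1 ^ 2 - u.1 * y1 ^ 2), 0) := by
    intro vw
    simp_rw [Fintype.sum_prod_type, Finset.mul_sum]
    rw [Finset.sum_comm]
    refine Finset.sum_congr rfl fun x2 _ => ?_
    have : ∀ x1 : S, ∑ y1 : S, ∑ y2 : T, ψ (((MulEquiv.prodUnits (M := S) (N := T)).symm.toEquiv vw : (S × T)ˣ) *
        ((x1, x2) ^ 2 - u * (y1, y2) ^ 2)) = ∑ y2 : T, ∑ y1 : S,
        ψ (0, vw.2 * (x2 ^ 2 - u.2 * y2 ^ 2)) * ψ (vw.1 * (x1 ^ 2 - u.1 * y1 ^ 2), 0) := by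
      intro x1
      rw [Finset.sum_comm]
      refine Finset.sum_congr rfl fun y2 _ => Finset.sum_congr rfl fun y1 _ => ?_
      rw [mul_comm (ψ (0, _)), ← h1]
      rfl
    simp_rw [this]
    rw [Finset.sum_comm]
  simp_rw [e, Fintype.sum_prod_type]
  rw [Finset.sum_comm]
  refine Finset.sum_eq_zero fun v2 _ => ?_
  rw [Finset.sum_comm]
  refine Finset.sum_eq_zero fun x2 _ => ?_
  rw [Finset.sum_comm]
  refine Finset.sum_eq_zero fun y2 _ => ?_
  rw [← Finset.mul_sum]
  have h2 := h (pullChar ψ (AddMonoidHom.inl S T)) (by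
    intro s hs
    have := hψ (s, 0) (fun t => by
      have := hs t.1
      have e0 : t * (s, 0) = (t.1 * s, 0) := by ext <;> simp
      rw [e0]
      simpa [pullChar] using this)
    exact congrArg Prod.fst this)
  unfold csum at h2
  rw [show (∑ i : Sˣ, ∑ x1 : S, ∑ y1 : S, ψ ((i : S) * (x1 ^ 2 - u.1 * y1 ^ 2), 0)) = 0 from h2,
    mul_zero]

/-- Splitting off one factor. -/
def ringPiSplit {ι : Type*} [DecidableEq ι] (S : ι → Type*) [∀ i, CommRing (S i)] (i : ι) :
    (∀ j, S j) ≃+* S i × (∀ j : {j // j ≠ i}, S j) :=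
  { Equiv.piSplitAt i S with
    map_mul' := fun _ _ => rfl
    map_add' := fun _ _ => rfl }

theorem csum_pi {R : Type*} [CommRing R] [Fintype R] [Fintype Rˣ] {ι : Type*} [Finite ι]
    (S : ι → Type*) [∀ i, CommRing (S i)] (φ : R ≃+* ∀ i, S i)
    (C : ∀ i, Nonempty (ChainData (S i))) (ψ : AddChar R ℂ) (hψ : IsPrim ψ) (u : R)
    (hu : ¬ ∃ w, u = w ^ 2) : csum ψ u = 0 := by
  classical
  have hfin : Finite (∀ i, S i) := Finite.of_equiv R φ.toEquiv
  have : ∃ i, ¬ ∃ w, φ u i = w ^ 2 := by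
    by_contra! h
    choose w hw using h
    refine hu ⟨φ.symm w, φ.injective ?_⟩
    rw [map_pow, φ.apply_symm_apply]
    funext i
    exact hw i
  obtain ⟨i, hi⟩ := this
  set θ := φ.trans (ringPiSplit S i) with hθ
  have hfin2 : Finite (S i × (∀ j : {j // j ≠ i}, S j)) := Finite.of_equiv R θ.toEquiv
  have f1 : Finite (S i) := Finite.of_surjective (Prod.fst : S i × (∀ j : {j // j ≠ i}, S j) → S i)
    Prod.fst_surjective
  have f2 : Finite (∀ j : {j // j ≠ i}, S j) :=
    Finite.of_surjective (Prod.snd : S i × (∀ j : {j // j ≠ i}, S j) → _)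
    Prod.snd_surjective
  have := Fintype.ofFinite (S i)
  have := Fintype.ofFinite (∀ j : {j // j ≠ i}, S j)
  have := Fintype.ofFinite (S i)ˣ
  have := Fintype.ofFinite (S i × (∀ j : {j // j ≠ i}, S j))ˣ
  have h1 : ψ = pullChar (pullChar ψ (θ.symm : (S i × (∀ j : {j // j ≠ i}, S j)) →+ R))
      (θ : R →+ S i × (∀ j : {j // j ≠ i}, S j)) := by
    ext x; simp [pullChar]
  rw [h1, csum_equiv]
  refine csum_prod _ ?_ _ ?_
  · intro s hs
    have := hψ (θ.symm s) (fun t => by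
      have := hs (θ t)
      simpa [pullChar] using this)
    simpa using this
  · intro ψ' hψ'
    exact ((C i).some).csum_zero ψ' hψ' _ hi

end Products

section Isotropic
open Finset

/-- The isotropy bound. -/
theorem isotropic_bound {G : Type*} [CommGroup G] [Fintype G] (B : G → ℂ) (c : ℝ) (hc : 0 < c)
    (hB : ∀ g, B g * (starRingEnd ℂ) (B g) = c)
    (Q : Subgroup G) (hQ : ∀ g, ∀ q ∈ Q, B (g * q) = B g)
    (hC : ∀ u, u ∉ Q → ∑ v : G, B v * (starRingEnd ℂ) (B (v * u)) = 0)
    (U : Subgroup G) (hQU : Q ≤ U)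
    (hU : ∀ x ∈ U, ∀ y ∈ U, B x * B y = B 1 * B (x * y)) :
    Nat.card U * Nat.card U ≤ Nat.card G * Nat.card Q := by
  classical
  have hcC : ∑ v : G, B v * (starRingEnd ℂ) (B v) = (Fintype.card G : ℂ) * c := by
    simp [hB]
  have hB1 : B 1 ≠ 0 := by
    intro h
    have := hB 1
    rw [h, zero_mul] at this
    exact hc.ne' (by exact_mod_cast this.symm)
  -- the vector of correlations
  set Z : G → ℂ := fun v => ∑ w : U, (starRingEnd ℂ) (B w) * B (v * w) with hZ
  have h1 : ∑ v : G, Z v * (starRingEnd ℂ) (Z v) =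
      ∑ w : U, ∑ w' : U, (starRingEnd ℂ) (B w) * B w' *
        ∑ v : G, B (v * w) * (starRingEnd ℂ) (B (v * w')) := by
    simp only [hZ, map_sum, map_mul, Complex.conj_conj]
    simp_rw [Finset.sum_mul_sum, Finset.mul_sum]
    rw [Finset.sum_comm]
    refine Finset.sum_congr rfl fun w _ => ?_
    rw [Finset.sum_comm]
    refine Finset.sum_congr rfl fun w' _ => Finset.sum_congr rfl fun v _ => ?_
    ring
  have h2 : ∀ w w' : U, (starRingEnd ℂ) (B w) * B w' *
        ∑ v : G, B (v * w) * (starRingEnd ℂ) (B (v * w')) =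
        if (w : G)⁻¹ * w' ∈ Q then (c : ℂ) * ((Fintype.card G : ℂ) * c) else 0 := by
    intro w w'
    have e1 : ∑ v : G, B (v * w) * (starRingEnd ℂ) (B (v * w')) =
        ∑ v : G, B v * (starRingEnd ℂ) (B (v * ((w : G)⁻¹ * w'))) := by
      rw [← Equiv.sum_comp (Equiv.mulRight (w : G)) (fun v => B v * (starRingEnd ℂ) (B (v * ((w : G)⁻¹ * w'))))]
      refine Finset.sum_congr rfl fun v _ => ?_
      simp [mul_assoc]
    rw [e1]
    split_ifs with h
    · have e2 : B w' = B w := by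
        have := hQ w _ h
        rwa [mul_inv_cancel_left] at this
      have e3 : ∑ v : G, B v * (starRingEnd ℂ) (B (v * ((w : G)⁻¹ * w'))) = (Fintype.card G : ℂ) * c := by
        rw [← hcC]
        refine Finset.sum_congr rfl fun v _ => ?_
        rw [hQ v _ h]
      rw [e3, e2, mul_comm ((starRingEnd ℂ) (B w)), hB]
    · rw [hC _ h, mul_zero]
  have h3 : ∀ w : U, ∑ w' : U, (if (w : G)⁻¹ * w' ∈ Q then (c : ℂ) * ((Fintype.card G : ℂ) * c) else 0) =
      (Nat.card Q : ℂ) * ((c : ℂ) * ((Fintype.card G : ℂ) * c)) := by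
    intro w
    rw [← Finset.sum_filter, Finset.sum_const, nsmul_eq_mul]
    congr 2
    rw [Nat.card_eq_fintype_card, ← Fintype.card_subtype]
    refine Fintype.card_congr
      { toFun := fun x => ⟨_, x.2⟩
        invFun := fun q => ⟨⟨w * q, U.mul_mem w.2 (hQU q.2)⟩, by simp⟩
        left_inv := fun x => by ext; simp
        right_inv := fun q => by ext; simp }
  have h4 : ∑ v : G, Z v * (starRingEnd ℂ) (Z v) =
      (Nat.card U : ℂ) * ((Nat.card Q : ℂ) * ((c : ℂ) * ((Fintype.card G : ℂ) * c))) := by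
    rw [h1]
    simp_rw [h2, h3]
    simp
  have h5 : ∀ v : U, Z v * (starRingEnd ℂ) (Z v) = (Nat.card U : ℂ) * (Nat.card U : ℂ) * (c * c) := by
    intro v
    have e1 : B 1 * Z v = (Nat.card U : ℂ) * c * B v := by
      simp only [hZ, Finset.mul_sum]
      have : ∀ w : U, B 1 * ((starRingEnd ℂ) (B w) * B (v * w)) = c * B v := by
        intro w
        have := hU v v.2 w w.2
        have h6 := hB w
        linear_combination (-(starRingEnd ℂ) (B w)) * this + B v * h6
      simp [this, mul_assoc]
    have e2 := congrArg (starRingEnd ℂ) e1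
    simp only [map_mul, Complex.conj_natCast, Complex.conj_ofReal] at e2
    have h6 := hB v
    have h7 := hB 1
    have hc' : (c : ℂ) ≠ 0 := by exact_mod_cast hc.ne'
    have e3 : (c : ℂ) * (Z v * (starRingEnd ℂ) (Z v)) =
        c * ((Nat.card U : ℂ) * (Nat.card U : ℂ) * (c * c)) := by
      calc (c : ℂ) * (Z v * (starRingEnd ℂ) (Z v))
          = (B 1 * Z v) * ((starRingEnd ℂ) (B 1) * (starRingEnd ℂ) (Z v)) := by rw [← h7]; ring
        _ = _ := by rw [e1, e2]; linear_combination ((Nat.card U : ℂ) * (Nat.card U : ℂ) * (c * c)) * h6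
    exact mul_left_cancel₀ hc' e3
  have hr : ∀ v, Z v * (starRingEnd ℂ) (Z v) = ((Complex.normSq (Z v) : ℝ) : ℂ) := fun v =>
    Complex.mul_conj _
  simp_rw [hr] at h4 h5
  have h4' : ∑ v : G, Complex.normSq (Z v) =
      (Nat.card U : ℝ) * ((Nat.card Q : ℝ) * (c * ((Fintype.card G : ℝ) * c))) := by
    exact_mod_cast h4
  have h5' : ∀ v : U, Complex.normSq (Z v) = (Nat.card U : ℝ) * (Nat.card U : ℝ) * (c * c) := by
    intro v; exact_mod_cast h5 v
  have h6 : ∑ v : U, Complex.normSq (Z v) ≤ ∑ v : G, Complex.normSq (Z v) := by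
    have : ∑ v : U, Complex.normSq (Z v) = ∑ v ∈ univ.filter (· ∈ U), Complex.normSq (Z v) := by
      rw [Finset.sum_subtype (p := (· ∈ U)) (univ.filter (· ∈ U)) (by simp)]
    rw [this]
    exact Finset.sum_le_univ_sum_of_nonneg (fun v => Complex.normSq_nonneg _)
  simp_rw [h5', Finset.sum_const, Finset.card_univ, nsmul_eq_mul, ← Nat.card_eq_fintype_card] at h6
  rw [h4', ← Nat.card_eq_fintype_card] at h6
  have hUpos : (0 : ℝ) < Nat.card U := by exact_mod_cast Nat.card_pos
  have h7 : ((Nat.card U : ℝ) * c * c) * ((Nat.card U : ℝ) * Nat.card U) ≤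
      ((Nat.card U : ℝ) * c * c) * ((Nat.card G : ℝ) * Nat.card Q) := by nlinarith [h6]
  have h8 := le_of_mul_le_mul_left h7 (by positivity)
  exact_mod_cast h8

end Isotropic

section OddTrick
open Finset Polynomial

lemma exists_unit_sum (S : Type*) [CommRing S] [Finite S] (h2 : IsUnit (2 : S)) (ε η : Sˣ) :
    ∃ a b : S, ε * a ^ 2 + η * b ^ 2 = 1 := by
  classical
  -- solve in each residue field
  have hloc : ∀ m : MaximalSpectrum S, ∃ a b : S ⧸ m.asIdeal,
      Ideal.Quotient.mk m.asIdeal ε * a ^ 2 + Ideal.Quotient.mk m.asIdeal η * b ^ 2 = 1 := by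
    intro m
    have hm := m.isMaximal
    let _ : Field (S ⧸ m.asIdeal) := Ideal.Quotient.field _
    have : Fintype (S ⧸ m.asIdeal) := @Fintype.ofFinite _ (Finite.of_surjective _ Ideal.Quotient.mk_surjective)
    have e1 : Ideal.Quotient.mk m.asIdeal ε ≠ 0 := (ε.isUnit.map (Ideal.Quotient.mk m.asIdeal)).ne_zero
    have e2 : Ideal.Quotient.mk m.asIdeal η ≠ 0 := (η.isUnit.map (Ideal.Quotient.mk m.asIdeal)).ne_zero
    have e3 : (2 : S ⧸ m.asIdeal) ≠ 0 := by
      have := (h2.map (Ideal.Quotient.mk m.asIdeal)).ne_zero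
      rwa [map_ofNat] at this
    have hodd : Fintype.card (S ⧸ m.asIdeal) % 2 = 1 := by
      refine FiniteField.odd_card_of_char_ne_two (F := S ⧸ m.asIdeal) ?_
      intro h
      apply e3
      have := ringChar.Nat.cast_ringChar (R := S ⧸ m.asIdeal)
      rw [h] at this
      exact_mod_cast this
    obtain ⟨a, b, hab⟩ := FiniteField.exists_root_sum_quadratic (R := S ⧸ m.asIdeal)
      (f := C (Ideal.Quotient.mk m.asIdeal ε) * X ^ 2)
      (g := C (Ideal.Quotient.mk m.asIdeal η) * X ^ 2 + C 0 * X + C (-1))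
      (degree_C_mul_X_pow 2 e1) (degree_quadratic e2) hodd
    refine ⟨a, b, ?_⟩
    simp at hab
    linear_combination hab
  choose a b hab using hloc
  have hsurj := Ideal.pi_quotient_surjective (I := fun m : MaximalSpectrum S => m.asIdeal)
    (fun m m' h => m.isCoprime_of_ne h)
  obtain ⟨a', ha'⟩ := hsurj a
  obtain ⟨b', hb'⟩ := hsurj b
  have hnil : ε * a' ^ 2 + η * b' ^ 2 - 1 ∈ nilradical S := by
    rw [mem_nilradical, nilpotent_iff_mem_prime]
    intro J hJ
    have hJm : J.IsMaximal := IsArtinianRing.isMaximal_of_isPrime J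
    rw [← Ideal.Quotient.eq_zero_iff_mem]
    have h1 := hab ⟨J, hJm⟩
    rw [← ha', ← hb'] at h1
    rw [map_sub, map_add, map_mul, map_mul, map_pow, map_pow, map_one, sub_eq_zero]
    exact h1
  obtain ⟨ν, hν⟩ : ∃ ν, ν = ε * a' ^ 2 + η * b' ^ 2 - 1 := ⟨_, rfl⟩
  rw [← hν] at hnil
  have hnil' : IsNilpotent ν := hnil
  obtain ⟨r, ⟨-, hr⟩, -⟩ := existsUnique_nilpotent_sub_and_aeval_eq_zero (R := S) (S := S)
    (P := X ^ 2 - C (1 + ν)) (x := 1)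
    (by
      have : aeval (1 : S) (X ^ 2 - C (1 + ν) : S[X]) = -ν := by simp
      rw [this]; exact hnil'.neg)
    (by
      have : aeval (1 : S) (derivative (X ^ 2 - C (1 + ν) : S[X])) = 2 := by
        simp [derivative_pow]
      rw [this]; exact h2)
  have hr2 : r ^ 2 = 1 + ν := by
    simp at hr
    linear_combination hr
  have hru : IsUnit r := by
    have : IsUnit (r ^ 2) := by
      rw [hr2]; exact hnil'.isUnit_one_add
    exact (isUnit_pow_iff two_ne_zero).mp this
  obtain ⟨r, rfl⟩ := hru
  refine ⟨((r⁻¹ : Sˣ) : S) * a', ((r⁻¹ : Sˣ) : S) * b', ?_⟩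
  have e1 : (r : S) * ((r⁻¹ : Sˣ) : S) = 1 := r.mul_inv
  have e2 : (r : S) ^ 2 = ε * a' ^ 2 + η * b' ^ 2 := by rw [hr2, hν]; ring
  have e3 : (r : S) ^ 2 * ((r⁻¹ : Sˣ) : S) ^ 2 = 1 := by rw [← mul_pow, e1, one_pow]
  rw [e2] at e3
  linear_combination e3

/-- Multiplicativity of Gauss sums for odd moduli. -/
theorem gsum_odd_mul {S : Type*} [CommRing S] [Fintype S] (h2 : IsUnit (2 : S)) (ψ : AddChar S ℂ)
    (ε η : Sˣ) : gsum ψ (ε : S) * gsum ψ (η : S) = gsum ψ 1 * gsum ψ ((ε : S) * η) := by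
  classical
  obtain ⟨a, b, hab⟩ := exists_unit_sum S h2 ε η
  unfold gsum
  rw [Finset.sum_mul_sum, Finset.sum_mul_sum, ← Fintype.sum_prod_type', ← Fintype.sum_prod_type']
  let E : S × S ≃ S × S :=
    { toFun := fun q => (a * q.1 - η * b * q.2, b * q.1 + ε * a * q.2)
      invFun := fun q => (ε * a * q.1 + η * b * q.2, - b * q.1 + a * q.2)
      left_inv := fun q => by
        ext
        · simp only; linear_combination q.1 * hab
        · simp only; linear_combination q.2 * hab
      right_inv := fun q => by
        ext
        · simp only; linear_combination q.1 * hab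
        · simp only; linear_combination q.2 * hab }
  rw [← Equiv.sum_comp E]
  refine Finset.sum_congr rfl fun q _ => ?_
  rw [← AddChar.map_add_eq_mul, ← AddChar.map_add_eq_mul]
  congr 1
  simp only [E, Equiv.coe_fn_mk]
  linear_combination (q.1 ^ 2 + ε * η * q.2 ^ 2) * hab

end OddTrick

section GroupSums
open Finset

lemma sum_comp_hom {A B : Type*} [AddCommGroup A] [AddCommGroup B] [Fintype A] [Fintype B]
    (Φ : A →+ B) [DecidablePred (· ∈ Φ.range)] (F : B → ℂ) :
    ∑ a : A, F (Φ a) = (Nat.card Φ.ker : ℂ) * ∑ b : B, if b ∈ Φ.range then F b else 0 := by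
  classical
  rw [← Finset.sum_fiberwise (s := univ) (g := fun a => Φ a) (f := fun a => F (Φ a)), Finset.mul_sum]
  refine Finset.sum_congr rfl fun b _ => ?_
  have h1 : ∑ a ∈ univ.filter (fun a => Φ a = b), F (Φ a) =
      (#(univ.filter (fun a => Φ a = b)) : ℂ) * F b := by
    rw [Finset.sum_congr rfl (g := fun _ => F b), Finset.sum_const, nsmul_eq_mul]
    intro a ha
    rw [(Finset.mem_filter.mp ha).2]
  rw [h1]
  split_ifs with hb
  · obtain ⟨a0, rfl⟩ := hb
    congr 2
    rw [Nat.card_eq_fintype_card, ← Fintype.card_subtype]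
    refine Fintype.card_congr
      { toFun := fun a => ⟨a - a0, by rw [AddMonoidHom.mem_ker, map_sub, a.2, sub_self]⟩
        invFun := fun k => ⟨k + a0, by rw [map_add, k.2, zero_add]⟩
        left_inv := fun x => by ext; simp
        right_inv := fun q => by ext; simp }
  · rw [mul_zero, Finset.filter_eq_empty_iff.mpr, Finset.card_empty]
    · simp
    · intro a _ h
      exact hb ⟨a, h⟩

lemma sum_shift {A : Type*} [AddCommGroup A] [Fintype A] {ι : Type*} [DecidableEq ι] (F : A → ℂ)
    (t : ι → A) (ζ : ι → A → ℂ) (hζ : ∀ i j x, ζ i (x + t j) = ζ i x)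
    (hF : ∀ i x, F (x + t i) = ζ i x * F x) (J : Finset ι) :
    ∑ x : A, F x = ∑ x : A, (open Classical in if ∀ i ∈ J, ζ i x = 1 then F x else 0) := by
  classical
  induction J using Finset.induction_on with
  | empty => simp
  | insert i J hi ih =>
    rw [ih]
    set g : A → ℂ := fun x => if (∀ j ∈ J, ζ j x = 1) ∧ ζ i x ≠ 1 then (1 - ζ i x)⁻¹ else 0 with hg
    have hgi : ∀ x, g (x + t i) = g x := by
      intro x
      simp only [hg, hζ]
    have h1 : ∑ x : A, F x * g x = ∑ x : A, ζ i x * F x * g x := by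
      rw [← Equiv.sum_comp (Equiv.addRight (t i))]
      refine Finset.sum_congr rfl fun x _ => ?_
      rw [Equiv.coe_addRight, hF, hgi]
    have h2 : ∑ x : A, (1 - ζ i x) * F x * g x = 0 := by
      have : ∀ x : A, (1 - ζ i x) * F x * g x = F x * g x - ζ i x * F x * g x := fun x => by ring
      simp_rw [this]
      rw [Finset.sum_sub_distrib, h1, sub_self]
    refine sub_eq_zero.mp (Eq.trans ?_ h2)
    rw [← Finset.sum_sub_distrib]
    refine Finset.sum_congr rfl fun x _ => ?_
    simp only [hg, Finset.forall_mem_insert]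
    by_cases hJ : ∀ j ∈ J, ζ j x = 1
    · by_cases hx : ζ i x = 1
      · simp [hJ, hx]
      · have : 1 - ζ i x ≠ 0 := fun h => hx (by linear_combination -h)
        rw [if_pos hJ, if_neg (fun h => hx h.1), if_pos ⟨hJ, hx⟩]
        rw [sub_zero]
        field_simp
    · simp [hJ]

theorem sum_hom_shift {A B : Type*} [AddCommGroup A] [Fintype A] [AddCommGroup B] [Fintype B]
    {ι : Type*} [Finite ι] (Φ : B →+ A) (F : A → ℂ)
    (t : ι → A) (ζ : ι → A → ℂ) (hζ : ∀ i j x, ζ i (x + t j) = ζ i x)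
    (hF : ∀ i x, F (x + t i) = ζ i x * F x) (ht : ∀ i, t i ∈ Φ.range)
    (hH : ∀ x, (∀ i, ζ i x = 1) → x ∈ Φ.range) :
    ∑ b : B, F (Φ b) = (Nat.card Φ.ker : ℂ) * ∑ a : A, F a := by
  classical
  have := Fintype.ofFinite ι
  rw [sum_comp_hom, sum_shift F t ζ hζ hF univ]
  rw [sum_shift (fun x => if x ∈ Φ.range then F x else 0) t ζ hζ ?_ univ]
  · congr 1
    refine Finset.sum_congr rfl fun x _ => ?_
    by_cases hx : ∀ i ∈ (univ : Finset ι), ζ i x = 1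
    · rw [if_pos hx, if_pos hx, if_pos (hH x fun i => hx i (mem_univ _))]
    · rw [if_neg hx, if_neg hx]
  · intro i x
    have : x + t i ∈ Φ.range ↔ x ∈ Φ.range := AddSubgroup.add_mem_cancel_right _ (ht i)
    simp only [this, hF]
    split_ifs <;> simp

end GroupSums

section OneDim
open Finset Complex Real

lemma gauss_zmod (N0 : ℕ) [NeZero N0] (he : Even N0) :
    ∃ r : ℝ, 0 < r ∧ ∑ k : ZMod N0, cexp (π * I * ((k.val : ℕ) : ℂ) ^ 2 / N0) = r * gaussOmega := by
  obtain ⟨r, hr, h⟩ := gauss_one_pos N0 (NeZero.pos N0) he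
  refine ⟨r, hr, ?_⟩
  rw [← h]
  obtain ⟨m, rfl⟩ : ∃ m, N0 = m + 1 := ⟨N0 - 1, by have := NeZero.pos N0; omega⟩
  rfl

lemma one_dim_pos (A M N0 : ℕ) [NeZero M] [NeZero N0] (he : Even N0) (hd : N0 ∣ M)
    (hA : 2 * A * N0 = M) :
    ∃ r : ℝ, 0 < r ∧ ∑ k : ZMod M, ZMod.stdAddChar ((A : ZMod M) * k ^ 2) = r * gaussOmega := by
  classical
  obtain ⟨r, hr, h⟩ := gauss_zmod N0 he
  set Φ : ZMod M →+ ZMod N0 := (ZMod.castHom hd (ZMod N0) : ZMod M →+ ZMod N0) with hΦ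
  have hsurj : Function.Surjective Φ := ZMod.castHom_surjective hd
  have h1 := sum_comp_hom Φ (fun k : ZMod N0 => cexp (π * I * ((k.val : ℕ) : ℂ) ^ 2 / N0))
  have h2 : ∑ b : ZMod N0, (if b ∈ Φ.range then cexp (π * I * ((b.val : ℕ) : ℂ) ^ 2 / N0) else 0) =
      ∑ b : ZMod N0, cexp (π * I * ((b.val : ℕ) : ℂ) ^ 2 / N0) := by
    refine Finset.sum_congr rfl fun b _ => ?_
    rw [if_pos (AddMonoidHom.mem_range.mpr (hsurj b))]
  rw [h2, h] at h1
  have hker : 0 < Nat.card Φ.ker := Nat.card_pos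
  refine ⟨Nat.card Φ.ker * r, by positivity, ?_⟩
  push_cast
  rw [mul_assoc, ← h1]
  refine Finset.sum_congr rfl fun k _ => ?_
  obtain ⟨j, rfl⟩ := ZMod.intCast_surjective k
  have e1 : ((A : ZMod M) * (j : ZMod M) ^ 2) = ((A * j ^ 2 : ℤ) : ZMod M) := by push_cast; rfl
  have e2 : Φ (j : ZMod M) = ((j : ℤ) : ZMod N0) := by simp [hΦ]
  rw [e1, ZMod.stdAddChar_coe, e2]
  have e3 : ((((j : ℤ) : ZMod N0).val : ℕ) : ℤ) = j % N0 := ZMod.val_intCast j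
  have e4 := gauss_exp_period N0 (NeZero.pos N0) he (j % N0) (j / N0)
  rw [Int.ediv_mul_add_emod] at e4
  have e5 : ((((j : ℤ) : ZMod N0).val : ℕ) : ℂ) = ((j % N0 : ℤ) : ℂ) := by
    rw [← e3]; push_cast; rfl
  rw [e5, ← e4]
  congr 1
  have hN0 : (N0 : ℂ) ≠ 0 := by exact_mod_cast NeZero.ne N0
  have hM : (M : ℂ) ≠ 0 := by exact_mod_cast NeZero.ne M
  have hMA : (M : ℂ) = 2 * A * N0 := by exact_mod_cast hA.symm
  have hA0 : (A : ℂ) ≠ 0 := by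
    intro h; apply hM; rw [hMA, h]; ring
  rw [hMA]
  push_cast
  field_simp

/-- One dimensional sums for a nonzero coefficient. -/
theorem one_dim (a : ℤ) (ha : a ≠ 0) (N : ℕ) [NeZero N] (hN : 2 * a ∣ N) :
    ∃ r : ℝ, 0 < r ∧ ∑ k : ZMod (N ^ 2), ZMod.stdAddChar ((a : ZMod (N ^ 2)) * k ^ 2) =
      r * (if 0 < a then gaussOmega else (starRingEnd ℂ) gaussOmega) := by
  set A := a.natAbs with hA
  have hApos : 0 < A := Int.natAbs_pos.mpr ha
  have hN' : 2 * A ∣ N := by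
    have := Int.natAbs_dvd_natAbs.mpr hN
    rwa [Int.natAbs_mul, Int.natAbs_natCast] at this
  obtain ⟨s, hs⟩ := hN'
  have hspos : 0 < s := by
    rcases Nat.eq_zero_or_pos s with h | h
    · exact absurd (by rw [hs, h, mul_zero]) (NeZero.ne N)
    · exact h
  have : NeZero (2 * A * s ^ 2) := ⟨by positivity⟩
  obtain ⟨r, hr, h⟩ := one_dim_pos A (N ^ 2) (2 * A * s ^ 2) ⟨A * s ^ 2, by ring⟩
    ⟨2 * A, by rw [hs]; ring⟩ (by rw [hs]; ring)
  refine ⟨r, hr, ?_⟩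
  split_ifs with hpos
  · rw [← h]
    have : (a : ZMod (N ^ 2)) = ((A : ℕ) : ZMod (N ^ 2)) := by
      rw [← Int.cast_natCast, hA, Int.natAbs_of_nonneg hpos.le]
    rw [this]
  · have : (a : ZMod (N ^ 2)) = - ((A : ℕ) : ZMod (N ^ 2)) := by
      rw [← Int.cast_natCast, hA, Int.ofNat_natAbs_of_nonpos (by omega)]; push_cast; ring
    have h2 := congrArg (starRingEnd ℂ) h
    rw [map_sum, map_mul, Complex.conj_ofReal] at h2
    rw [← h2]
    refine Finset.sum_congr rfl fun k _ => ?_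
    rw [addChar_norm_one, this, neg_mul]

end OneDim

section TraceSums
open Finset

/-- The quotient `O/M`. -/
abbrev QM (O : Type*) [CommRing O] (M : ℕ) : Type _ := O ⧸ Ideal.span {(M : O)}

/-- The reduction map. -/
abbrev qmk {O : Type*} [CommRing O] (M : ℕ) : O →+* QM O M := Ideal.Quotient.mk _

lemma qmk_eq_zero {O : Type*} [CommRing O] (M : ℕ) (x : O) : qmk M x = 0 ↔ ∃ y, x = M * y := by
  rw [Ideal.Quotient.eq_zero_iff_mem, Ideal.mem_span_singleton]; rfl

lemma qmk_M {O : Type*} [CommRing O] (M : ℕ) : (M : QM O M) = 0 := by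
  rw [← map_natCast (qmk (O := O) M)]
  exact (qmk_eq_zero M _).mpr ⟨1, by simp⟩

instance qm_finite (O : Type*) [CommRing O] [IsDomain O] [CharZero O] [Module.Free ℤ O] [Module.Finite ℤ O]
    (M : ℕ) [NeZero M] : Finite (QM O M) :=
  Ideal.finiteQuotientOfFreeOfNeBot _ (by
    rw [Ne, Ideal.span_singleton_eq_bot]; exact_mod_cast NeZero.ne M)

noncomputable instance qm_fintype (O : Type*) [CommRing O] [IsDomain O] [CharZero O] [Module.Free ℤ O]
    [Module.Finite ℤ O] (M : ℕ) [NeZero M] : Fintype (QM O M) := Fintype.ofFinite _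

/-- The reduction of an additive functional modulo `M`. -/
noncomputable def redHom {O : Type*} [CommRing O] (τ : O →+ ℤ) (M : ℕ) : QM O M →+ ZMod M :=
  QuotientAddGroup.lift (Submodule.toAddSubgroup (Ideal.span {(M : O)}))
    ((Int.castAddHom (ZMod M)).comp τ) (by
      intro x hx
      obtain ⟨y, rfl⟩ := Ideal.mem_span_singleton.mp ((Submodule.mem_toAddSubgroup _).mp hx)
      rw [AddMonoidHom.mem_ker, AddMonoidHom.comp_apply, ← nsmul_eq_mul, map_nsmul]
      simp)

lemma redHom_mk {O : Type*} [CommRing O] (τ : O →+ ℤ) (M : ℕ) (x : O) :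
    redHom τ M (qmk M x) = ((τ x : ℤ) : ZMod M) := rfl

/-- The additive character `x ↦ exp(2πi τ(x)/M)`. -/
noncomputable def traceChar {O : Type*} [CommRing O] (τ : O →+ ℤ) (M : ℕ) [NeZero M] :
    AddChar (QM O M) ℂ := pullChar ZMod.stdAddChar (redHom τ M)

lemma traceChar_mk {O : Type*} [CommRing O] (τ : O →+ ℤ) (M : ℕ) [NeZero M] (x : O) :
    traceChar τ M (qmk M x) = ZMod.stdAddChar ((τ x : ℤ) : ZMod M) := rfl

lemma std_eq_one (M : ℕ) [NeZero M] (j : ℤ) :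
    ZMod.stdAddChar (j : ZMod M) = 1 ↔ (M : ℤ) ∣ j := by
  rw [← (ZMod.stdAddChar (N := M)).map_zero_eq_one, ZMod.injective_stdAddChar.eq_iff,
    ZMod.intCast_zmod_eq_zero_iff_dvd]

lemma traceChar_eq_one {O : Type*} [CommRing O] (τ : O →+ ℤ) (M : ℕ) [NeZero M] (x : O) :
    traceChar τ M (qmk M x) = 1 ↔ (M : ℤ) ∣ τ x := by
  rw [traceChar_mk, std_eq_one]

lemma tau_nat_mul {O : Type*} [CommRing O] (τ : O →+ ℤ) (m : ℕ) (x : O) : τ (m * x) = m * τ x := by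
  rw [← nsmul_eq_mul, map_nsmul, nsmul_eq_mul]

lemma tau_int_mul {O : Type*} [CommRing O] (τ : O →+ ℤ) (m : ℤ) (x : O) : τ (m * x) = m * τ x := by
  rw [← zsmul_eq_mul, map_zsmul, zsmul_eq_mul]; simp

variable {O : Type*} [CommRing O] [IsDomain O] [CharZero O] [Module.Free ℤ O] [Module.Finite ℤ O]

/-- The quadratic Gauss sum of `u` modulo `M`. -/
noncomputable def GS (τ : O →+ ℤ) (M : ℕ) [NeZero M] (u : O) : ℂ := gsum (traceChar τ M) (qmk M u)

lemma GS_def (τ : O →+ ℤ) (M : ℕ) [NeZero M] (u : O) :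
    GS τ M u = ∑ x : QM O M, traceChar τ M (qmk M u * x ^ 2) := rfl

lemma std_split (A B : ℕ) [NeZero A] [NeZero B] [NeZero (A * B)] (r s : ℤ) (h : r * B + s * A = 1) (j : ℤ) :
    ZMod.stdAddChar (j : ZMod (A * B)) =
      ZMod.stdAddChar ((r * j : ℤ) : ZMod A) * ZMod.stdAddChar ((s * j : ℤ) : ZMod B) := by
  rw [ZMod.stdAddChar_coe, ZMod.stdAddChar_coe, ZMod.stdAddChar_coe, ← Complex.exp_add]
  congr 1
  have hA : (A : ℂ) ≠ 0 := by exact_mod_cast NeZero.ne A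
  have hB : (B : ℂ) ≠ 0 := by exact_mod_cast NeZero.ne B
  have hc : (r : ℂ) * B + s * A = 1 := by exact_mod_cast h
  push_cast
  field_simp
  linear_combination -(j : ℂ) * hc

lemma gsum_inv_sq (τ : O →+ ℤ) (M : ℕ) [NeZero M] (b : ℕ) (r s : ℤ) (h : r * (b ^ 2 : ℕ) + s * M = 1) (u : O) :
    gsum (traceChar τ M) (qmk M (r * u)) = GS τ M u := by
  have h1 : (r : QM O M) * (b : QM O M) ^ 2 = 1 := by
    have := congrArg (Int.cast : ℤ → QM O M) h
    push_cast at this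
    rw [qmk_M] at this
    linear_combination this
  let g : (QM O M)ˣ := ⟨r * b, b, by linear_combination h1, by linear_combination h1⟩
  rw [GS, ← gsum_mul_sq _ (qmk M u) g]
  congr 1
  have : (g : QM O M) = r * b := rfl
  rw [this, map_mul, map_intCast]
  linear_combination -(qmk M u * r : QM O M) * h1

/-- Multiplicativity of the Gauss sums in the modulus. -/
theorem GS_mul (τ : O →+ ℤ) (A B a b : ℕ) [NeZero A] [NeZero B] [NeZero (A * B)] (hA : A = a ^ 2)
    (hB : B = b ^ 2) (hc : Nat.Coprime A B) (u : O) :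
    GS τ (A * B) u = GS τ A u * GS τ B u := by
  obtain ⟨r, s, hrs⟩ : ∃ r s : ℤ, r * B + s * A = 1 := by
    have := Nat.isCoprime_iff_coprime.mpr hc
    obtain ⟨s, r, h⟩ := this
    exact ⟨r, s, by linear_combination h⟩
  have hco : IsCoprime (Ideal.span {(A : O)}) (Ideal.span {(B : O)}) := by
    rw [Ideal.isCoprime_span_singleton_iff]
    refine ⟨s, r, ?_⟩
    have := congrArg (Int.cast : ℤ → O) hrs
    push_cast at this
    linear_combination this
  let φ : QM O (A * B) ≃+* QM O A × QM O B :=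
    (Ideal.quotEquivOfEq (by rw [Ideal.span_singleton_mul_span_singleton]; push_cast; rfl)).trans
      (Ideal.quotientMulEquivQuotientProd _ _ hco)
  have hφ : ∀ x : O, φ (qmk (A * B) x) = (qmk A x, qmk B x) := fun x => rfl
  rw [← gsum_inv_sq τ A b r s (by rw [← hB]; exact hrs) u,
    ← gsum_inv_sq τ B a s r (by rw [← hA]; linear_combination hrs) u, gsum, gsum,
    Finset.sum_mul_sum, ← Finset.sum_product', GS_def, univ_product_univ, ← Equiv.sum_comp φ.toEquiv]
  refine Finset.sum_congr rfl fun x _ => ?_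
  obtain ⟨x, rfl⟩ := Ideal.Quotient.mk_surjective x
  have : φ.toEquiv (Ideal.Quotient.mk _ x) = (qmk A x, qmk B x) := hφ x
  rw [this]
  change traceChar τ (A * B) (qmk _ _ * (qmk _ _) ^ 2) = traceChar τ A (qmk _ _ * (qmk _ _) ^ 2) *
    traceChar τ B (qmk _ _ * (qmk _ _) ^ 2)
  simp only [← map_pow, ← map_mul]
  rw [traceChar_mk, traceChar_mk, traceChar_mk, std_split A B r s hrs, mul_assoc, mul_assoc,
    tau_int_mul, tau_int_mul]

/-- Dividing the modulus by `4`. -/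
theorem GS_four (τ : O →+ ℤ) (hτ : ∀ x, (∀ y, (2 : ℤ) ∣ τ (x * y)) → ∃ z, x = 2 * z) (M L : ℕ) [NeZero M]
    [NeZero L] (hM : M = 4 * L) (hL : 4 ∣ L) (u u' : O) (hu : u' * u = 1) :
    ∃ r : ℝ, 0 < r ∧ GS τ M u = r * GS τ L u := by
  classical
  obtain ⟨l, hl⟩ := hL
  have hMc : (M : QM O M) = 4 * (4 * l) := by
    have := congrArg (Nat.cast : ℕ → QM O M) hM
    rw [hl] at this
    push_cast at this
    exact this
  have hLc : (L : QM O M) = 4 * l := by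
    have := congrArg (Nat.cast : ℕ → QM O M) hl
    push_cast at this
    exact this
  set ψ := traceChar τ M with hψ
  have hψ1 : ∀ y : O, ψ (qmk M (M * y)) = 1 := fun y => by
    rw [hψ, traceChar_eq_one, tau_nat_mul]; exact ⟨_, rfl⟩
  have key := sum_hom_shift (A := QM O M) (B := QM O M) (ι := QM O M) (AddMonoidHom.mulLeft 2)
    (fun x => ψ (qmk M u * x ^ 2)) (fun y => (L : QM O M) * y)
    (fun y x => ψ (qmk M u * x * (2 * L * y))) ?_ ?_ ?_ ?_
  · let π : QM O M →+* QM O L := Ideal.Quotient.factor (by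
      rw [Ideal.span_singleton_le_span_singleton, hM]; exact ⟨4, by push_cast; ring⟩)
    have hπ : ∀ x : O, π (qmk M x) = qmk L x := fun x => rfl
    have hs := sum_comp_hom (π : QM O M →+ QM O L) (fun x => traceChar τ L (qmk L u * x ^ 2))
    have hr : ∀ b : QM O L, b ∈ (π : QM O M →+ QM O L).range := fun b => by
      obtain ⟨x, rfl⟩ := Ideal.Quotient.mk_surjective b
      exact ⟨qmk M x, hπ x⟩
    simp only [hr, if_true] at hs
    rw [← GS_def] at hs
    have he : ∑ b : QM O M, ψ (qmk M u * (AddMonoidHom.mulLeft (2 : QM O M) b) ^ 2) =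
        ∑ a : QM O M, traceChar τ L (qmk L u * ((π : QM O M →+ QM O L) a) ^ 2) := by
      refine Finset.sum_congr rfl fun b _ => ?_
      obtain ⟨x, rfl⟩ := Ideal.Quotient.mk_surjective b
      have e1 : qmk M (u : O) * (AddMonoidHom.mulLeft (2 : QM O M) (qmk M x)) ^ 2 =
          qmk M (((4 : ℕ) : O) * (u * x ^ 2)) := by
        rw [AddMonoidHom.coe_mulLeft]
        simp only [map_mul, map_pow, map_natCast]
        push_cast; ring
      have e2 : qmk L (u : O) * ((π : QM O M →+ QM O L) (qmk M x)) ^ 2 = qmk L (u * x ^ 2) := by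
        rw [map_mul, map_pow]; rfl
      rw [e1, e2, hψ, traceChar_mk, traceChar_mk, ZMod.stdAddChar_coe, ZMod.stdAddChar_coe, tau_nat_mul]
      congr 1
      have : (L : ℂ) ≠ 0 := by exact_mod_cast NeZero.ne L
      rw [hM]; push_cast; field_simp
    rw [he, hs, ← GS_def] at key
    have h1 : 0 < Nat.card (π : QM O M →+ QM O L).ker := Nat.card_pos
    have h2 : 0 < Nat.card (AddMonoidHom.mulLeft (2 : QM O M)).ker := Nat.card_pos
    refine ⟨(Nat.card (π : QM O M →+ QM O L).ker : ℝ) / Nat.card (AddMonoidHom.mulLeft (2 : QM O M)).ker,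
      by positivity, ?_⟩
    have h3 : (Nat.card (AddMonoidHom.mulLeft (2 : QM O M)).ker : ℂ) ≠ 0 := by exact_mod_cast h2.ne'
    push_cast
    rw [div_mul_eq_mul_div, eq_div_iff h3, mul_comm, ← key]
  · intro i j x
    obtain ⟨i, rfl⟩ := Ideal.Quotient.mk_surjective i
    obtain ⟨j, rfl⟩ := Ideal.Quotient.mk_surjective j
    have : qmk M (u : O) * (x + L * qmk M j) * (2 * L * qmk M i) =
        qmk M u * x * (2 * L * qmk M i) + qmk M (M * (2 * l * u * i * j)) := by
      simp only [map_mul, map_natCast, map_ofNat]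
      rw [hMc, hLc]; ring
    change ψ (qmk M (u : O) * (x + L * qmk M j) * (2 * L * qmk M i)) = _
    rw [this, AddChar.map_add_eq_mul, hψ1, mul_one]
  · intro i x
    obtain ⟨i, rfl⟩ := Ideal.Quotient.mk_surjective i
    have : qmk M (u : O) * (x + L * qmk M i) ^ 2 =
        qmk M u * x * (2 * L * qmk M i) + qmk M u * x ^ 2 + qmk M (M * (l * u * i ^ 2)) := by
      simp only [map_mul, map_natCast, map_pow]
      rw [hMc, hLc]; ring
    change ψ (qmk M (u : O) * (x + L * qmk M i) ^ 2) = _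
    rw [this, AddChar.map_add_eq_mul, hψ1, mul_one, AddChar.map_add_eq_mul]
  · intro i
    refine ⟨(2 * l : ℕ) * i, ?_⟩
    rw [AddMonoidHom.coe_mulLeft, hLc]; push_cast; ring
  · intro x hx
    obtain ⟨x, rfl⟩ := Ideal.Quotient.mk_surjective x
    obtain ⟨z, hz⟩ := hτ (u * x) (fun y => by
      have := hx (qmk M y)
      change ψ (qmk M (u : O) * qmk M x * (2 * L * qmk M y)) = 1 at this
      have e : qmk M (u : O) * qmk M x * (2 * L * qmk M y) = qmk M ((2 * L : ℕ) * (u * x * y)) := by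
        simp only [map_mul, map_natCast]; push_cast; ring
      rw [e, hψ, traceChar_eq_one, tau_nat_mul, hM] at this
      have hL0 : (0 : ℤ) < 2 * L := by have := NeZero.pos L; omega
      refine Int.dvd_of_mul_dvd_mul_left hL0.ne' ?_
      refine Eq.mp ?_ this
      congr 1 <;> push_cast <;> ring)
    refine ⟨qmk M (u' * z), ?_⟩
    rw [AddMonoidHom.coe_mulLeft]
    have : x = 2 * (u' * z) := by
      linear_combination (-x) * hu + u' * hz
    conv_rhs => rw [this]
    simp only [map_mul, map_ofNat]

theorem GS_four_pow (τ : O →+ ℤ) (hτ : ∀ x, (∀ y, (2 : ℤ) ∣ τ (x * y)) → ∃ z, x = 2 * z) (k : ℕ) (u : Oˣ) :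
    ∃ r : ℝ, 0 < r ∧ GS τ (4 ^ (k + 1)) (u : O) = r * GS τ 4 (u : O) := by
  induction k with
  | zero => exact ⟨1, one_pos, by simp⟩
  | succ k ih =>
    obtain ⟨r, hr, h⟩ := ih
    obtain ⟨s, hs, h'⟩ := GS_four τ hτ (4 ^ (k + 1 + 1)) (4 ^ (k + 1)) (by ring) ⟨4 ^ k, by ring⟩ u
      ((u⁻¹ : Oˣ) : O) (Units.inv_mul u)
    exact ⟨s * r, by positivity, by rw [h', h]; push_cast; ring⟩

lemma addChar_map_sum {A ι : Type*} [AddCommGroup A] (ψ : AddChar A ℂ) (s : Finset ι) (f : ι → A) :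
    ψ (∑ i ∈ s, f i) = ∏ i ∈ s, ψ (f i) := by
  classical
  induction s using Finset.induction_on with
  | empty => simp
  | insert i s hi ih => rw [Finset.sum_insert hi, Finset.prod_insert hi, AddChar.map_add_eq_mul, ih]

/-- Evaluation through an orthogonal family. -/
theorem GS_orth (τ : O →+ ℤ) {ι : Type*} [Fintype ι] (v : ι → O) (a : ι → ℤ) (ε : O)
    (hd : ∀ i, τ (ε * v i ^ 2) = a i) (ho : ∀ i j, i ≠ j → τ (ε * (v i * v j)) = 0) (ha : ∀ i, a i ≠ 0)
    (hsp : ∀ x : O, ∀ b : ι → ℤ, (∀ i, τ (ε * v i * x) = a i * b i) → x = ∑ i, (b i : O) * v i)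
    (N : ℕ) [NeZero N] (hN : ∀ i, 2 * a i ∣ N) :
    ∃ r : ℝ, 0 < r ∧ GS τ (N ^ 2) ε =
      r * ∏ i, (if 0 < a i then gaussOmega else (starRingEnd ℂ) gaussOmega) := by
  classical
  set M := N ^ 2 with hM
  have hMc : (M : QM O M) = (N : QM O M) ^ 2 := by
    exact Nat.cast_pow N 2
  set ψ := traceChar τ M with hψ
  have hψ1 : ∀ y : O, ψ (qmk M (M * y)) = 1 := fun y => by
    rw [hψ, traceChar_eq_one, tau_nat_mul]; exact ⟨_, rfl⟩
  let κ : ZMod M →+ QM O M := ZMod.lift M ⟨Int.castAddHom (QM O M), by simpa using qmk_M M⟩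
  have hκ : ∀ j : ℤ, κ (j : ZMod M) = (j : QM O M) := fun j => by
    simp only [κ]; rw [ZMod.lift_coe]; rfl
  let Φ : (ι → ZMod M) →+ QM O M :=
    ∑ i, (AddMonoidHom.mulRight (qmk M (v i))).comp (κ.comp (Pi.evalAddMonoidHom (fun _ => ZMod M) i))
  have hΦ : ∀ k : ι → ℤ, Φ (fun i => (k i : ZMod M)) = qmk M (∑ i, (k i : O) * v i) := fun k => by
    simp only [Φ, AddMonoidHom.finsetSum_apply, map_sum, map_mul, map_intCast]
    refine Finset.sum_congr rfl fun i _ => ?_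
    change κ (k i : ZMod M) * qmk M (v i) = _
    rw [hκ]
  have key := sum_hom_shift Φ (fun x => ψ (qmk M ε * x ^ 2)) (fun i => (N : QM O M) * qmk M (v i))
    (fun i x => ψ (qmk M ε * x * (2 * N * qmk M (v i)))) ?_ ?_ ?_ ?_
  · have h1 : ∀ k : ι → ZMod M, ψ (qmk M ε * (Φ k) ^ 2) =
        ∏ i, ZMod.stdAddChar ((a i : ZMod M) * (k i) ^ 2) := by
      intro k
      choose j hj using fun i => ZMod.intCast_surjective (k i)
      obtain rfl : (fun i => (j i : ZMod M)) = k := funext hj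
      rw [hΦ, ← map_pow, ← map_mul, hψ, traceChar_mk]
      have : τ (ε * (∑ i, (j i : O) * v i) ^ 2) = ∑ i, a i * j i ^ 2 := by
        have e : ε * (∑ i, (j i : O) * v i) ^ 2 =
            ∑ i, ∑ l, ((j i * j l : ℤ) : O) * (ε * (v i * v l)) := by
          rw [pow_two, Finset.sum_mul_sum, Finset.mul_sum]
          refine Finset.sum_congr rfl fun i _ => ?_
          rw [Finset.mul_sum]
          refine Finset.sum_congr rfl fun l _ => ?_
          push_cast; ring
        rw [e, map_sum]
        refine Finset.sum_congr rfl fun i _ => ?_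
        rw [map_sum, Finset.sum_eq_single i]
        · rw [tau_int_mul, ← pow_two, ← pow_two, hd]; ring
        · intro l _ hl
          rw [tau_int_mul, ho i l hl.symm, mul_zero]
        · simp
      rw [this, Int.cast_sum, addChar_map_sum]
      refine Finset.prod_congr rfl fun i _ => ?_
      push_cast; rfl
    simp_rw [h1] at key
    choose r hr hr' using fun i => one_dim (a i) (ha i) N (hN i)
    have h2 : ∑ k : ι → ZMod M, ∏ i, ZMod.stdAddChar ((a i : ZMod M) * (k i) ^ 2) =
        ∏ i, ∑ x : ZMod M, ZMod.stdAddChar ((a i : ZMod M) * x ^ 2) := by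
      rw [Finset.prod_univ_sum, Fintype.piFinset_univ]
    rw [h2, ← GS_def] at key
    have hr2 : ∀ i, ∑ x : ZMod M, ZMod.stdAddChar ((a i : ZMod M) * x ^ 2) =
      r i * (if 0 < a i then gaussOmega else (starRingEnd ℂ) gaussOmega) := hr'
    rw [Finset.prod_congr rfl fun i _ => hr2 i, Finset.prod_mul_distrib] at key
    have h4 : 0 < Nat.card Φ.ker := Nat.card_pos
    have h3 : (Nat.card Φ.ker : ℂ) ≠ 0 := by exact_mod_cast h4.ne'
    refine ⟨(∏ i, r i) / Nat.card Φ.ker, div_pos (Finset.prod_pos fun i _ => hr i) (by exact_mod_cast h4), ?_⟩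
    push_cast
    rw [div_mul_eq_mul_div, eq_div_iff h3, mul_comm]
    exact key.symm
  · intro i j x
    have : qmk M ε * (x + N * qmk M (v j)) * (2 * N * qmk M (v i)) =
        qmk M ε * x * (2 * N * qmk M (v i)) + qmk M (M * (2 * ε * v i * v j)) := by
      simp only [map_mul, map_natCast, map_ofNat]
      rw [hMc]; ring
    change ψ (qmk M ε * (x + N * qmk M (v j)) * (2 * N * qmk M (v i))) = _
    rw [this, AddChar.map_add_eq_mul, hψ1, mul_one]
  · intro i x
    have : qmk M ε * (x + N * qmk M (v i)) ^ 2 =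
        qmk M ε * x * (2 * N * qmk M (v i)) + qmk M ε * x ^ 2 + qmk M (M * (ε * v i ^ 2)) := by
      simp only [map_mul, map_natCast, map_pow]
      rw [hMc]; ring
    change ψ (qmk M ε * (x + N * qmk M (v i)) ^ 2) = _
    rw [this, AddChar.map_add_eq_mul, hψ1, mul_one, AddChar.map_add_eq_mul]
  · intro i
    refine ⟨fun l => ((if l = i then (N : ℤ) else 0 : ℤ) : ZMod M), ?_⟩
    rw [hΦ]
    simp
  · intro x hx
    obtain ⟨x, rfl⟩ := Ideal.Quotient.mk_surjective x
    have hb : ∀ i, ∃ b, τ (ε * v i * x) = a i * b := fun i => by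
      have := hx i
      change ψ (qmk M ε * qmk M x * (2 * N * qmk M (v i))) = 1 at this
      have e : qmk M ε * qmk M x * (2 * N * qmk M (v i)) = qmk M ((2 * N : ℕ) * (ε * v i * x)) := by
        simp only [map_mul, map_natCast]; push_cast; ring
      rw [e, hψ, traceChar_eq_one, tau_nat_mul, hM] at this
      have hN0 : (0 : ℤ) < N := by have := NeZero.pos N; omega
      have h5 : (N : ℤ) * N ∣ N * (2 * τ (ε * v i * x)) := by
        refine Eq.mp ?_ this
        congr 1 <;> push_cast <;> ring
      have h6 := (hN i).trans (Int.dvd_of_mul_dvd_mul_left hN0.ne' h5)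
      exact Int.dvd_of_mul_dvd_mul_left two_ne_zero h6
    choose b hb using hb
    refine ⟨fun i => (b i : ZMod M), ?_⟩
    rw [hΦ]
    rw [← hsp x b hb]

end TraceSums

section Signature

/-- Extension of a rational functional to the real algebra. -/
noncomputable def realExt {K : Type*} [Field K] [NumberField K] (f : K →ₗ[ℚ] ℚ) : (ℝ ⊗[ℚ] K) →ₗ[ℝ] ℝ :=
  (TensorProduct.AlgebraTensorModule.rid ℚ ℝ ℝ).toLinearMap ∘ₗ f.baseChange ℝ

lemma realExt_tmul {K : Type*} [Field K] [NumberField K] (f : K →ₗ[ℚ] ℚ) (x : K) :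
    realExt f (1 ⊗ₜ x) = (f x : ℝ) := by
  simp [realExt, Rat.smul_def]

lemma exists_sqrt {K : Type*} [Field K] [NumberField K] (ε : K) (hε : ∀ φ : K →+* ℝ, 0 < φ ε) :
    ∃ s : ℝ ⊗[ℚ] K, s ^ 2 = 1 ⊗ₜ ε := by
  have h0 : Algebra.FormallyUnramified ℚ K := .of_isSeparable ℚ K
  have h1 : Algebra.FormallyUnramified ℝ (ℝ ⊗[ℚ] K) := inferInstance
  have h2 : IsReduced (ℝ ⊗[ℚ] K) := Algebra.FormallyUnramified.isReduced_of_field ℝ _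
  have h3 : IsArtinianRing (ℝ ⊗[ℚ] K) := IsArtinianRing.of_finite ℝ _
  have key : ∀ m : MaximalSpectrum (ℝ ⊗[ℚ] K), ∃ t : (ℝ ⊗[ℚ] K) ⧸ m.asIdeal,
      t ^ 2 = Ideal.Quotient.mk m.asIdeal (1 ⊗ₜ ε) := by
    intro m
    let _ : Field ((ℝ ⊗[ℚ] K) ⧸ m.asIdeal) := @Ideal.Quotient.field _ _ m.asIdeal m.isMaximal
    have : Module.Finite ℝ ((ℝ ⊗[ℚ] K) ⧸ m.asIdeal) := inferInstance
    have h4 : Algebra.IsAlgebraic ℝ ((ℝ ⊗[ℚ] K) ⧸ m.asIdeal) := inferInstance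
    rcases Real.nonempty_algEquiv_or ((ℝ ⊗[ℚ] K) ⧸ m.asIdeal) with ⟨⟨e⟩⟩ | ⟨⟨e⟩⟩
    · let φ : K →+* ℝ := (e : ((ℝ ⊗[ℚ] K) ⧸ m.asIdeal) →+* ℝ).comp
        ((Ideal.Quotient.mk m.asIdeal).comp
          (Algebra.TensorProduct.includeRight : K →ₐ[ℚ] ℝ ⊗[ℚ] K).toRingHom)
      refine ⟨e.symm (Real.sqrt (φ ε)), ?_⟩
      rw [← map_pow, Real.sq_sqrt (hε φ).le]
      exact e.symm_apply_apply _
    · obtain ⟨z, hz⟩ := IsAlgClosed.exists_pow_nat_eq (e (Ideal.Quotient.mk m.asIdeal (1 ⊗ₜ ε))) (n := 2) (by norm_num)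
      refine ⟨e.symm z, ?_⟩
      rw [← map_pow, hz, e.symm_apply_apply]
  choose t ht using key
  refine ⟨(IsArtinianRing.equivPi (ℝ ⊗[ℚ] K)).symm t, ?_⟩
  rw [← map_pow, AlgEquiv.symm_apply_eq]
  funext m
  rw [IsArtinianRing.equivPi_apply, Pi.pow_apply, ht]

/-- The real quadratic form attached to `f` and `z`. -/
noncomputable def realForm {K : Type*} [Field K] [NumberField K] (f : K →ₗ[ℚ] ℚ) (z : ℝ ⊗[ℚ] K) :
    LinearMap.BilinForm ℝ (ℝ ⊗[ℚ] K) :=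
  (LinearMap.mul ℝ (ℝ ⊗[ℚ] K)).compr₂ (realExt f ∘ₗ LinearMap.mulLeft ℝ z)

lemma realForm_apply {K : Type*} [Field K] [NumberField K] (f : K →ₗ[ℚ] ℚ) (z x y : ℝ ⊗[ℚ] K) :
    realForm f z x y = realExt f (z * (x * y)) := rfl

lemma sigPos_realForm {K : Type*} [Field K] [NumberField K] (f : K →ₗ[ℚ] ℚ) (ε : K) {ι : Type*} [Fintype ι]
    (v : Module.Basis ι ℚ K) (hv : ∀ i j, i ≠ j → f (ε * (v i * v j)) = 0) :
    sigPos (realForm f (1 ⊗ₜ ε)).toQuadraticMap = {i | 0 < f (ε * (v i * v i))}.ncard := by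
  classical
  let b : Module.Basis ι ℝ (ℝ ⊗[ℚ] K) := v.baseChange ℝ
  have hb : ∀ i j, realForm f (1 ⊗ₜ ε) (b i) (b j) = ((f (ε * (v i * v j)) : ℚ) : ℝ) := by
    intro i j
    rw [realForm_apply, ← realExt_tmul]
    congr 1
    simp [b]
  have h1 : QuadraticMap.Equivalent (realForm f (1 ⊗ₜ ε)).toQuadraticMap
      (QuadraticMap.weightedSumSquares ℝ (fun i => ((f (ε * (v i * v i)) : ℚ) : ℝ))) := by
    have := QuadraticMap.basisRepr_eq_of_iIsOrtho (realForm f (1 ⊗ₜ ε)).toQuadraticMap b (by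
      intro i j hij
      change QuadraticMap.associated _ (b i) (b j) = 0
      rw [QuadraticMap.associated_toQuadraticMap]
      change ⅟(2:ℝ) * (realForm f (1 ⊗ₜ ε) (b i) (b j) + realForm f (1 ⊗ₜ ε) (b j) (b i)) = 0
      rw [hb, hb, hv i j hij, hv j i hij.symm]; simp)
    have e := QuadraticMap.isometryEquivBasisRepr (realForm f (1 ⊗ₜ ε)).toQuadraticMap b
    rw [this] at e
    have h2 : (fun i => (realForm f (1 ⊗ₜ ε)).toQuadraticMap (b i)) =
        fun i => ((f (ε * (v i * v i)) : ℚ) : ℝ) := by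
      funext i; exact hb i i
    rw [h2] at e
    exact ⟨e⟩
  rw [QuadraticForm.sigPos_of_equiv_weightedSumSquares h1]
  congr 1
  ext i
  simp

theorem sign_count {K : Type*} [Field K] [NumberField K] (f : K →ₗ[ℚ] ℚ) (ε : K)
    (hε : ∀ φ : K →+* ℝ, 0 < φ ε) (hε0 : ε ≠ 0) {ι : Type*} [Fintype ι]
    (v w : Module.Basis ι ℚ K) (hv : ∀ i j, i ≠ j → f (ε * (v i * v j)) = 0)
    (hw : ∀ i j, i ≠ j → f (1 * (w i * w j)) = 0) :
    {i | 0 < f (ε * (v i * v i))}.ncard = {i | 0 < f (1 * (w i * w i))}.ncard := by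
  rw [← sigPos_realForm f ε v hv, ← sigPos_realForm f 1 w hw]
  obtain ⟨s, hs⟩ := exists_sqrt ε hε
  have hu : s * (s * 1 ⊗ₜ ε⁻¹) = 1 := by
    rw [← mul_assoc, ← pow_two, hs, Algebra.TensorProduct.tmul_mul_tmul, mul_inv_cancel₀ hε0, one_mul]
    rfl
  apply QuadraticMap.Equivalent.sigPos_eq
  let e : (ℝ ⊗[ℚ] K) ≃ₗ[ℝ] (ℝ ⊗[ℚ] K) :=
    LinearEquiv.ofLinearMap (LinearMap.mulLeft ℝ s) (LinearMap.mulLeft ℝ (s * 1 ⊗ₜ ε⁻¹))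
      (LinearMap.ext fun x => by
        change s * (s * 1 ⊗ₜ ε⁻¹ * x) = x
        rw [← mul_assoc, hu, one_mul])
      (LinearMap.ext fun x => by
        change s * 1 ⊗ₜ ε⁻¹ * (s * x) = x
        rw [← mul_assoc, mul_comm (s * 1 ⊗ₜ ε⁻¹) s, hu, one_mul])
  refine ⟨⟨e, fun x => ?_⟩⟩
  change realForm f _ (s * x) (s * x) = realForm f _ x x
  rw [realForm_apply, realForm_apply]
  congr 1
  rw [← hs]
  change (1 : ℝ ⊗[ℚ] K) * _ = _
  ring

/-- The functional `x ↦ Tr(c x)`. -/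
noncomputable def trMul {K : Type*} [Field K] [NumberField K] (c : K) : K →ₗ[ℚ] ℚ :=
  Algebra.trace ℚ K ∘ₗ LinearMap.mulLeft ℚ c

lemma trMul_apply {K : Type*} [Field K] [NumberField K] (c x : K) :
    trMul c x = Algebra.trace ℚ K (c * x) := rfl

lemma trMul_nondeg {K : Type*} [Field K] [NumberField K] (c : K) (hc : c ≠ 0) (x : K)
    (h : ∀ y, trMul c (x * y) = 0) : x = 0 := by
  have h1 : c * x = 0 := by
    refine (traceForm_nondegenerate ℚ K).1 _ fun y => ?_
    rw [Algebra.traceForm_apply, mul_assoc]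
    exact h y
  exact (mul_eq_zero.mp h1).resolve_left hc

theorem exists_orth {K : Type*} [Field K] [NumberField K] (c : K) (hc : c ≠ 0) (τ : 𝓞 K →+ ℤ)
    (hτ : ∀ x : 𝓞 K, (τ x : ℚ) = trMul c (x : K)) (ε : 𝓞 K) (hε : ε ≠ 0) :
    ∃ (v : Fin (Module.finrank ℚ K) → 𝓞 K) (a : Fin (Module.finrank ℚ K) → ℤ),
      (∀ i, τ (ε * v i ^ 2) = a i) ∧ (∀ i j, i ≠ j → τ (ε * (v i * v j)) = 0) ∧ (∀ i, a i ≠ 0) ∧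
      (∀ x : 𝓞 K, ∀ b : Fin (Module.finrank ℚ K) → ℤ, (∀ i, τ (ε * v i * x) = a i * b i) →
        x = ∑ i, (b i : 𝓞 K) * v i) ∧
      ∃ w : Module.Basis (Fin (Module.finrank ℚ K)) ℚ K, ∀ i, w i = (v i : K) := by
  classical
  let B : LinearMap.BilinForm ℚ K := (LinearMap.mul ℚ K).compr₂ (trMul c ∘ₗ LinearMap.mulLeft ℚ (ε : K))
  have hB : ∀ x y, B x y = trMul c (ε * (x * y)) := fun x y => rfl
  have hs : LinearMap.IsSymm B := ⟨fun x y => by simp only [hB, RingHom.id_apply, mul_comm x y]⟩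
  have : Invertible (2 : ℚ) := invertibleOfNonzero two_ne_zero
  obtain ⟨b, hb⟩ := LinearMap.BilinForm.exists_orthogonal_basis hs
  have hex : ∀ i, ∃ d : ℤ, d ≠ 0 ∧ ∃ v : 𝓞 K, (v : K) = d * b i := by
    intro i
    obtain ⟨⟨v, d⟩, h⟩ := IsLocalization.surj (Algebra.algebraMapSubmonoid (𝓞 K) (nonZeroDivisors ℤ)) (b i)
    obtain ⟨d', hd', hd⟩ := d.2
    refine ⟨d', nonZeroDivisors.ne_zero hd', v, ?_⟩
    have h' : b i * algebraMap (𝓞 K) K (d : 𝓞 K) = algebraMap (𝓞 K) K v := h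
    rw [← hd] at h'
    refine Eq.trans h'.symm ?_
    rw [mul_comm]
    simp
  choose d hd v hv using hex
  have hdq : ∀ i, IsUnit ((d i : ℤ) : ℚ) := fun i => IsUnit.mk0 _ (by exact_mod_cast hd i)
  let w := b.isUnitSMul hdq
  have hw : ∀ i, w i = (v i : K) := fun i => by
    rw [hv, Module.Basis.isUnitSMul_apply, Int.cast_smul_eq_zsmul, zsmul_eq_mul]
  have hwo : ∀ i j, i ≠ j → trMul c (ε * (w i * w j)) = 0 := by
    intro i j hij
    have h1 : B (b i) (b j) = 0 := hb hij
    rw [← hB]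
    simp [w, Module.Basis.isUnitSMul_apply, h1]
  have hεK : (ε : K) ≠ 0 := by simpa using hε
  have hne : ∀ i, trMul c (ε * (w i * w i)) ≠ 0 := by
    intro i h
    have : (ε : K) * w i = 0 := by
      refine trMul_nondeg c hc _ fun y => ?_
      rw [← w.sum_repr y, Finset.mul_sum, map_sum]
      refine Finset.sum_eq_zero fun j _ => ?_
      rw [mul_smul_comm, map_smul, mul_assoc]
      by_cases hij : i = j
      · rw [← hij, h, smul_zero]
      · rw [hwo i j hij, smul_zero]
    rcases mul_eq_zero.mp this with h | h
    · exact hεK h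
    · exact w.ne_zero i h
  have hd1 : ∀ i j, (τ (ε * (v i * v j)) : ℚ) = trMul c (ε * (w i * w j)) := by
    intro i j
    rw [hτ, hw, hw]; simp
  refine ⟨v, fun i => τ (ε * v i ^ 2), fun i => rfl, ?_, ?_, ?_, w, hw⟩
  · intro i j hij
    have := hd1 i j
    rw [hwo i j hij] at this
    exact_mod_cast this
  · intro i h
    have := hd1 i i
    rw [← pow_two] at this
    change τ (ε * v i ^ 2) = 0 at h
    rw [h] at this
    exact hne i (by rw [← this]; simp)
  · intro x q hq
    have h2 : ∀ i, w.repr (x : K) i = q i := by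
      intro i
      have h3 : trMul c (ε * (w i * x)) = trMul c (ε * (w i * w i)) * w.repr (x : K) i := by
        conv_lhs => rw [← w.sum_repr (x : K), Finset.mul_sum, Finset.mul_sum, map_sum]
        rw [Finset.sum_eq_single i]
        · rw [mul_smul_comm, mul_smul_comm, map_smul, smul_eq_mul, mul_comm]
        · intro j _ hj
          rw [mul_smul_comm, mul_smul_comm, map_smul, hwo i j hj.symm, smul_zero]
        · simp
      have h4 := congrArg (Int.cast : ℤ → ℚ) (hq i)
      beta_reduce at h4
      rw [Int.cast_mul, pow_two, hd1, hτ] at h4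
      have h5 : ((ε * v i * x : 𝓞 K) : K) = ε * (w i * x) := by rw [hw]; simp [mul_assoc]
      rw [h5, h3] at h4
      exact mul_left_cancel₀ (hne i) h4
    apply RingOfIntegers.coe_injective
    refine (w.sum_repr (x : K)).symm.trans ?_
    rw [map_sum]
    refine Finset.sum_congr rfl fun i _ => ?_
    rw [h2, hw, Int.cast_smul_eq_zsmul, zsmul_eq_mul, map_mul, map_intCast]

theorem GS_totpos {K : Type*} [Field K] [NumberField K] (c : K) (hc : c ≠ 0) (τ : 𝓞 K →+ ℤ)
    (hτ : ∀ x : 𝓞 K, (τ x : ℚ) = trMul c (x : K)) :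
    ∃ Ω : ℂ, Ω ≠ 0 ∧ ∀ ε : 𝓞 K, ε ≠ 0 → (∀ φ : K →+* ℝ, 0 < φ (algebraMap (𝓞 K) K ε)) →
      ∃ D : ℕ, D ≠ 0 ∧ ∀ (N : ℕ) [NeZero N], D ∣ N → ∃ r : ℝ, 0 < r ∧ GS τ (N ^ 2) ε = r * Ω := by
  classical
  obtain ⟨v1, a1, hd1, ho1, ha1, hsp1, w1, hw1⟩ := exists_orth c hc τ hτ 1 one_ne_zero
  set p := {i | 0 < trMul c (1 * (w1 i * w1 i))}.ncard with hp
  have hconj : (starRingEnd ℂ) gaussOmega ≠ 0 := by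
    rw [Ne, map_eq_zero]; exact gaussOmega_ne_zero
  refine ⟨gaussOmega ^ p * (starRingEnd ℂ) gaussOmega ^ (Module.finrank ℚ K - p),
    mul_ne_zero (pow_ne_zero _ gaussOmega_ne_zero) (pow_ne_zero _ hconj), ?_⟩
  intro ε hε hpos
  obtain ⟨v, a, hd, ho, ha, hsp, w, hw⟩ := exists_orth c hc τ hτ ε hε
  refine ⟨∏ i, 2 * (a i).natAbs, ?_, ?_⟩
  · refine Finset.prod_ne_zero_iff.mpr fun i _ => ?_
    have := Int.natAbs_pos.mpr (ha i)
    omega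
  intro N _ hN
  obtain ⟨r, hr, h⟩ := GS_orth τ v a ε hd ho ha hsp N (fun i => by
    have h1 : 2 * (a i).natAbs ∣ N := (Finset.dvd_prod_of_mem _ (Finset.mem_univ i)).trans hN
    have h2 : ((2 * (a i).natAbs : ℕ) : ℤ) ∣ (N : ℤ) := Int.natCast_dvd_natCast.mpr h1
    refine dvd_trans ?_ h2
    push_cast
    exact mul_dvd_mul_left 2 ((dvd_abs _ _).mpr dvd_rfl))
  refine ⟨r, hr, ?_⟩
  rw [h]
  congr 1
  have hεK : (ε : K) ≠ 0 := by simpa using hε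
  have hcnt : (Finset.univ.filter (fun i => 0 < a i)).card = p := by
    have hs := sign_count (trMul c) (ε : K) hpos hεK w w1 (fun i j hij => by
        have := congrArg (Int.cast : ℤ → ℚ) (ho i j hij)
        rw [hτ] at this
        rw [hw, hw]
        simpa using this)
      (fun i j hij => by
        have := congrArg (Int.cast : ℤ → ℚ) (ho1 i j hij)
        rw [hτ] at this
        rw [hw1, hw1]
        simpa using this)
    rw [hp, ← hs, Set.ncard_eq_toFinset_card']
    congr 1
    ext i
    simp only [Finset.mem_filter, Finset.mem_univ, true_and, Set.mem_toFinset, Set.mem_ofPred_eq]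
    have : trMul c (ε * (w i * w i)) = a i := by
      rw [← hd i, hτ, hw]; simp [pow_two]
    rw [this]
    exact_mod_cast Iff.rfl
  rw [Finset.prod_ite, Finset.prod_const, Finset.prod_const, hcnt]
  congr 2
  have := Finset.card_filter_add_card_filter_not (s := (Finset.univ : Finset (Fin (Module.finrank ℚ K)))) (fun i => 0 < a i)
  rw [hcnt, Finset.card_univ, Fintype.card_fin] at this
  omega

end Signature

section Generator

lemma two_not_unit {K : Type*} [Field K] [NumberField K] : ¬ ∃ z : 𝓞 K, 1 = 2 * z := by
  rintro ⟨z, hz⟩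
  have h := congrArg (Algebra.norm ℤ) hz
  have h2 : (2 : 𝓞 K) = algebraMap ℤ (𝓞 K) 2 := by simp
  rw [map_one, map_mul, h2, Algebra.norm_algebraMap] at h
  have h3 : (2 : ℤ) ∣ 1 := by
    rw [h]
    exact Dvd.dvd.mul_right (dvd_pow_self _ Module.finrank_pos.ne') _
  omega

theorem exists_generator {K : Type*} [Field K] [NumberField K] :
    ∃ c : K, c ≠ 0 ∧ ∃ τ : 𝓞 K →+ ℤ, (∀ x : 𝓞 K, (τ x : ℚ) = trMul c (x : K)) ∧
      (∀ x, (∀ y, (2 : ℤ) ∣ τ (x * y)) → ∃ z, x = 2 * z) := by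
  set d : FractionalIdeal (nonZeroDivisors (𝓞 K)) K := FractionalIdeal.dual ℤ ℚ 1 with hd
  have h10 : (1 : FractionalIdeal (nonZeroDivisors (𝓞 K)) K) ≠ 0 := one_ne_zero
  have hd0 : d ≠ 0 := FractionalIdeal.dual_ne_zero ℤ ℚ one_ne_zero
  have hdd : FractionalIdeal.dual ℤ ℚ d = 1 := FractionalIdeal.dual_dual ℤ ℚ 1
  obtain ⟨k, J, hk, hJ⟩ := FractionalIdeal.exists_eq_spanSingleton_mul d
  have hkK : algebraMap (𝓞 K) K k ≠ 0 := by simpa using hk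
  have hJ0 : J ≠ 0 := by
    rintro rfl
    apply hd0; rw [hJ]; simp
  have mem_d : ∀ x : K, x ∈ d ↔ ∃ j ∈ J, x = (algebraMap (𝓞 K) K k)⁻¹ * algebraMap (𝓞 K) K j := by
    intro x
    rw [hJ, FractionalIdeal.mem_singleton_mul]
    constructor
    · rintro ⟨y, hy, rfl⟩
      obtain ⟨j, hj, rfl⟩ := (FractionalIdeal.mem_coeIdeal _).mp hy
      exact ⟨j, hj, rfl⟩
    · rintro ⟨j, hj, rfl⟩
      exact ⟨_, (FractionalIdeal.mem_coeIdeal _).mpr ⟨j, hj, rfl⟩, rfl⟩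
  have h20 : Ideal.span {(2 : 𝓞 K)} * J ≠ 0 := mul_ne_zero (by simp) hJ0
  obtain ⟨a, ha⟩ := IsDedekindDomain.exists_sup_span_eq (I := Ideal.span {(2 : 𝓞 K)} * J) (J := J)
    Ideal.mul_le_right h20
  have haJ : a ∈ J := by
    rw [← ha]; exact Ideal.mem_sup_right (Ideal.mem_span_singleton_self a)
  set c : K := (algebraMap (𝓞 K) K k)⁻¹ * algebraMap (𝓞 K) K a with hc
  have hcd : c ∈ d := (mem_d c).mpr ⟨a, haJ, rfl⟩
  have hInteg : ∀ x : 𝓞 K, ∃ t : ℤ, (t : ℚ) = trMul c (x : K) := by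
    intro x
    have h1 := (FractionalIdeal.mem_dual (A := ℤ) (K := ℚ) h10).mp hcd (x : K)
      ((FractionalIdeal.mem_one_iff _).mpr ⟨x, rfl⟩)
    obtain ⟨t, ht⟩ := h1
    exact ⟨t, by rw [trMul_apply]; simpa using ht⟩
  choose t ht using hInteg
  let τ : 𝓞 K →+ ℤ :=
    { toFun := t
      map_zero' := by
        have := ht 0
        change (t 0 : ℚ) = trMul c (algebraMap (𝓞 K) K 0) at this
        rw [map_zero, map_zero] at this
        exact_mod_cast this
      map_add' := fun x y => by
        have := ht (x + y)
        change (t (x + y) : ℚ) = trMul c (algebraMap (𝓞 K) K (x + y)) at this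
        have hx : (t x : ℚ) = trMul c (algebraMap (𝓞 K) K x) := ht x
        have hy : (t y : ℚ) = trMul c (algebraMap (𝓞 K) K y) := ht y
        rw [map_add, map_add, ← hx, ← hy] at this
        exact_mod_cast this }
  have hτ : ∀ x : 𝓞 K, (τ x : ℚ) = trMul c (x : K) := ht
  have hprim : ∀ x, (∀ y, (2 : ℤ) ∣ τ (x * y)) → ∃ z, x = 2 * z := by
    intro x hx
    have hmem : (algebraMap (𝓞 K) K x) / 2 ∈ FractionalIdeal.dual ℤ ℚ d := by
      rw [FractionalIdeal.mem_dual hd0]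
      intro z hz
      obtain ⟨j, hj, rfl⟩ := (mem_d z).mp hz
      rw [← ha] at hj
      obtain ⟨j1, hj1, j2, hj2, rfl⟩ := Submodule.mem_sup.mp hj
      obtain ⟨j', hj', rfl⟩ := Ideal.mem_span_singleton_mul.mp hj1
      obtain ⟨b, rfl⟩ := Ideal.mem_span_singleton.mp hj2
      set z' : K := (algebraMap (𝓞 K) K k)⁻¹ * algebraMap (𝓞 K) K j' with hz'
      have hz'd : z' ∈ d := (mem_d z').mpr ⟨j', hj', rfl⟩
      obtain ⟨t1, ht1⟩ := (FractionalIdeal.mem_dual (A := ℤ) (K := ℚ) h10).mp hz'd (x : K)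
        ((FractionalIdeal.mem_one_iff _).mpr ⟨x, rfl⟩)
      obtain ⟨t2, ht2⟩ := hx b
      have h3 := hτ (x * b)
      rw [ht2] at h3
      refine ⟨t1 + t2, ?_⟩
      rw [Algebra.traceForm_apply] at ht1 ⊢
      have e : algebraMap (𝓞 K) K x / 2 * ((algebraMap (𝓞 K) K k)⁻¹ * algebraMap (𝓞 K) K (2 * j' + a * b)) =
          z' * algebraMap (𝓞 K) K x + (1 / 2 : ℚ) • (c * algebraMap (𝓞 K) K (x * b)) := by
        rw [hz', hc, Rat.smul_def]
        simp only [map_mul, map_add, map_ofNat]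
        push_cast
        ring
      rw [e, LinearMap.map_add, LinearMap.map_smul]
      have h3' : trMul c (algebraMap (𝓞 K) K (x * b)) = ((2 * t2 : ℤ) : ℚ) := h3.symm
      rw [trMul_apply] at h3'
      rw [h3']
      have ht1' : (t1 : ℚ) = Algebra.trace ℚ K (z' * algebraMap (𝓞 K) K x) := by simpa using ht1
      rw [← ht1']
      simp
    rw [hdd] at hmem
    obtain ⟨z, hz⟩ := (FractionalIdeal.mem_one_iff _).mp hmem
    refine ⟨z, RingOfIntegers.coe_injective ?_⟩
    rw [map_mul, hz, map_ofNat]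
    ring
  refine ⟨c, ?_, τ, hτ, hprim⟩
  intro hc0
  refine two_not_unit (K := K) (hprim 1 fun y => ?_)
  have := hτ (1 * y)
  rw [hc0, trMul_apply, zero_mul, map_zero] at this
  have h0 : τ (1 * y) = 0 := by exact_mod_cast this
  rw [h0]; exact dvd_zero 2

end Generator

section Chain

lemma pow_notMem_of_uniformizer {O : Type*} [CommRing O] [IsDedekindDomain O] (P : Ideal O)
    [hP : P.IsPrime] (hP0 : P ≠ ⊥) (π : O) (h1 : π ∈ P) (h2 : π ∉ P ^ 2) (k : ℕ) :
    π ^ k ∉ P ^ (k + 1) := by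
  have hpr : Prime P := Ideal.prime_of_isPrime hP0 hP
  obtain ⟨J, hJ⟩ : P ∣ Ideal.span {π} := by
    rw [Ideal.dvd_iff_le, Ideal.span_singleton_le_iff_mem]; exact h1
  intro h
  have h3 : P ^ (k + 1) ∣ Ideal.span {π ^ k} := by
    rw [Ideal.dvd_iff_le, Ideal.span_singleton_le_iff_mem]; exact h
  rw [← Ideal.span_singleton_pow, hJ, mul_pow, pow_succ] at h3
  have h4 : P ∣ J ^ k := (mul_dvd_mul_iff_left (pow_ne_zero k hpr.ne_zero)).mp h3
  have h5 : P ∣ J := hpr.dvd_of_dvd_pow h4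
  apply h2
  rw [← Ideal.span_singleton_le_iff_mem, ← Ideal.dvd_iff_le, hJ, pow_two]
  exact mul_dvd_mul_left P h5

lemma uniformizer_div {O : Type*} [CommRing O] [IsDedekindDomain O] (P : Ideal O)
    [hP : P.IsPrime] (hP0 : P ≠ ⊥) (π : O) (h1 : π ∈ P) (h2 : π ∉ P ^ 2) (m : ℕ) :
    ∀ i c, c ∈ P ^ i → ∃ d, c - π ^ i * d ∈ P ^ (i + m) := by
  induction m with
  | zero => intro i c hc; exact ⟨0, by simpa using hc⟩
  | succ m ih =>
    intro i c hc
    obtain ⟨d, e, he, hde⟩ := Ideal.exists_mul_add_mem_pow_succ hP0 (π ^ i) c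
      (Ideal.pow_mem_pow h1 i) (pow_notMem_of_uniformizer P hP0 π h1 h2 i) hc
    obtain ⟨d', hd'⟩ := ih (i + 1) e he
    refine ⟨d + π * d', ?_⟩
    have : c - π ^ i * (d + π * d') = e - π ^ (i + 1) * d' := by rw [← hde]; ring
    rw [this, show i + (m + 1) = i + 1 + m by ring]
    exact hd'

lemma chainData_prime {O : Type*} [CommRing O] [IsDedekindDomain O] (P : Ideal O)
    [hP : P.IsPrime] (hP0 : P ≠ ⊥) [Finite (O ⧸ P)] (e : ℕ) (he : 0 < e) (h2e : (2 : O) ∈ P ^ e) :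
    Nonempty (ChainData (O ⧸ P ^ (2 * e))) := by
  have hmax : P.IsMaximal := hP.isMaximal hP0
  obtain ⟨π, h1, h2⟩ : ∃ π ∈ P, π ∉ P ^ 2 := by
    have := Ideal.pow_succ_lt_pow hP0 1
    · rw [pow_one] at this
      exact Set.exists_of_ssubset this
  have key : ∀ i ≤ 2 * e, ∀ c ∈ P ^ i, ∃ d, Ideal.Quotient.mk (P ^ (2 * e)) c =
      Ideal.Quotient.mk (P ^ (2 * e)) π ^ i * Ideal.Quotient.mk (P ^ (2 * e)) d := by
    intro i hi c hc
    obtain ⟨d, hd⟩ := uniformizer_div P hP0 π h1 h2 (2 * e - i) i c hc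
    refine ⟨d, ?_⟩
    rw [← map_pow, ← map_mul, Ideal.Quotient.eq]
    rwa [Nat.add_sub_cancel' hi] at hd
  refine ⟨{ p := Ideal.Quotient.mk _ π, e := e, he := he, hp0 := ?_, hp1 := ?_, h2 := ?_,
            hun := ?_, hsq := ?_ }⟩
  · rw [← map_pow, Ideal.Quotient.eq_zero_iff_mem]; exact Ideal.pow_mem_pow h1 _
  · rw [← map_pow, Ne, Ideal.Quotient.eq_zero_iff_mem]
    have := pow_notMem_of_uniformizer P hP0 π h1 h2 (2 * e - 1)
    rwa [Nat.sub_add_cancel (by omega)] at this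
  · obtain ⟨d, hd⟩ := key e (by omega) 2 h2e
    refine ⟨Ideal.Quotient.mk _ d, ?_⟩
    rw [map_ofNat] at hd
    exact hd.trans (mul_comm _ _)
  · intro x
    obtain ⟨x, rfl⟩ := Ideal.Quotient.mk_surjective x
    by_cases hx : x ∈ P
    · right
      obtain ⟨d, hd⟩ := key 1 (by omega) x (by rwa [pow_one])
      exact ⟨_, by rw [hd, pow_one]⟩
    · left
      obtain ⟨y, z, hz, hyz⟩ := hmax.exists_inv hx
      have hn : IsNilpotent (Ideal.Quotient.mk (P ^ (2 * e)) (-z)) := by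
        refine ⟨2 * e, ?_⟩
        rw [← map_pow, Ideal.Quotient.eq_zero_iff_mem]
        exact Ideal.pow_mem_pow (neg_mem hz) _
      have hu := hn.isUnit_one_add
      have : (1 + Ideal.Quotient.mk (P ^ (2 * e)) (-z)) =
          Ideal.Quotient.mk (P ^ (2 * e)) y * Ideal.Quotient.mk (P ^ (2 * e)) x := by
        rw [← map_mul, ← map_one (Ideal.Quotient.mk (P ^ (2 * e))), ← map_add]
        congr 1
        rw [← hyz]; ring
      rw [this] at hu
      exact isUnit_of_mul_isUnit_right hu
  · intro x
    obtain ⟨x, rfl⟩ := Ideal.Quotient.mk_surjective x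
    let _ := Ideal.Quotient.field P
    have h2P : (2 : O ⧸ P) = 0 := by
      rw [← map_ofNat (Ideal.Quotient.mk P), Ideal.Quotient.eq_zero_iff_mem]
      exact Ideal.pow_le_self he.ne' h2e
    have : CharP (O ⧸ P) 2 := CharTwo.of_one_ne_zero_of_two_eq_zero one_ne_zero h2P
    obtain ⟨s, hs⟩ := FiniteField.isSquare_of_char_two (ringChar.eq_iff.mpr this)
      (Ideal.Quotient.mk P x)
    obtain ⟨s, rfl⟩ := Ideal.Quotient.mk_surjective s
    rw [← map_mul, Ideal.Quotient.eq] at hs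
    obtain ⟨d, hd⟩ := key 1 (by omega) (x - s * s) (by rwa [pow_one])
    refine ⟨Ideal.Quotient.mk _ s, Ideal.Quotient.mk _ d, ?_⟩
    rw [pow_one, map_sub, map_mul] at hd
    linear_combination hd

theorem csum_four_zero {K : Type*} [Field K] [NumberField K] [Fintype (QM (𝓞 K) 4)]
    [Fintype (QM (𝓞 K) 4)ˣ] (ψ : AddChar (QM (𝓞 K) 4) ℂ) (hψ : IsPrim ψ)
    (u : QM (𝓞 K) 4) (hu : ¬ ∃ w, u = w ^ 2) : csum ψ u = 0 := by
  classical
  have hI : Ideal.span {((4 : ℕ) : 𝓞 K)} ≠ ⊥ := by simp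
  have hI2 : Ideal.span {(2 : 𝓞 K)} ≠ ⊥ := by simp
  have hpow : Ideal.span {((4 : ℕ) : 𝓞 K)} = Ideal.span {(2 : 𝓞 K)} ^ 2 := by
    rw [Ideal.span_singleton_pow]; norm_num
  refine csum_pi _ (IsDedekindDomain.quotientEquivPiFactors hI) ?_ ψ hψ u hu
  rintro ⟨P, hP⟩
  rw [Multiset.mem_toFinset, UniqueFactorizationMonoid.factors_eq_normalizedFactors] at hP
  have hPp : Prime P := UniqueFactorizationMonoid.prime_of_normalized_factor P hP
  have : P.IsPrime := Ideal.isPrime_of_prime hPp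
  have hP0 : P ≠ ⊥ := hPp.ne_zero
  have : Finite (𝓞 K ⧸ P) := Ideal.finiteQuotientOfFreeOfNeBot P hP0
  have hcount : Multiset.count P (UniqueFactorizationMonoid.factors (Ideal.span {((4 : ℕ) : 𝓞 K)}))
      = 2 * Multiset.count P (UniqueFactorizationMonoid.normalizedFactors (Ideal.span {(2 : 𝓞 K)})) := by
    rw [UniqueFactorizationMonoid.factors_eq_normalizedFactors, hpow,
      UniqueFactorizationMonoid.normalizedFactors_pow, Multiset.count_nsmul]
  change Nonempty (ChainData (𝓞 K ⧸ P ^ Multiset.count P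
    (UniqueFactorizationMonoid.factors (Ideal.span {((4 : ℕ) : 𝓞 K)}))))
  rw [hcount]
  apply chainData_prime P hP0
  · rw [hpow, UniqueFactorizationMonoid.normalizedFactors_pow] at hP
    rw [Multiset.count_pos]
    exact Multiset.mem_of_mem_nsmul hP
  · rw [← Ideal.span_singleton_le_iff_mem, ← Ideal.dvd_iff_le]
    have h := Multiset.prod_dvd_prod_of_le (Multiset.le_count_iff_replicate_le.mp
      (le_refl (Multiset.count P (UniqueFactorizationMonoid.normalizedFactors (Ideal.span {(2 : 𝓞 K)})))))
    rw [Multiset.prod_replicate] at h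
    exact h.trans (UniqueFactorizationMonoid.prod_normalizedFactors hI2).dvd

end Chain

section Counting

variable {K : Type*} [Field K] [NumberField K]

lemma qm4_four : (4 : QM (𝓞 K) 4) = 0 := by exact_mod_cast qmk_M (O := 𝓞 K) 4

lemma qm4_two_mul (z : QM (𝓞 K) 4) : 2 * z = 0 ↔ ∃ y, z = 2 * y := by
  constructor
  · intro h
    obtain ⟨z, rfl⟩ := Ideal.Quotient.mk_surjective z
    have h' : qmk 4 (2 * z) = 0 := by rw [map_mul, map_ofNat]; exact h
    obtain ⟨y, hy⟩ := (qmk_eq_zero 4 _).mp h'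
    have : z = 2 * y := by
      have h2 : (2 : 𝓞 K) ≠ 0 := two_ne_zero
      apply mul_left_cancel₀ h2
      rw [hy]; push_cast; ring
    exact ⟨qmk 4 y, by rw [this, map_mul, map_ofNat]⟩
  · rintro ⟨y, rfl⟩
    linear_combination y * qm4_four (K := K)

lemma integral_half (y s : 𝓞 K) (h : y ^ 2 = 1 + 4 * s) : ∃ z, y - 1 = 2 * z := by
  set t : K := (algebraMap (𝓞 K) K y - 1) / 2 with ht
  have h' : (algebraMap (𝓞 K) K y) ^ 2 = 1 + 4 * algebraMap (𝓞 K) K s := by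
    rw [← map_pow, h, map_add, map_mul, map_one, map_ofNat]
  have hts : t ^ 2 + t = algebraMap (𝓞 K) K s := by
    rw [ht]; linear_combination h' / 4
  have hInteg : IsIntegral (𝓞 K) t := by
    refine ⟨Polynomial.X ^ 2 + Polynomial.X - Polynomial.C s, by monicity!, ?_⟩
    simp [hts]
  obtain ⟨z, hz⟩ := IsIntegrallyClosed.isIntegral_iff.mp hInteg
  refine ⟨z, RingOfIntegers.coe_injective ?_⟩
  rw [map_sub, map_mul, hz, ht, map_one, map_ofNat]
  ring

lemma qm4_sq_eq_one (y : QM (𝓞 K) 4) : y ^ 2 = 1 ↔ 2 * (y - 1) = 0 := by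
  constructor
  · intro h
    obtain ⟨y, rfl⟩ := Ideal.Quotient.mk_surjective y
    have h' : qmk 4 (y ^ 2 - 1) = 0 := by
      rw [map_sub, map_pow, map_one]; exact sub_eq_zero.mpr h
    obtain ⟨s, hs⟩ := (qmk_eq_zero 4 _).mp h'
    obtain ⟨z, hz⟩ := integral_half y s (by push_cast at hs; linear_combination hs)
    rw [qm4_two_mul]
    exact ⟨qmk 4 z, by rw [← map_one (qmk (O := 𝓞 K) 4), ← map_sub, hz, map_mul, map_ofNat]⟩
  · intro h
    obtain ⟨s, hs⟩ := (qm4_two_mul _).mp h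
    have : y = 1 + 2 * s := by linear_combination hs
    rw [this]
    linear_combination (s + s ^ 2) * qm4_four (K := K)

lemma card_qm4 : Nat.card (QM (𝓞 K) 4) = 4 ^ Module.finrank ℚ K := by
  have h := Ideal.absNorm_span_singleton ((4 : ℕ) : 𝓞 K)
  rw [Ideal.absNorm_apply, Submodule.cardQuot_apply] at h
  have h2 : ((4 : ℕ) : 𝓞 K) = algebraMap ℤ (𝓞 K) 4 := by simp
  rw [show Nat.card (QM (𝓞 K) 4) = _ from h, h2, Algebra.norm_algebraMap, Int.natAbs_pow,
    RingOfIntegers.rank]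
  rfl

lemma card_two_torsion : Nat.card {z : QM (𝓞 K) 4 // 2 * z = 0} = 2 ^ Module.finrank ℚ K := by
  let f : QM (𝓞 K) 4 →+ QM (𝓞 K) 4 := AddMonoidHom.mulLeft 2
  have hk : Nat.card f.ker = Nat.card {z : QM (𝓞 K) 4 // 2 * z = 0} :=
    Nat.card_congr (Equiv.subtypeEquivRight fun z => AddMonoidHom.mem_ker)
  have hr : Nat.card f.range = Nat.card {z : QM (𝓞 K) 4 // 2 * z = 0} := by
    refine Nat.card_congr (Equiv.subtypeEquivRight fun z => ?_)
    rw [qm4_two_mul]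
    exact ⟨fun ⟨y, hy⟩ => ⟨y, hy.symm⟩, fun ⟨y, hy⟩ => ⟨y, hy.symm⟩⟩
  have h := f.ker.card_mul_index
  rw [AddSubgroup.index_ker, hk, hr, card_qm4] at h
  have : (4 : ℕ) ^ Module.finrank ℚ K = 2 ^ Module.finrank ℚ K * 2 ^ Module.finrank ℚ K := by
    rw [← mul_pow]; norm_num
  rw [this] at h
  exact Nat.mul_self_inj.mp h

/-- The group of units modulo `4`. -/
abbrev G4 (K : Type*) [Field K] [NumberField K] := (QM (𝓞 K) 4)ˣ

/-- The subgroup of squares. -/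
abbrev Q4 (K : Type*) [Field K] [NumberField K] : Subgroup (G4 K) := (powMonoidHom 2 : G4 K →* G4 K).range

lemma card_G4 : Nat.card (G4 K) = 2 ^ Module.finrank ℚ K * Nat.card (Q4 K) := by
  have h := (powMonoidHom 2 : G4 K →* G4 K).ker.card_mul_index
  rw [Subgroup.index_ker] at h
  rw [← h]
  congr 1
  rw [← card_two_torsion (K := K)]
  refine Nat.card_congr
    { toFun := fun g => ⟨((g : G4 K) : QM (𝓞 K) 4) - 1, ?_⟩
      invFun := fun z => ⟨⟨1 + z, 1 + z, ?_, ?_⟩, ?_⟩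
      left_inv := ?_
      right_inv := ?_ }
  · have := g.2
    rw [MonoidHom.mem_ker, powMonoidHom_apply, Units.ext_iff, Units.val_pow_eq_pow_val] at this
    exact (qm4_sq_eq_one _).mp this
  · rw [← pow_two, qm4_sq_eq_one, add_sub_cancel_left]; exact z.2
  · rw [← pow_two, qm4_sq_eq_one, add_sub_cancel_left]; exact z.2
  · rw [MonoidHom.mem_ker, powMonoidHom_apply, Units.ext_iff, Units.val_pow_eq_pow_val]
    change (1 + (z : QM (𝓞 K) 4)) ^ 2 = 1
    rw [qm4_sq_eq_one, add_sub_cancel_left]; exact z.2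
  · intro g; ext; simp
  · intro z; ext; simp

lemma isPrim_traceChar (τ : 𝓞 K →+ ℤ) (hτ : ∀ x, (∀ y, (2 : ℤ) ∣ τ (x * y)) → ∃ z, x = 2 * z) :
    IsPrim (traceChar τ 4) := by
  intro s hs
  obtain ⟨x, rfl⟩ := Ideal.Quotient.mk_surjective s
  have h4 : ∀ y, (4 : ℤ) ∣ τ (x * y) := by
    intro y
    have h := hs (qmk 4 y)
    change traceChar τ 4 (qmk 4 y * qmk 4 x) = 1 at h
    rw [← map_mul, traceChar_eq_one, mul_comm] at h
    exact_mod_cast h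
  obtain ⟨z, rfl⟩ := hτ x fun y => (by norm_num : (2 : ℤ) ∣ 4).trans (h4 y)
  obtain ⟨w, rfl⟩ := hτ z fun y => by
    have h := h4 y
    have e : (2 : 𝓞 K) * z * y = ((2 : ℕ) : 𝓞 K) * (z * y) := by push_cast; ring
    rw [e, tau_nat_mul] at h
    push_cast at h
    omega
  exact (qmk_eq_zero 4 _).mpr ⟨w, by push_cast; ring⟩

theorem index_bound (τ : 𝓞 K →+ ℤ) (hτ : ∀ x, (∀ y, (2 : ℤ) ∣ τ (x * y)) → ∃ z, x = 2 * z)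
    (U : Subgroup (G4 K)) (hQU : Q4 K ≤ U)
    (hU : ∀ x ∈ U, ∀ y ∈ U, gsum (traceChar τ 4) (x : QM (𝓞 K) 4) * gsum (traceChar τ 4) (y : QM (𝓞 K) 4)
      = gsum (traceChar τ 4) 1 * gsum (traceChar τ 4) (x * y : QM (𝓞 K) 4)) :
    (Q4 K).relIndex U ^ 2 ≤ 2 ^ Module.finrank ℚ K := by
  classical
  have hfin : Finite (G4 K) := inferInstance
  let _ : Fintype (G4 K) := Fintype.ofFinite _
  have hp := isPrim_traceChar τ hτ
  have hb := isotropic_bound (G := G4 K) (fun g => gsum (traceChar τ 4) (g : QM (𝓞 K) 4))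
    ((Fintype.card (QM (𝓞 K) 4) : ℝ) * (Finset.card {z : QM (𝓞 K) 4 | 2 * z = 0} : ℝ))
    (by
      have h1 : 0 < Fintype.card (QM (𝓞 K) 4) := Fintype.card_pos
      have h2 : 0 < Finset.card {z : QM (𝓞 K) 4 | 2 * z = 0} :=
        Finset.card_pos.mpr ⟨0, by simp⟩
      positivity)
    (fun g => by
      rw [gsum_norm _ hp qm4_four (fun z => (qm4_two_mul z).mp) g]
      push_cast; rfl)
    (Q4 K)
    (by
      rintro g _ ⟨q, rfl⟩
      rw [powMonoidHom_apply, Units.val_mul, Units.val_pow_eq_pow_val]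
      exact gsum_mul_sq _ _ _)
    (by
      intro u hu
      have h := csum_four_zero (traceChar τ 4) hp (u : QM (𝓞 K) 4) (by
        rintro ⟨w, hw⟩
        apply hu
        have hwu : IsUnit w := by
          have : IsUnit (w ^ 2) := hw ▸ u.isUnit
          exact (isUnit_pow_iff two_ne_zero).mp this
        refine ⟨hwu.unit, ?_⟩
        ext
        rw [powMonoidHom_apply, Units.val_pow_eq_pow_val, hw]; rfl)
      rw [csum_eq] at h
      exact h)
    U hQU
    (by
      intro x hx y hy
      have := hU x hx y hy
      simpa using this)
  have hcU := Subgroup.relIndex_mul_relIndex ⊥ (Q4 K) U bot_le hQU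
  rw [Subgroup.relIndex_bot_left, Subgroup.relIndex_bot_left] at hcU
  have hQ : 0 < Nat.card (Q4 K) := Nat.card_pos
  rw [card_G4, ← hcU] at hb
  have : (Q4 K).relIndex U ^ 2 * (Nat.card (Q4 K)) ^ 2 ≤ 2 ^ Module.finrank ℚ K * (Nat.card (Q4 K)) ^ 2 := by
    calc _ = _ := by ring
      _ ≤ _ := hb
      _ = _ := by ring
  exact Nat.le_of_mul_le_mul_right this (by positivity)

end Counting

section TotPos

lemma GS_congr {K : Type*} [Field K] [NumberField K] (τ : 𝓞 K →+ ℤ) (M N : ℕ) [NeZero M] [NeZero N]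
    (h : M = N) (u : 𝓞 K) : GS τ M u = GS τ N u := by
  subst h; rfl

theorem totpos_mul {K : Type*} [Field K] [NumberField K] (c : K) (hc : c ≠ 0) (τ : 𝓞 K →+ ℤ)
    (hτc : ∀ x : 𝓞 K, (τ x : ℚ) = trMul c (x : K))
    (hτ : ∀ x, (∀ y, (2 : ℤ) ∣ τ (x * y)) → ∃ z, x = 2 * z)
    (ε η : (𝓞 K)ˣ) (hε : ε ∈ totPosUnits K) (hη : η ∈ totPosUnits K) :
    GS τ 4 (ε : 𝓞 K) * GS τ 4 (η : 𝓞 K) = GS τ 4 ((1 : (𝓞 K)ˣ) : 𝓞 K) * GS τ 4 ((ε * η : (𝓞 K)ˣ) : 𝓞 K) := by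
  classical
  obtain ⟨Ω, hΩ, H⟩ := GS_totpos c hc τ hτc
  obtain ⟨D1, h1, H1⟩ := H ε ε.ne_zero hε
  obtain ⟨D2, h2, H2⟩ := H η η.ne_zero hη
  obtain ⟨D3, h3, H3⟩ := H ((1 : (𝓞 K)ˣ) : 𝓞 K) (Units.ne_zero _) (totPosUnits K).one_mem
  obtain ⟨D4, h4, H4⟩ := H ((ε * η : (𝓞 K)ˣ) : 𝓞 K) (Units.ne_zero _) ((totPosUnits K).mul_mem hε hη)
  obtain ⟨k, m, hm, hkm⟩ := Nat.exists_eq_two_pow_mul_odd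
    (mul_ne_zero (mul_ne_zero h1 h2) (mul_ne_zero h3 h4))
  have hm0 : m ≠ 0 := by rintro rfl; simp at hm
  have : NeZero m := ⟨hm0⟩
  set N := 2 ^ (k + 1) * m with hN
  have hN' : N = 2 * (D1 * D2 * (D3 * D4)) := by rw [hN, hkm]; ring
  have hdiv : N ^ 2 = 4 ^ (k + 1) * m ^ 2 := by
    rw [hN, mul_pow, ← pow_mul, mul_comm (k + 1) 2, pow_mul]; norm_num
  have hcop : Nat.Coprime (4 ^ (k + 1)) (m ^ 2) := by
    apply Nat.Coprime.pow
    have : Nat.Coprime (2 ^ 2) m := Nat.Coprime.pow_left 2 (Nat.coprime_two_left.mpr hm)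
    simpa using this
  have comb : ∀ u : (𝓞 K)ˣ, (∃ r : ℝ, 0 < r ∧ GS τ (N ^ 2) (u : 𝓞 K) = r * Ω) →
      ∃ r : ℝ, 0 < r ∧ GS τ 4 (u : 𝓞 K) * GS τ (m ^ 2) (u : 𝓞 K) = r * Ω := by
    rintro u ⟨r, hr, h⟩
    obtain ⟨s, hs, hs'⟩ := GS_four_pow τ hτ k u
    rw [GS_congr τ _ _ hdiv, GS_mul τ (4 ^ (k + 1)) (m ^ 2) (2 ^ (k + 1)) m
      (by rw [← pow_mul, mul_comm (k + 1) 2, pow_mul]; norm_num) rfl hcop, hs'] at h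
    refine ⟨r / s, by positivity, ?_⟩
    have hs0 : (s : ℂ) ≠ 0 := by exact_mod_cast hs.ne'
    push_cast
    field_simp
    linear_combination h
  obtain ⟨r1, hr1, e1⟩ := comb ε (H1 N (by rw [hN']; exact ⟨2 * D2 * (D3 * D4), by ring⟩))
  obtain ⟨r2, hr2, e2⟩ := comb η (H2 N (by rw [hN']; exact ⟨2 * D1 * (D3 * D4), by ring⟩))
  obtain ⟨r3, hr3, e3⟩ := comb 1 (H3 N (by rw [hN']; exact ⟨2 * D1 * D2 * D4, by ring⟩))
  obtain ⟨r4, hr4, e4⟩ := comb (ε * η) (H4 N (by rw [hN']; exact ⟨2 * D1 * D2 * D3, by ring⟩))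
  have hodd : GS τ (m ^ 2) (ε : 𝓞 K) * GS τ (m ^ 2) (η : 𝓞 K) =
      GS τ (m ^ 2) ((1 : (𝓞 K)ˣ) : 𝓞 K) * GS τ (m ^ 2) ((ε * η : (𝓞 K)ˣ) : 𝓞 K) := by
    have hu2 : IsUnit (2 : QM (𝓞 K) (m ^ 2)) := by
      obtain ⟨j, hj⟩ := hm.pow (n := 2)
      have h0 := qmk_M (O := 𝓞 K) (m ^ 2)
      have h0' : ((2 * j + 1 : ℕ) : QM (𝓞 K) (m ^ 2)) = 0 := by rw [← hj]; exact h0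
      push_cast at h0'
      exact IsUnit.of_mul_eq_one (-(j : QM (𝓞 K) (m ^ 2))) (by linear_combination -h0')
    have h := gsum_odd_mul hu2 (traceChar τ (m ^ 2)) (Units.map (qmk (m ^ 2)).toMonoidHom ε)
      (Units.map (qmk (m ^ 2)).toMonoidHom η)
    unfold GS
    rw [Units.val_one, map_one, Units.val_mul, map_mul]
    exact h
  have hp := isPrim_traceChar τ hτ
  have hnorm : ∀ u : (𝓞 K)ˣ, GS τ 4 (u : 𝓞 K) * (starRingEnd ℂ) (GS τ 4 (u : 𝓞 K)) =
      (Fintype.card (QM (𝓞 K) 4) : ℂ) * (Finset.card {z : QM (𝓞 K) 4 | 2 * z = 0} : ℂ) := fun u =>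
    gsum_norm _ hp qm4_four (fun z => (qm4_two_mul z).mp) (Units.map (qmk 4).toMonoidHom u)
  have hn : ∀ u v : (𝓞 K)ˣ, ‖GS τ 4 (u : 𝓞 K)‖ = ‖GS τ 4 (v : 𝓞 K)‖ := by
    intro u v
    have h := (hnorm u).trans (hnorm v).symm
    rw [Complex.mul_conj, Complex.mul_conj, Complex.normSq_eq_norm_sq, Complex.normSq_eq_norm_sq] at h
    have h' : ‖GS τ 4 (u : 𝓞 K)‖ ^ 2 = ‖GS τ 4 (v : 𝓞 K)‖ ^ 2 := by exact_mod_cast h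
    exact (sq_eq_sq₀ (norm_nonneg _) (norm_nonneg _)).mp h'
  set X := GS τ 4 (ε : 𝓞 K) * GS τ 4 (η : 𝓞 K) with hX
  set Y := GS τ 4 ((1 : (𝓞 K)ˣ) : 𝓞 K) * GS τ 4 ((ε * η : (𝓞 K)ˣ) : 𝓞 K) with hY
  set W := GS τ (m ^ 2) (ε : 𝓞 K) * GS τ (m ^ 2) (η : 𝓞 K) with hW
  have hXW : X * W = ((r1 * r2 : ℝ) : ℂ) * Ω ^ 2 := by
    rw [hX, hW]; push_cast
    linear_combination (GS τ 4 (η : 𝓞 K) * GS τ (m ^ 2) (η : 𝓞 K)) * e1 + r1 * Ω * e2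
  have hYW : Y * W = ((r3 * r4 : ℝ) : ℂ) * Ω ^ 2 := by
    rw [hY, hodd]; push_cast
    linear_combination (GS τ 4 ((ε * η : (𝓞 K)ˣ) : 𝓞 K) * GS τ (m ^ 2) ((ε * η : (𝓞 K)ˣ) : 𝓞 K)) * e3 + r3 * Ω * e4
  have hXY : ‖X‖ = ‖Y‖ := by
    rw [hX, hY, norm_mul, norm_mul, hn ε 1, hn η (ε * η)]
  clear_value X Y W
  have hr : r1 * r2 = r3 * r4 := by
    have ha := congrArg norm hXW
    have hb := congrArg norm hYW
    rw [norm_mul, norm_mul, Complex.norm_real, Real.norm_of_nonneg (mul_pos hr1 hr2).le] at ha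
    rw [norm_mul, norm_mul, Complex.norm_real, Real.norm_of_nonneg (mul_pos hr3 hr4).le] at hb
    rw [hXY, hb] at ha
    have hO : ‖Ω ^ 2‖ ≠ 0 := by simp [hΩ]
    exact (mul_right_cancel₀ hO ha).symm
  have hW0 : W ≠ 0 := by
    intro h
    rw [h, mul_zero] at hXW
    have : ((r1 * r2 : ℝ) : ℂ) ≠ 0 := by exact_mod_cast (mul_pos hr1 hr2).ne'
    exact mul_ne_zero this (pow_ne_zero 2 hΩ) hXW.symm
  apply mul_right_cancel₀ hW0
  rw [hXW, hYW, hr]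

/-- Reduction of units modulo `4`. -/
noncomputable def red4 (K : Type*) [Field K] [NumberField K] : (𝓞 K)ˣ →* G4 K :=
  Units.map (qmk 4).toMonoidHom

theorem index_totpos (K : Type*) [Field K] [NumberField K] :
    ((Q4 K).comap (red4 K)).relIndex (totPosUnits K) ^ 2 ≤ 2 ^ Module.finrank ℚ K := by
  obtain ⟨c, hc, τ, hτc, hτ⟩ := exists_generator (K := K)
  have h := index_bound τ hτ ((totPosUnits K).map (red4 K) ⊔ Q4 K) le_sup_right (by
    intro x hx y hy
    obtain ⟨_, ⟨ε, hε, rfl⟩, _, ⟨g, rfl⟩, rfl⟩ := Subgroup.mem_sup.mp hx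
    obtain ⟨_, ⟨η, hη, rfl⟩, _, ⟨g', rfl⟩, rfl⟩ := Subgroup.mem_sup.mp hy
    have key := totpos_mul c hc τ hτc hτ ε η hε hη
    unfold GS at key
    rw [Units.val_one, map_one, Units.val_mul, map_mul] at key
    rw [Units.val_mul, Units.val_mul, powMonoidHom_apply, powMonoidHom_apply,
      Units.val_pow_eq_pow_val, Units.val_pow_eq_pow_val]
    have e : ((red4 K ε : G4 K) : QM (𝓞 K) 4) * (g : QM (𝓞 K) 4) ^ 2 *
        (((red4 K η : G4 K) : QM (𝓞 K) 4) * (g' : QM (𝓞 K) 4) ^ 2) =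
        ((red4 K ε : G4 K) : QM (𝓞 K) 4) * ((red4 K η : G4 K) : QM (𝓞 K) 4) *
          ((g * g' : G4 K) : QM (𝓞 K) 4) ^ 2 := by rw [Units.val_mul]; ring
    rw [e, gsum_mul_sq, gsum_mul_sq, gsum_mul_sq]
    exact key)
  rw [Subgroup.relIndex_sup_right] at h
  rw [Subgroup.relIndex_comap]
  exact h

lemma tensor_unit_odd (K : Type*) [Field K] [NumberField K] (b : ℕ) (hb : Odd b) :
    IsUnit ((b : ℕ) : 𝓞 K ⊗[ℤ] ℤ_[2]) := by
  have h : IsUnit (b : ℤ_[2]) := by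
    rw [PadicInt.isUnit_iff, PadicInt.norm_natCast_eq_one_iff]
    exact Nat.coprime_two_left.mpr hb
  have h' := h.map (Algebra.TensorProduct.includeRight : ℤ_[2] →ₐ[ℤ] 𝓞 K ⊗[ℤ] ℤ_[2])
  rwa [map_natCast] at h'

lemma ok2_unit_odd (K : Type*) [Field K] [NumberField K] (b : ℕ) (hb : Odd b) :
    IsUnit ((b : ℕ) : OK2 K) := by
  have h := tensor_unit_odd K b hb
  with_unfolding_all exact h

lemma iota_unit_of_one_sub (K : Type*) [Field K] [NumberField K] (s : 𝓞 K) :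
    IsUnit (iota K (1 - 4 * s)) := by
  have h0 : (1 - 4 * s : 𝓞 K) ≠ 0 := by
    intro h
    exact two_not_unit (K := K) ⟨2 * s, by linear_combination h⟩
  have hN : Ideal.absNorm (Ideal.span {(1 - 4 * s : 𝓞 K)}) ≠ 0 := by
    rw [Ne, Ideal.absNorm_eq_zero_iff, Ideal.span_singleton_eq_bot]; exact h0
  obtain ⟨k, b, hb, hkb⟩ := Nat.exists_eq_two_pow_mul_odd hN
  have hmem := Ideal.absNorm_mem (Ideal.span {(1 - 4 * s : 𝓞 K)})
  rw [hkb, Ideal.mem_span_singleton] at hmem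
  push_cast at hmem
  have hcop : IsCoprime (1 - 4 * s : 𝓞 K) (2 ^ k) :=
    IsCoprime.pow_right ⟨1, 2 * s, by ring⟩
  have hdvd : (1 - 4 * s : 𝓞 K) ∣ (b : 𝓞 K) := hcop.dvd_of_dvd_mul_left hmem
  have h2 := map_dvd (iota K) hdvd
  rw [map_natCast] at h2
  exact isUnit_of_dvd_unit h2 (ok2_unit_odd K b hb)

lemma fourPlus_le (K : Type*) [Field K] [NumberField K] :
    (Q4 K).comap (red4 K) ⊓ totPosUnits K ≤ unitsFourPlus K := by
  rintro ε ⟨⟨g, hg⟩, hε⟩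
  refine ⟨hε, ?_⟩
  obtain ⟨y, hy⟩ := Ideal.Quotient.mk_surjective (g : QM (𝓞 K) 4)
  have h1 : qmk 4 (y ^ 2 - ε) = 0 := by
    have := congrArg (fun u : G4 K => (u : QM (𝓞 K) 4)) hg
    simp only [powMonoidHom_apply, Units.val_pow_eq_pow_val] at this
    rw [map_sub, map_pow]
    rw [← hy] at this
    exact sub_eq_zero.mpr this
  obtain ⟨s, hs⟩ := (qmk_eq_zero 4 _).mp h1
  have h2 : y ^ 2 = ε * (1 - 4 * (-(s * ((ε⁻¹ : (𝓞 K)ˣ) : 𝓞 K)))) := by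
    push_cast at hs
    linear_combination hs - 4 * s * ε.mul_inv
  have hu : IsUnit (iota K y) := by
    have : IsUnit (iota K (y ^ 2)) := by
      rw [h2, map_mul]
      exact (ε.isUnit.map (iota K)).mul (iota_unit_of_one_sub K _)
    rw [map_pow] at this
    exact (isUnit_pow_iff two_ne_zero).mp this
  obtain ⟨w, hw⟩ := hu
  refine ⟨-(iota K s) * ((w⁻¹ : (OK2 K)ˣ) : OK2 K) ^ 2, w, ?_⟩
  change iota K ε = _
  have h3 : (ε : 𝓞 K) = y ^ 2 - 4 * s := by push_cast at hs; linear_combination -hs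
  rw [h3, map_sub, map_mul, map_pow, map_ofNat, ← hw]
  have h4 := w.mul_inv
  have h5 : (w : OK2 K) ^ 2 * ((w⁻¹ : (OK2 K)ˣ) : OK2 K) ^ 2 = 1 := by rw [← mul_pow, h4, one_pow]
  linear_combination 4 * iota K s * h5

lemma sq_le_totPos (K : Type*) [Field K] [NumberField K] :
    (powMonoidHom 2 : (𝓞 K)ˣ →* (𝓞 K)ˣ).range ≤ totPosUnits K := by
  rintro _ ⟨u, rfl⟩ φ
  rw [powMonoidHom_apply, Units.val_pow_eq_pow_val, map_pow, map_pow]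
  have : φ (algebraMap (𝓞 K) K u) ≠ 0 := by
    rw [Ne, map_eq_zero]
    simp
  positivity

lemma sq_le_fourPlus (K : Type*) [Field K] [NumberField K] :
    (powMonoidHom 2 : (𝓞 K)ˣ →* (𝓞 K)ˣ).range ≤ unitsFourPlus K := by
  refine le_trans (le_inf ?_ (sq_le_totPos K)) (fourPlus_le K)
  rintro _ ⟨u, rfl⟩
  exact ⟨red4 K u, by simp⟩

theorem units_four_plus_rank' (K : Type*) [Field K] [NumberField K] (d₁ d₂ : ℕ)
    (hd₁ : Nat.card (unitsFourPlus K ⧸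
      ((powMonoidHom 2 : (𝓞 K)ˣ →* (𝓞 K)ˣ).range).subgroupOf (unitsFourPlus K)) = 2 ^ d₁)
    (hd₂ : Nat.card (totPosUnits K ⧸
      ((powMonoidHom 2 : (𝓞 K)ˣ →* (𝓞 K)ˣ).range).subgroupOf (totPosUnits K)) = 2 ^ d₂) :
    d₂ - Module.finrank ℚ K / 2 ≤ d₁ := by
  have e1 : (powMonoidHom 2 : (𝓞 K)ˣ →* (𝓞 K)ˣ).range.relIndex (unitsFourPlus K) = 2 ^ d₁ := hd₁
  have e2 : (powMonoidHom 2 : (𝓞 K)ˣ →* (𝓞 K)ˣ).range.relIndex (totPosUnits K) = 2 ^ d₂ := hd₂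
  have e3 := Subgroup.relIndex_mul_relIndex _ _ _ (sq_le_fourPlus K)
    (inf_le_left : unitsFourPlus K ≤ totPosUnits K)
  rw [e1, e2] at e3
  set i := (unitsFourPlus K).relIndex (totPosUnits K) with hi
  have hj := index_totpos K
  rw [← Subgroup.inf_relIndex_right] at hj
  have hdvd : i ∣ ((Q4 K).comap (red4 K) ⊓ totPosUnits K).relIndex (totPosUnits K) :=
    Subgroup.relIndex_dvd_of_le_left _ (fourPlus_le K)
  have hj0 : ((Q4 K).comap (red4 K) ⊓ totPosUnits K).relIndex (totPosUnits K) ≠ 0 := by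
    rw [Subgroup.inf_relIndex_right, Subgroup.relIndex_comap]
    have : Finite (G4 K) := inferInstance
    exact ne_zero_of_dvd_ne_zero Nat.card_pos.ne' (Subgroup.relIndex_dvd_card _ _)
  have hle := Nat.le_of_dvd (Nat.pos_of_ne_zero hj0) hdvd
  have hi2 : i ^ 2 ≤ 2 ^ Module.finrank ℚ K := (Nat.pow_le_pow_left hle 2).trans hj
  have h4 : 2 ^ (2 * d₂) ≤ 2 ^ (2 * d₁ + Module.finrank ℚ K) := by
    calc 2 ^ (2 * d₂) = (2 ^ d₂) ^ 2 := by rw [← pow_mul, mul_comm]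
      _ = (2 ^ d₁) ^ 2 * i ^ 2 := by rw [← e3, mul_pow]
      _ ≤ (2 ^ d₁) ^ 2 * 2 ^ Module.finrank ℚ K := Nat.mul_le_mul_left _ hi2
      _ = 2 ^ (2 * d₁ + Module.finrank ℚ K) := by rw [← pow_mul, mul_comm d₁ 2, pow_add]
  have h5 := (Nat.pow_le_pow_iff_right (by norm_num)).mp h4
  omega

end TotPos

/-- Let `K` be a number field of degree `n` with `r₁ > 0` real places, and let `E_{K,4}⁺`
denote the group of totally positive units `ε ∈ E_K` whose image in `O_{K,2}ˣ` lies in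
`(1 + 4·O_{K,2})·O_{K,2}ˣ²`.  Then
`dim_{𝔽₂}(E_{K,4}⁺/E_K²) ≥ dim_{𝔽₂}(E_K⁺/E_K²) − ⌊n/2⌋`, where `E_K⁺` is the group of
totally positive units of `K`. -/
theorem units_four_plus_rank (r₁ d₁ d₂ : ℕ)
    (hr₁ : Nat.card (K →+* ℝ) = r₁)
    (hr₁pos : 0 < r₁)
    (hd₁ : Nat.card (unitsFourPlus K ⧸
      ((powMonoidHom 2 : (𝓞 K)ˣ →* (𝓞 K)ˣ).range).subgroupOf (unitsFourPlus K)) = 2 ^ d₁)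
    (hd₂ : Nat.card (totPosUnits K ⧸
      ((powMonoidHom 2 : (𝓞 K)ˣ →* (𝓞 K)ˣ).range).subgroupOf (totPosUnits K)) = 2 ^ d₂) :
    d₂ - Module.finrank ℚ K / 2 ≤ d₁ := by
  exact units_four_plus_rank' K d₁ d₂ hd₁ hd₂
end

section
/- Let K be a number field of odd degree over ℚ, and let O_{K,2} = O_K ⊗_ℤ ℤ₂. Then −1 ∉ (1 + 4O_{K,2})·O_{K,2}ˣ²; that is, the image of −1 in the 2-adic signature space V₂ = O_{K,2}ˣ/((1 + 4O_{K,2})·O_{K,2}ˣ²) is nontrivial. -/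
open NumberField
open scoped TensorProduct

variable (K : Type*) [Field K] [NumberField K]

/-- The 2-adic signature space `V₂ = O_{K,2}ˣ/((1 + 4·O_{K,2})·O_{K,2}ˣ²)`. -/
abbrev V2 := (OK2 K)ˣ ⧸ modFourSquares K

/-- Unfolding of the definition of `OK2`. -/
theorem OK2_exists_hom : Nonempty (OK2 K →+* (𝓞 K ⊗[ℤ] ℤ_[2])) := by
  with_unfolding_all exact ⟨RingHom.id (𝓞 K ⊗[ℤ] ℤ_[2])⟩

/-- Reduction modulo `4`. -/
theorem OK2_exists_hom_four : Nonempty (OK2 K →+* (ZMod 4 ⊗[ℤ] 𝓞 K)) := by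
  obtain ⟨f⟩ := OK2_exists_hom K
  let g : ℤ_[2] →+* ZMod 4 := PadicInt.toZModPow (p := 2) 2
  let h : (𝓞 K ⊗[ℤ] ℤ_[2]) →ₐ[ℤ] (𝓞 K ⊗[ℤ] ZMod 4) :=
    Algebra.TensorProduct.map (AlgHom.id ℤ (𝓞 K)) g.toIntAlgHom
  let c : (𝓞 K ⊗[ℤ] ZMod 4) ≃ₐ[ℤ] (ZMod 4 ⊗[ℤ] 𝓞 K) := Algebra.TensorProduct.comm ℤ _ _
  exact ⟨(c.toAlgHom.comp h).toRingHom.comp f⟩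

theorem neg_one_notMem_modFourSquares (hodd : Odd (Module.finrank ℚ K)) :
    (-1 : (OK2 K)ˣ) ∉ modFourSquares K := by
  rintro ⟨a, y, h⟩
  obtain ⟨f⟩ := OK2_exists_hom_four K
  haveI : Fact (1 < 4) := ⟨by norm_num⟩
  haveI : Nontrivial (ZMod 4) := ZMod.nontrivial 4
  have h4 : (4 : ZMod 4 ⊗[ℤ] 𝓞 K) = 0 := by
    have := map_ofNat (algebraMap (ZMod 4) (ZMod 4 ⊗[ℤ] 𝓞 K)) 4
    rw [← this, show (OfNat.ofNat 4 : ZMod 4) = 0 from rfl, map_zero]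
  have h1 : (-1 : ZMod 4 ⊗[ℤ] 𝓞 K) = f y ^ 2 := by
    have := congrArg f h
    rw [Units.val_neg, Units.val_one] at this
    rw [map_mul, map_add, map_mul, map_ofNat, h4, zero_mul, add_zero, map_one, one_mul,
      map_neg, map_one, map_pow] at this
    exact this
  have hr : Module.finrank (ZMod 4) (ZMod 4 ⊗[ℤ] 𝓞 K) = Module.finrank ℚ K := by
    rw [Module.finrank_baseChange, RingOfIntegers.rank]
  have h2 : algebraMap (ZMod 4) (ZMod 4 ⊗[ℤ] 𝓞 K) (-1) = f y ^ 2 := by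
    rw [← h1, map_neg, map_one]
  have h3 := congrArg (Algebra.norm (ZMod 4)) h2
  rw [Algebra.norm_algebraMap_of_basis
    (Module.Free.chooseBasis (ZMod 4) (ZMod 4 ⊗[ℤ] 𝓞 K)),
    ← Module.finrank_eq_card_chooseBasisIndex, hr, hodd.neg_one_pow, map_pow] at h3
  revert h3
  generalize Algebra.norm (ZMod 4) (f y) = n
  revert n
  decide

/-- Let `K` be a number field of odd degree over `ℚ`, and `O_{K,2} = O_K ⊗_ℤ ℤ₂`.  Then
`−1 ∉ (1 + 4·O_{K,2})·O_{K,2}ˣ²`; that is, the image of `−1` in the 2-adic signature space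
`V₂ = O_{K,2}ˣ/((1 + 4·O_{K,2})·O_{K,2}ˣ²)` is nontrivial. -/
theorem neg_one_nontrivial_in_v2 (hodd : Odd (Module.finrank ℚ K)) :
    (-1 : (OK2 K)ˣ) ∉ modFourSquares K ∧
    QuotientGroup.mk (s := modFourSquares K) (-1 : (OK2 K)ˣ) ≠ (1 : V2 K) := by
  have h := neg_one_notMem_modFourSquares K hodd
  exact ⟨h, fun e => h ((QuotientGroup.eq_one_iff _).1 e)⟩
end

section
/- Let F be a perfect field of characteristic 2 and let 𝒦, 𝒦′ be finite-dimensional F-vector spaces with nondegenerate symmetric bilinear forms whose dimensions have the same parity. Suppose S̃ is a maximal totally isotropic subspace of the orthogonal direct sum 𝒦 ⊥ 𝒦′ satisfying S̃ ∩ 𝒦 = S̃ ∩ 𝒦′ = 0. Then 𝒦 and 𝒦′ are isometric, and there is a unique isometry τ : 𝒦 → 𝒦′ such that S̃ = {w + τw : w ∈ 𝒦}; in particular dim 𝒦 = dim 𝒦′ = dim S̃. -/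
open Finset

variable {F W W' : Type*} [Field F] [PerfectField F] [CharP F 2]
  [AddCommGroup W] [Module F W] [FiniteDimensional F W]
  [AddCommGroup W'] [Module F W'] [FiniteDimensional F W']

/-- The bilinear form on the orthogonal direct sum `W ⊥ W'` of two bilinear form spaces. -/
def orthSumForm (b : W →ₗ[F] W →ₗ[F] F) (b' : W' →ₗ[F] W' →ₗ[F] F)
    (x y : W × W') : F :=
  b x.1 y.1 + b' x.2 y.2

/-- A subspace of `W ⊥ W'` is totally isotropic. -/
def IsTotallyIsotropic (b : W →ₗ[F] W →ₗ[F] F) (b' : W' →ₗ[F] W' →ₗ[F] F)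
    (S : Submodule F (W × W')) : Prop :=
  ∀ x ∈ S, ∀ y ∈ S, orthSumForm b b' x y = 0

/-- A subspace of `W ⊥ W'` is maximal totally isotropic. -/
def IsMaxTotallyIsotropic (b : W →ₗ[F] W →ₗ[F] F) (b' : W' →ₗ[F] W' →ₗ[F] F)
    (S : Submodule F (W × W')) : Prop :=
  IsTotallyIsotropic b b' S ∧
    ∀ T : Submodule F (W × W'), IsTotallyIsotropic b b' T → S ≤ T → T = S

/-- Let `F` be a perfect field of characteristic 2 and let `𝒦 = W`, `𝒦′ = W'` be
finite-dimensional `F`-vector spaces with nondegenerate symmetric bilinear forms whose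
dimensions have the same parity.  Suppose `S̃` is a maximal totally isotropic subspace of the
orthogonal direct sum `𝒦 ⊥ 𝒦′` satisfying `S̃ ∩ 𝒦 = S̃ ∩ 𝒦′ = 0`.  Then `𝒦` and `𝒦′` are
isometric, and there is a unique isometry `τ : 𝒦 → 𝒦′` such that
`S̃ = {w + τw : w ∈ 𝒦}`; in particular `dim 𝒦 = dim 𝒦′ = dim S̃`. -/
theorem diagonal_subspace_of_maximal_totally_isotropic
    (b : W →ₗ[F] W →ₗ[F] F) (b' : W' →ₗ[F] W' →ₗ[F] F)
    (hsymm : ∀ x y, b x y = b y x) (hsymm' : ∀ x y, b' x y = b' y x)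
    (hnd : ∀ x, (∀ y, b x y = 0) → x = 0) (hnd' : ∀ x, (∀ y, b' x y = 0) → x = 0)
    (hpar : Module.finrank F W % 2 = Module.finrank F W' % 2)
    (S : Submodule F (W × W'))
    (hS : IsMaxTotallyIsotropic b b' S)
    (hSW : S ⊓ LinearMap.range (LinearMap.inl F W W') = ⊥)
    (hSW' : S ⊓ LinearMap.range (LinearMap.inr F W W') = ⊥) :
    (∃! τ : W ≃ₗ[F] W', (∀ x y : W, b' (τ x) (τ y) = b x y) ∧
      S = LinearMap.graph (τ : W →ₗ[F] W')) ∧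
    Module.finrank F W = Module.finrank F W' ∧
    Module.finrank F W' = Module.finrank F S := by
  set B : LinearMap.BilinForm F (W × W') :=
    b.compl₁₂ (LinearMap.fst F W W') (LinearMap.fst F W W') +
      b'.compl₁₂ (LinearMap.snd F W W') (LinearMap.snd F W W') with hBdef
  have hB : ∀ x y, B x y = b x.1 y.1 + b' x.2 y.2 := fun x y => by simp [hBdef]
  have hBs : ∀ x y, B x y = B y x := fun x y => by
    rw [hB, hB, hsymm, hsymm']
  have hrefl : B.IsRefl := fun x y h => by rw [hBs]; exact h
  have hl : ∀ x, (∀ y, B x y = 0) → x = 0 := by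
    intro x hx
    refine Prod.ext (hnd _ fun y => ?_) (hnd' _ fun y => ?_)
    · simpa [hB] using hx (y, 0)
    · simpa [hB] using hx (0, y)
  have hBn : B.Nondegenerate :=
    ⟨fun x hx => hl x hx, fun x hx => hl x fun y => by rw [hBs]; exact hx y⟩
  obtain ⟨hiso, hmax⟩ := hS
  have hiso' : ∀ x ∈ S, ∀ y ∈ S, B x y = 0 := fun x hx y hy => by
    rw [hB]; exact hiso x hx y hy
  set P := B.orthogonal S with hP
  have hPm : ∀ x, x ∈ P ↔ ∀ y ∈ S, B y x = 0 := fun x => Iff.rfl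
  have hSP : S ≤ P := fun x hx => (hPm x).2 fun y hy => hiso' y hy x hx
  have key : ∀ x ∈ P, B x x = 0 → x ∈ S := by
    intro x hx hxx
    have h := hmax (S ⊔ Submodule.span F {x}) (by
      intro u hu v hv
      change b u.1 v.1 + b' u.2 v.2 = 0
      rw [← hB]
      obtain ⟨s, hs, _, ht, rfl⟩ := Submodule.mem_sup.1 hu
      obtain ⟨s', hs', _, ht', rfl⟩ := Submodule.mem_sup.1 hv
      obtain ⟨c, rfl⟩ := Submodule.mem_span_singleton.1 ht
      obtain ⟨c', rfl⟩ := Submodule.mem_span_singleton.1 ht'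
      have h1 := (hPm x).1 hx s hs
      have h2 := (hPm x).1 hx s' hs'
      rw [hBs] at h2
      simp [hiso' s hs s' hs', h1, h2, hxx]) le_sup_left
    rw [← h]
    exact Submodule.mem_sup_right (Submodule.mem_span_singleton_self x)
  have h2 : (2 : F) = 0 := CharTwo.two_eq_zero
  have hle : Module.finrank F P ≤ Module.finrank F S + 1 := by
    by_cases hex : ∃ x ∈ P, x ∉ S
    · obtain ⟨x, hx, hxS⟩ := hex
      have hxx : B x x ≠ 0 := fun h => hxS (key x hx h)
      have hPle : P ≤ S ⊔ Submodule.span F {x} := by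
        intro y hy
        have : ExpChar F 2 := ExpChar.prime Nat.prime_two
        obtain ⟨c, hc⟩ := (PerfectRing.bijective_frobenius (R := F) (p := 2)).2 (B y y / B x x)
        have hc : c ^ 2 = B y y / B x x := hc
        have hc : c ^ 2 * B x x = B y y := by rw [hc]; field_simp
        have hm : y - c • x ∈ S := by
          refine key _ (P.sub_mem hy (P.smul_mem c hx)) ?_
          simp only [map_sub, map_smul, LinearMap.sub_apply, LinearMap.smul_apply, smul_eq_mul]
          rw [hBs x y]
          linear_combination hc + (B y y - c * B y x) * h2
        refine Submodule.mem_sup.2 ⟨_, hm, c • x, Submodule.mem_span_singleton.2 ⟨c, rfl⟩, ?_⟩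
        simp
      calc Module.finrank F P ≤ Module.finrank F ↥(S ⊔ Submodule.span F {x}) :=
            Submodule.finrank_mono hPle
        _ ≤ Module.finrank F S + Module.finrank F (Submodule.span F {x}) :=
            Submodule.finrank_add_le_finrank_add_finrank _ _
        _ ≤ _ := by
            have := finrank_span_singleton (K := F) (v := x) (by rintro rfl; exact hxS S.zero_mem)
            omega
    · push Not at hex
      have := Submodule.finrank_mono (show P ≤ S from hex)
      omega
  have hdim := LinearMap.BilinForm.finrank_orthogonal hBn S
  rw [← hP, Module.finrank_prod] at hdim
  have hinj1 : Function.Injective ((LinearMap.fst F W W').domRestrict S) := by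
    rw [← LinearMap.ker_eq_bot, LinearMap.ker_eq_bot']
    rintro ⟨⟨x, y⟩, hm⟩ h
    have h : x = 0 := h
    subst h
    have : ((0 : W), y) ∈ S ⊓ LinearMap.range (LinearMap.inr F W W') := ⟨hm, y, rfl⟩
    rw [hSW'] at this
    exact Subtype.ext this
  have hinj2 : Function.Injective ((LinearMap.snd F W W').domRestrict S) := by
    rw [← LinearMap.ker_eq_bot, LinearMap.ker_eq_bot']
    rintro ⟨⟨x, y⟩, hm⟩ h
    have h : y = 0 := h
    subst h
    have : (x, (0 : W')) ∈ S ⊓ LinearMap.range (LinearMap.inl F W W') := ⟨hm, x, rfl⟩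
    rw [hSW] at this
    exact Subtype.ext this
  have hd1 := LinearMap.finrank_le_finrank_of_injective hinj1
  have hd2 := LinearMap.finrank_le_finrank_of_injective hinj2
  have e1 : Module.finrank F S = Module.finrank F W := by omega
  have e2 : Module.finrank F S = Module.finrank F W' := by omega
  refine ⟨?_, by omega, by omega⟩
  let f := LinearEquiv.ofInjectiveOfFinrankEq _ hinj1 e1
  let g := LinearEquiv.ofInjectiveOfFinrankEq _ hinj2 e2
  have hf : ∀ s : S, f s = s.1.1 := fun s => rfl
  have hg : ∀ s : S, g s = s.1.2 := fun s => rfl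
  have hτ : ∀ x, (x, (f.symm.trans g) x) = (f.symm x).1 := fun x =>
    Prod.ext (by rw [← hf]; simp) (by rw [← hg]; simp)
  have hmem : ∀ x, (x, (f.symm.trans g) x) ∈ S := fun x => by
    rw [hτ]; exact (f.symm x).2
  refine ⟨f.symm.trans g, ⟨fun x y => ?_, ?_⟩, ?_⟩
  · have h := hiso' _ (hmem x) _ (hmem y)
    rw [hB] at h
    simp only at h
    linear_combination h - b x y * h2
  · ext ⟨x, y⟩
    rw [LinearMap.mem_graph_iff]
    constructor
    · intro h
      have : f.symm x = ⟨(x, y), h⟩ := by rw [LinearEquiv.symm_apply_eq, hf]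
      change y = g (f.symm x)
      rw [this, hg]
    · intro h
      have h : y = (f.symm.trans g) x := h
      rw [h]; exact hmem x
  · rintro σ ⟨-, hσ⟩
    ext x
    have h := (LinearMap.mem_graph_iff _ _).1 (hσ.le (hmem x))
    exact h.symm
end

section
/- (Structure Theorem) Let F be a perfect field of characteristic 2, let W and W′ be finite-dimensional F-vector spaces with nondegenerate symmetric bilinear forms b, b′ of dimensions n and n′ of the same parity, and let S be a maximal totally isotropic subspace of V = W ⊥ W′. Set U = S ∩ W with k = dim U and U′ = S ∩ W′ with k′ = dim U′. Then: (a) n − n′ = 2(k − k′); (b) U and U′ have compatible isotropy types; and (c) for any vector-space complement 𝒦 of U in U^⊥ (orthogonal complement taken in W) and any vector-space complement 𝒦′ of U′ in U′^⊥ (taken in W′), there is a unique isometry τ : 𝒦 → 𝒦′ such that S = U ⊕ S̃ ⊕ U′ where S̃ = {w + τw : w ∈ 𝒦}. -/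
open Finset

variable {F W W' : Type*} [Field F] [PerfectField F] [CharP F 2]
  [AddCommGroup W] [Module F W] [FiniteDimensional F W]
  [AddCommGroup W'] [Module F W'] [FiniteDimensional F W']

/-- The orthogonal complement `U^⊥ = {w : b(w,u) = 0 for all u ∈ U}` of a subspace. -/
def orthComp {M : Type*} [AddCommGroup M] [Module F M]
    (c : M →ₗ[F] M →ₗ[F] F) (U : Submodule F M) : Submodule F M where
  carrier := {w | ∀ u ∈ U, c w u = 0}
  zero_mem' := fun u _ => by simp
  add_mem' := by
    intro x y hx hy u hu
    rw [map_add, LinearMap.add_apply, hx u hu, hy u hu, add_zero]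
  smul_mem' := by
    intro r x hx u hu
    rw [map_smul, LinearMap.smul_apply, hx u hu, smul_zero]

/-- The radical of the restriction of the form `c` to the alternating subspace
`M_alt = {w : c(w,w) = 0}`. -/
def altRadical {M : Type*} [AddCommGroup M] [Module F M]
    (c : M →ₗ[F] M →ₗ[F] F) : Set M :=
  {w | c w w = 0 ∧ ∀ u, c u u = 0 → c w u = 0}

theorem aux_nondeg {M : Type*} [AddCommGroup M] [Module F M]
    (c : LinearMap.BilinForm F M) (hs : ∀ x y, c x y = c y x)
    (hn : ∀ x, (∀ y, c x y = 0) → x = 0) : c.Nondegenerate :=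
  ⟨hn, fun y hy => hn y fun x => by rw [hs]; exact hy x⟩

/-- The vector representing the square root of the norm. -/
theorem aux_exists_e {M : Type*} [AddCommGroup M] [Module F M] [FiniteDimensional F M]
    (c : LinearMap.BilinForm F M) (hs : ∀ x y, c x y = c y x)
    (hn : ∀ x, (∀ y, c x y = 0) → x = 0) : ∃ e, ∀ x, c x x = (c x e) ^ 2 := by
  have : ExpChar F 2 := ExpChar.prime Nat.prime_two
  let f : M →ₗ[F] F :=
    { toFun := fun x => (frobeniusEquiv F 2).symm (c x x)
      map_add' := by
        intro x y
        rw [← map_add]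
        congr 1
        simp only [map_add, LinearMap.add_apply]
        rw [hs y x]
        have : (2 : F) = 0 := CharTwo.two_eq_zero
        linear_combination (c x y) * this
      map_smul' := by
        intro r x
        simp only [map_smul, LinearMap.smul_apply, smul_eq_mul, RingHom.id_apply]
        apply (frobeniusEquiv F 2).injective
        rw [map_mul (frobeniusEquiv F 2) r, RingEquiv.apply_symm_apply, RingEquiv.apply_symm_apply,
          frobeniusEquiv_apply, frobenius_def]
        ring }
  have hc := aux_nondeg c hs hn
  refine ⟨(c.toDual hc).symm f, fun x => ?_⟩
  rw [hs x ((c.toDual hc).symm f), LinearMap.BilinForm.apply_toDual_symm_apply]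
  exact (frobeniusEquiv_symm_pow_p F 2 _).symm

theorem aux_orth_orth {M : Type*} [AddCommGroup M] [Module F M] [FiniteDimensional F M]
    (c : LinearMap.BilinForm F M) (hs : ∀ x y, c x y = c y x)
    (hn : ∀ x, (∀ y, c x y = 0) → x = 0) (U : Submodule F M) :
    c.orthogonal (c.orthogonal U) = U :=
  LinearMap.BilinForm.orthogonal_orthogonal (aux_nondeg c hs hn)
    (LinearMap.BilinForm.isSymm_def.2 hs).isRefl U

/-- Radical elements are multiples of `e`. -/
theorem aux_rad {M : Type*} [AddCommGroup M] [Module F M] [FiniteDimensional F M]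
    (c : LinearMap.BilinForm F M) (hs : ∀ x y, c x y = c y x)
    (hn : ∀ x, (∀ y, c x y = 0) → x = 0) (e : M) (he : ∀ x, c x x = (c x e) ^ 2)
    (w : M) (hw : w ∈ altRadical c) : ∃ a : F, a • e = w := by
  rw [← Submodule.mem_span_singleton, ← aux_orth_orth c hs hn (Submodule.span F {e})]
  intro u hu
  have h1 : c u e = 0 := by
    rw [hs]; exact hu e (Submodule.mem_span_singleton_self e)
  change c u w = 0
  rw [hs]
  exact hw.2 u (by rw [he, h1]; ring)

theorem aux_rad_sub {M : Type*} [AddCommGroup M] [Module F M] [FiniteDimensional F M]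
    (c : LinearMap.BilinForm F M) (hs : ∀ x y, c x y = c y x)
    (hn : ∀ x, (∀ y, c x y = 0) → x = 0) (e : M) (he : ∀ x, c x x = (c x e) ^ 2)
    (U : Submodule F M) : altRadical c ⊆ (U : Set M) ↔ (c e e = 0 → e ∈ U) := by
  constructor
  · intro h h0
    refine h ⟨h0, fun u hu => ?_⟩
    rw [hs]
    rw [he] at hu
    exact pow_eq_zero_iff (two_ne_zero) |>.1 hu
  · intro h w hw
    obtain ⟨a, rfl⟩ := aux_rad c hs hn e he w hw
    by_cases ha : a = 0
    · simp [ha]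
    · refine U.smul_mem _ (h ?_)
      have := hw.1
      simpa [ha] using this

/-- A maximal isotropic subspace of an even-dimensional space is Lagrangian. -/
theorem aux_lagr {M : Type*} [AddCommGroup M] [Module F M] [FiniteDimensional F M]
    (c : LinearMap.BilinForm F M) (hs : ∀ x y, c x y = c y x)
    (hn : ∀ x, (∀ y, c x y = 0) → x = 0) (heven : Module.finrank F M % 2 = 0)
    (S : Submodule F M) (hS : ∀ x ∈ S, ∀ y ∈ S, c x y = 0)
    (hmax : ∀ T : Submodule F M, (∀ x ∈ T, ∀ y ∈ T, c x y = 0) → S ≤ T → T = S) :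
    c.orthogonal S = S := by
  obtain ⟨e, he⟩ := aux_exists_e c hs hn
  have hr : c.IsRefl := (LinearMap.BilinForm.isSymm_def.2 hs).isRefl
  have key : c.orthogonal (S ⊔ Submodule.span F {e}) = S := by
    apply le_antisymm
    · intro x hx
      have hxS : ∀ y ∈ S, c y x = 0 := fun y hy => hx y (Submodule.mem_sup_left hy)
      have hxe : c e x = 0 :=
        hx e (Submodule.mem_sup_right (Submodule.mem_span_singleton_self e))
      have hxx : c x x = 0 := by rw [he, hs, hxe]; ring
      have := hmax (S ⊔ Submodule.span F {x}) (by
        intro y hy z hz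
        obtain ⟨s, hs1, t, ht, rfl⟩ := Submodule.mem_sup.1 hy
        obtain ⟨s', hs1', t', ht', rfl⟩ := Submodule.mem_sup.1 hz
        obtain ⟨a, rfl⟩ := Submodule.mem_span_singleton.1 ht
        obtain ⟨a', rfl⟩ := Submodule.mem_span_singleton.1 ht'
        simp [hS s hs1 s' hs1', hxx, hxS s hs1, hs x s', hxS s' hs1']) le_sup_left
      rw [← this]
      exact Submodule.mem_sup_right (Submodule.mem_span_singleton_self x)
    · intro x hx y hy
      obtain ⟨s, hs1, t, ht, rfl⟩ := Submodule.mem_sup.1 hy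
      obtain ⟨a, rfl⟩ := Submodule.mem_span_singleton.1 ht
      have h1 := hS x hx x hx
      rw [he] at h1
      have h2 : c x e = 0 := pow_eq_zero_iff (two_ne_zero) |>.1 h1
      change c (s + a • e) x = 0
      simp [hS s hs1 x hx, hs e x, h2]
  have key2 : c.orthogonal S = S ⊔ Submodule.span F {e} := by
    conv_lhs => rw [← key]
    exact aux_orth_orth c hs hn _
  by_cases heS : e ∈ S
  · rw [key2]
    exact sup_eq_left.2 ((Submodule.span_singleton_le_iff_mem e S).2 heS)
  · exfalso
    have h1 := LinearMap.BilinForm.finrank_orthogonal (aux_nondeg c hs hn) S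
    rw [key2, Submodule.finrank_sup_span_singleton heS] at h1
    have h2 := Submodule.finrank_le S
    omega

theorem aux_orthComp {M : Type*} [AddCommGroup M] [Module F M]
    (c : LinearMap.BilinForm F M) (hs : ∀ x y, c x y = c y x) (U : Submodule F M) :
    orthComp c U = c.orthogonal U := by
  ext x
  constructor
  · intro h y hy
    change c y x = 0
    rw [hs]; exact h y hy
  · intro h y hy
    rw [hs]; exact h y hy

/-- The bundled form on the orthogonal sum. -/
def auxForm (b : W →ₗ[F] W →ₗ[F] F) (b' : W' →ₗ[F] W' →ₗ[F] F) :
    LinearMap.BilinForm F (W × W') :=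
  LinearMap.mk₂ F (orthSumForm b b')
    (by intros; simp [orthSumForm]; ring) (by intros; simp [orthSumForm]; ring)
    (by intros; simp [orthSumForm]; ring) (by intros; simp [orthSumForm]; ring)

theorem auxForm_apply (b : W →ₗ[F] W →ₗ[F] F) (b' : W' →ₗ[F] W' →ₗ[F] F) (x y : W × W') :
    auxForm b b' x y = b x.1 y.1 + b' x.2 y.2 := rfl


/-- **Structure theorem.**  Let `F` be a perfect field of characteristic 2, let `W` and `W′`
be finite-dimensional `F`-vector spaces with nondegenerate symmetric bilinear forms `b`, `b′`
of dimensions `n`, `n′` of the same parity, and let `S` be a maximal totally isotropic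
subspace of `V = W ⊥ W′`.  Set `U = S ∩ W` with `k = dim U` and `U′ = S ∩ W′` with
`k′ = dim U′`.  Then (a) `n − n′ = 2(k − k′)`; (b) `U` and `U′` have compatible isotropy
types; and (c) for any vector-space complement `𝒦` of `U` in `U^⊥` and any vector-space
complement `𝒦′` of `U′` in `U′^⊥`, there is a unique isometry `τ : 𝒦 → 𝒦′` such that
`S = U ⊕ S̃ ⊕ U′` where `S̃ = {w + τw : w ∈ 𝒦}`. -/
theorem maximal_totally_isotropic_structure
    (b : W →ₗ[F] W →ₗ[F] F) (b' : W' →ₗ[F] W' →ₗ[F] F)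
    (hsymm : ∀ x y, b x y = b y x) (hsymm' : ∀ x y, b' x y = b' y x)
    (hnd : ∀ x, (∀ y, b x y = 0) → x = 0) (hnd' : ∀ x, (∀ y, b' x y = 0) → x = 0)
    (hpar : Module.finrank F W % 2 = Module.finrank F W' % 2)
    (S : Submodule F (W × W'))
    (hS : IsMaxTotallyIsotropic b b' S)
    (U : Submodule F W) (hU : U = S.comap (LinearMap.inl F W W'))
    (U' : Submodule F W') (hU' : U' = S.comap (LinearMap.inr F W W')) :
    ((Module.finrank F W : ℤ) - Module.finrank F W' =
        2 * ((Module.finrank F U : ℤ) - Module.finrank F U')) ∧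
    (altRadical b ⊆ (U : Set W) ↔ altRadical b' ⊆ (U' : Set W')) ∧
    (∀ 𝒦 : Submodule F W, ∀ 𝒦' : Submodule F W',
      U ⊓ 𝒦 = ⊥ → U ⊔ 𝒦 = orthComp b U →
      U' ⊓ 𝒦' = ⊥ → U' ⊔ 𝒦' = orthComp b' U' →
      ∃! τ : 𝒦 ≃ₗ[F] 𝒦',
        (∀ x y : 𝒦, b' ((τ x : 𝒦') : W') ((τ y : 𝒦') : W') = b (x : W) (y : W)) ∧
        S = U.map (LinearMap.inl F W W') ⊔ U'.map (LinearMap.inr F W W') ⊔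
          LinearMap.range ((LinearMap.inl F W W').comp 𝒦.subtype +
            (LinearMap.inr F W W').comp (𝒦'.subtype.comp (τ : 𝒦 →ₗ[F] 𝒦')))) := by
  have hBs : ∀ x y, auxForm b b' x y = auxForm b b' y x := fun x y => by
    rw [auxForm_apply, auxForm_apply, hsymm, hsymm']
  have hBn : ∀ x, (∀ y, auxForm b b' x y = 0) → x = 0 := by
    intro x hx
    refine Prod.ext (hnd _ fun y => ?_) (hnd' _ fun y => ?_)
    · simpa [auxForm_apply] using hx (y, 0)
    · simpa [auxForm_apply] using hx (0, y)
  have hfr : Module.finrank F (W × W') = Module.finrank F W + Module.finrank F W' :=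
    Module.finrank_prod
  have hL : (auxForm b b').orthogonal S = S :=
    aux_lagr _ hBs hBn (by omega) S hS.1 hS.2
  have hiso : ∀ x ∈ S, ∀ y ∈ S, b x.1 y.1 + b' x.2 y.2 = 0 := hS.1
  have hlag : ∀ v : W × W', (∀ s ∈ S, b v.1 s.1 + b' v.2 s.2 = 0) → v ∈ S := by
    intro v hv
    rw [← hL]
    intro s hs
    change auxForm b b' s v = 0
    rw [hBs]
    exact hv s hs
  have mU : ∀ w, w ∈ U ↔ (w, (0 : W')) ∈ S := fun w => by rw [hU]; rfl
  have mU' : ∀ w, w ∈ U' ↔ ((0 : W), w) ∈ S := fun w => by rw [hU']; rfl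
  have hp : S.map (LinearMap.fst F W W') = orthComp b U := by
    rw [aux_orthComp b hsymm,
      ← aux_orth_orth b hsymm hnd (S.map (LinearMap.fst F W W'))]
    congr 1
    ext w
    rw [mU]
    constructor
    · intro h
      refine hlag _ fun s hs => ?_
      have : b s.1 w = 0 := h s.1 ⟨s, hs, rfl⟩
      simp [hsymm w, this]
    · rintro h _ ⟨s, hs, rfl⟩
      simpa using hiso s hs _ h
  have hp' : S.map (LinearMap.snd F W W') = orthComp b' U' := by
    rw [aux_orthComp b' hsymm',
      ← aux_orth_orth b' hsymm' hnd' (S.map (LinearMap.snd F W W'))]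
    congr 1
    ext w
    rw [mU']
    constructor
    · intro h
      refine hlag _ fun s hs => ?_
      have : b' s.2 w = 0 := h s.2 ⟨s, hs, rfl⟩
      simp [hsymm' w, this]
    · rintro h _ ⟨s, hs, rfl⟩
      simpa using hiso s hs _ h
  refine ⟨?_, ?_, ?_⟩
  · have h1 := LinearMap.BilinForm.finrank_orthogonal (aux_nondeg _ hBs hBn) S
    rw [hL] at h1
    have h2 := LinearMap.BilinForm.finrank_orthogonal (aux_nondeg b hsymm hnd) U
    rw [← aux_orthComp b hsymm, ← hp] at h2
    have h3 := LinearMap.finrank_range_add_finrank_ker ((LinearMap.fst F W W').domRestrict S)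
    have h4 : LinearMap.range ((LinearMap.fst F W W').domRestrict S)
        = S.map (LinearMap.fst F W W') := by
      rw [LinearMap.range_domRestrict]
    have h5 : Module.finrank F (LinearMap.ker ((LinearMap.fst F W W').domRestrict S))
        = Module.finrank F U' := by
      refine LinearEquiv.finrank_eq (LinearEquiv.ofBijective
        (((LinearMap.snd F W W').comp (S.subtype.comp (Submodule.subtype _))).codRestrict U' ?_)
        ⟨?_, ?_⟩)
      · rintro ⟨⟨⟨x, y⟩, hs⟩, hx⟩
        have : x = 0 := hx
        subst this
        exact (mU' y).2 hs
      · rintro ⟨⟨⟨x, y⟩, hs⟩, hx⟩ ⟨⟨⟨x2, y2⟩, hs2⟩, hx2⟩ h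
        have e1 : x = 0 := hx
        have e2 : x2 = 0 := hx2
        have e3 : y = y2 := congrArg Subtype.val h
        subst e1 e2 e3
        rfl
      · rintro ⟨y, hy⟩
        exact ⟨⟨⟨(0, y), (mU' y).1 hy⟩, rfl⟩, rfl⟩
    rw [h4, h5] at h3
    have h6 := Submodule.finrank_le U
    have h7 := Submodule.finrank_le S
    omega
  · obtain ⟨e, he⟩ := aux_exists_e b hsymm hnd
    obtain ⟨e', he'⟩ := aux_exists_e b' hsymm' hnd'
    rw [aux_rad_sub b hsymm hnd e he, aux_rad_sub b' hsymm' hnd' e' he', mU, mU']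
    have hee : (e, e') ∈ S := by
      refine hlag _ fun s hs => ?_
      have h1 := hiso s hs s hs
      rw [he, he', ← CharTwo.add_sq] at h1
      have h2 := pow_eq_zero_iff (two_ne_zero) |>.1 h1
      simpa [hsymm e, hsymm' e'] using h2
    have h0 : b e e = b' e' e' := CharTwo.add_eq_zero.1 (hiso _ hee _ hee)
    rw [h0]
    refine imp_congr_right fun _ => ⟨fun h => ?_, fun h => ?_⟩
    · simpa using S.sub_mem hee h
    · simpa using S.sub_mem hee h
  · intro K K' hK1 hK2 hK1' hK2'
    have hinjU : ∀ x ∈ K, (x, (0 : W')) ∈ S → x = 0 := fun x hx h => by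
      have : x ∈ U ⊓ K := ⟨(mU x).2 h, hx⟩
      rwa [hK1] at this
    have hinjU' : ∀ x ∈ K', ((0 : W), x) ∈ S → x = 0 := fun x hx h => by
      have : x ∈ U' ⊓ K' := ⟨(mU' x).2 h, hx⟩
      rwa [hK1'] at this
    -- every element of `S` decomposes
    have hdec : ∀ w w', (w, w') ∈ S → ∃ u ∈ U, ∃ k ∈ K, ∃ u' ∈ U', ∃ k' ∈ K',
        u + k = w ∧ u' + k' = w' ∧ (k, k') ∈ S := by
      intro w w' h
      have h1 : w ∈ U ⊔ K := by rw [hK2, ← hp]; exact ⟨_, h, rfl⟩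
      have h2 : w' ∈ U' ⊔ K' := by rw [hK2', ← hp']; exact ⟨_, h, rfl⟩
      obtain ⟨u, hu, k, hk, rfl⟩ := Submodule.mem_sup.1 h1
      obtain ⟨u', hu', k', hk', rfl⟩ := Submodule.mem_sup.1 h2
      refine ⟨u, hu, k, hk, u', hu', k', hk', rfl, rfl, ?_⟩
      simpa using S.sub_mem (S.sub_mem h ((mU u).1 hu)) ((mU' u').1 hu')
    have hex : ∀ k ∈ K, ∃ k' ∈ K', (k, k') ∈ S := by
      intro k hk
      have : k ∈ S.map (LinearMap.fst F W W') := by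
        rw [hp, ← hK2]; exact Submodule.mem_sup_right hk
      obtain ⟨⟨w, w'⟩, hs, rfl⟩ := this
      have h2 : w' ∈ U' ⊔ K' := by rw [hK2', ← hp']; exact ⟨_, hs, rfl⟩
      obtain ⟨u', hu', k', hk', rfl⟩ := Submodule.mem_sup.1 h2
      exact ⟨k', hk', by simpa using S.sub_mem hs ((mU' u').1 hu')⟩
    have hex' : ∀ k' ∈ K', ∃ k ∈ K, (k, k') ∈ S := by
      intro k hk
      have : k ∈ S.map (LinearMap.snd F W W') := by
        rw [hp', ← hK2']; exact Submodule.mem_sup_right hk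
      obtain ⟨⟨w, w'⟩, hs, rfl⟩ := this
      have h2 : w ∈ U ⊔ K := by rw [hK2, ← hp]; exact ⟨_, hs, rfl⟩
      obtain ⟨u', hu', k', hk', rfl⟩ := Submodule.mem_sup.1 h2
      exact ⟨k', hk', by simpa using S.sub_mem hs ((mU u').1 hu')⟩
    let G : Submodule F (W × W') := S ⊓ K.prod K'
    let f : G →ₗ[F] K := ((LinearMap.fst F W W').comp G.subtype).codRestrict K
      (fun g => g.2.2.1)
    let f' : G →ₗ[F] K' := ((LinearMap.snd F W W').comp G.subtype).codRestrict K'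
      (fun g => g.2.2.2)
    have hf : Function.Bijective f := by
      constructor
      · rw [← LinearMap.ker_eq_bot, LinearMap.ker_eq_bot']
        rintro ⟨⟨x, y⟩, hS1, hx, hy⟩ h
        have e1 : x = 0 := congrArg Subtype.val h
        subst e1
        have e2 : y = 0 := hinjU' y hy hS1
        subst e2
        rfl
      · rintro ⟨k, hk⟩
        obtain ⟨k', hk', h⟩ := hex k hk
        exact ⟨⟨(k, k'), h, hk, hk'⟩, rfl⟩
    have hf' : Function.Bijective f' := by
      constructor
      · rw [← LinearMap.ker_eq_bot, LinearMap.ker_eq_bot']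
        rintro ⟨⟨x, y⟩, hS1, hx, hy⟩ h
        have e1 : y = 0 := congrArg Subtype.val h
        subst e1
        have e2 : x = 0 := hinjU x hx hS1
        subst e2
        rfl
      · rintro ⟨k, hk⟩
        obtain ⟨k', hk', h⟩ := hex' k hk
        exact ⟨⟨(k', k), h, hk', hk⟩, rfl⟩
    let τ : K ≃ₗ[F] K' := (LinearEquiv.ofBijective f hf).symm.trans (LinearEquiv.ofBijective f' hf')
    have hτ : ∀ x : K, ((x : W), (τ x : W')) ∈ S := by
      intro x
      obtain ⟨g, rfl⟩ := (LinearEquiv.ofBijective f hf).surjective x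
      have : τ ((LinearEquiv.ofBijective f hf) g) = f' g := by simp [τ]
      rw [this]
      exact g.2.1
    refine ⟨τ, ⟨fun x y => ?_, ?_⟩, ?_⟩
    · exact (CharTwo.add_eq_zero.1 (hiso _ (hτ x) _ (hτ y))).symm
    · apply le_antisymm
      · rintro ⟨w, w'⟩ hw
        obtain ⟨u, hu, k, hk, u', hu', k', hk', rfl, rfl, h⟩ := hdec w w' hw
        have e1 : k' = τ ⟨k, hk⟩ := by
          have := S.sub_mem h (hτ ⟨k, hk⟩)
          have h2 : ((0 : W), k' - τ ⟨k, hk⟩) ∈ S := by simpa using this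
          exact sub_eq_zero.1 (hinjU' _ (K'.sub_mem hk' (τ ⟨k, hk⟩).2) h2)
        have e2 : (u + k, u' + k') = ((u, (0 : W')) + ((0 : W), u')) + (k, k') := by simp
        rw [e2]
        refine Submodule.add_mem_sup (Submodule.add_mem_sup ⟨u, hu, rfl⟩ ⟨u', hu', rfl⟩) ?_
        exact ⟨⟨k, hk⟩, by simp [e1]⟩
      · refine sup_le (sup_le ?_ ?_) ?_
        · rintro _ ⟨u, hu, rfl⟩; exact (mU u).1 hu
        · rintro _ ⟨u, hu, rfl⟩; exact (mU' u).1 hu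
        · rintro _ ⟨x, rfl⟩
          simpa using hτ x
    · rintro σ ⟨-, hσ⟩
      ext x
      have h1 : ((x : W), (σ x : W')) ∈ S := by
        rw [hσ]
        exact Submodule.mem_sup_right ⟨x, by simp⟩
      have h2 : ((0 : W), ((σ x : W') - τ x)) ∈ S := by
        simpa using S.sub_mem h1 (hτ x)
      exact sub_eq_zero.1 (hinjU' _ (K'.sub_mem (σ x).2 (τ x).2) h2)
end
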